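/- Let E ⊆ ℝ² be an analytic set with Hausdorff dimension s = dim_H(E) strictly greater than 1. Then there exists a set B ⊆ ℝ² with dim_H(B) ≤ 1 such that for every x ∈ ℝ² \ B, the pinned distance set Δ_x E = {‖x − y‖ : y ∈ E} satisfies dim_H(Δ_x E) ≥ s/4 + 1/2. -/

import Mathlib

/-!
The exceptional set is `{x | dim Δ_x E < dim E / 4 + 1 / 2}`. It is a countable union, over rational
`σ < s / 4 + 1 / 2` with `1 < s < dim E`, of sets on which `dim Δ_x E < σ`; it has to be shown that
none of these has dimension above `1`.

**The discretised theorem** (`finite_main`). Let `ν`, `μ` be finite measures at mutual distance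
bounded below, Frostman down to scale `δ = 2⁻ᵏ` with exponents `t > 1` and `s > 1`. Then pins in the
support of `ν` cannot see a non-negligible part of `μ` at only `N ≈ δ^{-σ}` distances. Constants and
factors `δ^{-o(1)}` are collected in a single parameter `L`.

* Since both exponents exceed `1`, for most pairs `(x, y)` every tube of width `w ≥ δ` about the
  line `xy` has `ν`- and `μ`-mass at most `L w` (`heavy_tubes`). This is a quantitative radial
  projection theorem. It is proved by Cauchy-Schwarz for the positive definite kernels
  `a / (a² + τ²)` along each direction, integrated over directions: the directional average of the
  kernel is `π / √(a² + |v|²)`, and one-dimensional energies appear.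
* The set of pins that see `y` and `z` at distances equal up to `δ` lies near a bisector, hence near
  a line, since `|y - z|` is small. Thin tubes then bound its `ν`-mass (`Cfg.eqd_small`,
  `Cfg.eqd_large`), and summing over `z` bounds the number of collisions of distances inside cells
  of `μ`-mass about `m = δ^{s/2}` (`Cfg.colS_mass`). By Cauchy-Schwarz a typical such cell is seen at
  about `δ^{-1/2}` different distances, so a pin has at most `N δ^{1/2}` coarse distances, at the scale
  of the cells (`Cfg.card_index`).
* Two pins in general position (`Cfg.exists_pair`) locate a cell by two coarse distances, so
  `(N δ^{1/2})² m ≳ 1` (`Cfg.main`), that is, `σ ≥ s / 4 + 1 / 2` up to `o(1)`.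

**From dimension to measures.** All sets are measured by the dyadic content, which is countably
subadditive and continuous along increasing sequences of arbitrary sets (`content_iUnion_mono`).
Continuity yields compact subsets of positive content of the analytic set `E`
(`exists_compact_content`), and a finite Frostman lemma (`frostman`) holds for arbitrary sets; thus no
measurability of the exceptional set is needed. In `no_exceptional` a scale is selected for each pin by
pigeonholing a dyadic cover of its distance set against a geometric series, and then a single scale by
subadditivity of the content, where `finite_main` applies.
-/

/-! ### Weighted finite planar sets and grid cells -/

namespace PinnedDistance
open Finset

/-- The Euclidean plane. -/
abbrev Pt := EuclideanSpace ℝ (Fin 2)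

/-- The cross product (signed area) of two vectors; `|crs (p - x) (y - x)| / ‖y - x‖` is the distance
from `p` to the line `xy`. -/
def crs (u v : Pt) : ℝ := u 0 * v 1 - u 1 * v 0

/-- The dot product, in coordinates. -/
def dt (u v : Pt) : ℝ := u 0 * v 0 + u 1 * v 1

lemma norm_sq_pt (u : Pt) : ‖u‖ ^ 2 = u 0 ^ 2 + u 1 ^ 2 := by
  rw [EuclideanSpace.norm_sq_eq]; simp [Fin.sum_univ_two]

lemma lagrange (u v : Pt) : crs u v ^ 2 + dt u v ^ 2 = ‖u‖ ^ 2 * ‖v‖ ^ 2 := by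
  rw [norm_sq_pt, norm_sq_pt, crs, dt]; ring

lemma abs_crs_le (u v : Pt) : |crs u v| ≤ ‖u‖ * ‖v‖ := by
  refine abs_le_of_sq_le_sq ?_ (by positivity)
  nlinarith [lagrange u v, sq_nonneg (dt u v)]

lemma abs_dt_le (u v : Pt) : |dt u v| ≤ ‖u‖ * ‖v‖ := by
  refine abs_le_of_sq_le_sq ?_ (by positivity)
  nlinarith [lagrange u v, sq_nonneg (crs u v)]

lemma abs_coord_le (u : Pt) (i : Fin 2) : |u i| ≤ ‖u‖ := by
  have := EuclideanSpace.norm_sq_eq u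
  refine abs_le_of_sq_le_sq ?_ (by positivity)
  rw [norm_sq_pt]
  fin_cases i
  · simp; positivity
  · simp; positivity

/-- Weight of the set of points of `X` satisfying `p`. -/
noncomputable def wt (X : Finset Pt) (ν : Pt → ℝ) (p : Pt → Prop) : ℝ :=
  open Classical in ∑ x ∈ X, if p x then ν x else 0

section wt
variable {X : Finset Pt} {ν : Pt → ℝ}

lemma wt_eq_filter (p : Pt → Prop) [DecidablePred p] : wt X ν p = ∑ x ∈ X.filter p, ν x := by
  classical
  rw [wt, Finset.sum_filter]
  exact Finset.sum_congr rfl fun x _ => by congr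

lemma wt_ite (p : Pt → Prop) [DecidablePred p] :
    wt X ν p = ∑ x ∈ X, if p x then ν x else 0 := by
  rw [wt_eq_filter, Finset.sum_filter]

lemma wt_nonneg (hν : ∀ x, 0 ≤ ν x) (p : Pt → Prop) : 0 ≤ wt X ν p := by
  classical
  exact Finset.sum_nonneg fun x _ => by split_ifs <;> simp [hν]

lemma wt_mono (hν : ∀ x, 0 ≤ ν x) {p r : Pt → Prop} (h : ∀ x ∈ X, p x → r x) :
    wt X ν p ≤ wt X ν r := by
  classical
  refine Finset.sum_le_sum fun x hx => ?_
  by_cases hp : p x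
  · simp [hp, h x hx hp]
  · simp only [hp, if_false]; split_ifs <;> simp [hν]

lemma wt_le_total (hν : ∀ x, 0 ≤ ν x) (p : Pt → Prop) : wt X ν p ≤ ∑ x ∈ X, ν x := by
  classical
  refine Finset.sum_le_sum fun x hx => ?_
  split_ifs <;> simp [hν]

lemma wt_eq_zero {p : Pt → Prop} (h : ∀ x ∈ X, ¬ p x) : wt X ν p = 0 := by
  classical
  exact Finset.sum_eq_zero fun x hx => by simp [h x hx]

lemma wt_le_sum {ι : Type*} (hν : ∀ x, 0 ≤ ν x) (I : Finset ι) (r : ι → Pt → Prop)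
    {p : Pt → Prop} (h : ∀ x ∈ X, p x → ∃ i ∈ I, r i x) :
    wt X ν p ≤ ∑ i ∈ I, wt X ν (r i) := by
  classical
  simp only [wt]
  rw [Finset.sum_comm]
  refine Finset.sum_le_sum fun x hx => ?_
  by_cases hp : p x
  · obtain ⟨i, hi, hr⟩ := h x hx hp
    simp only [hp, if_true]
    calc ν x = if r i x then ν x else 0 := by simp [hr]
      _ ≤ _ := Finset.single_le_sum (f := fun i => if r i x then ν x else 0)
        (fun i _ => by split_ifs <;> simp [hν]) hi
  · simp only [hp, if_false]
    exact Finset.sum_nonneg fun i _ => by split_ifs <;> simp [hν]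

lemma wt_le_card_mul {ι : Type*} (hν : ∀ x, 0 ≤ ν x) (I : Finset ι) (r : ι → Pt → Prop)
    {p : Pt → Prop} (h : ∀ x ∈ X, p x → ∃ i ∈ I, r i x) {b : ℝ}
    (hb : ∀ i ∈ I, wt X ν (r i) ≤ b) :
    wt X ν p ≤ I.card * b := by
  refine (wt_le_sum hν I r h).trans ?_
  simpa using Finset.sum_le_card_nsmul I _ b hb

lemma wt_or (hν : ∀ x, 0 ≤ ν x) {p r t : Pt → Prop} (h : ∀ x ∈ X, p x → r x ∨ t x) :
    wt X ν p ≤ wt X ν r + wt X ν t := by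
  have := wt_le_sum (X := X) (ν := ν) hν (p := p) Finset.univ
    (fun b : Bool => if b then r else t) (fun x hx hp => by
      rcases h x hx hp with h | h
      · exact ⟨true, by simp, by simpa using h⟩
      · exact ⟨false, by simp, by simpa using h⟩)
  simpa using this

end wt

/-- Index of the half-open grid square of side `η` containing `p`. -/
noncomputable def cell (η : ℝ) (p : Pt) : ℤ × ℤ := (⌊p 0 / η⌋, ⌊p 1 / η⌋)

lemma abs_sub_lt_of_floor_eq {η a b : ℝ} (hη : 0 < η) (h : ⌊a / η⌋ = ⌊b / η⌋) : |a - b| < η := by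
  have := Int.abs_sub_lt_one_of_floor_eq_floor h
  rw [← sub_div, abs_div, abs_of_pos hη, div_lt_one hη] at this
  exact this

lemma norm_le_of_coord {u : Pt} {a : ℝ} (h0 : |u 0| ≤ a) (h1 : |u 1| ≤ a) : ‖u‖ ≤ 2 * a := by
  have ha : 0 ≤ a := (abs_nonneg _).trans h0
  refine (abs_le_of_sq_le_sq' ?_ (by positivity)).2
  rw [norm_sq_pt]
  nlinarith [sq_abs (u 0), sq_abs (u 1), abs_nonneg (u 0), abs_nonneg (u 1)]

lemma norm_sub_le_of_cell_eq {η : ℝ} (hη : 0 < η) {p r : Pt} (h : cell η p = cell η r) :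
    ‖p - r‖ ≤ 2 * η := by
  simp only [cell, Prod.mk.injEq] at h
  exact norm_le_of_coord (by simpa using (abs_sub_lt_of_floor_eq hη h.1).le)
    (by simpa using (abs_sub_lt_of_floor_eq hη h.2).le)

lemma floor_mem_of_abs_sub_le {a b R : ℝ} (n : ℕ) (hR : R ≤ n) (h : |a - b| ≤ R) :
    ⌊a⌋ ∈ Finset.Icc (⌊b⌋ - (n + 1)) (⌊b⌋ + (n + 1)) := by
  rw [abs_le] at h
  rw [Finset.mem_Icc]
  constructor
  · rw [Int.le_floor]; push_cast; linarith [Int.floor_le b]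
  · rw [← Int.lt_add_one_iff, Int.floor_lt]; push_cast; linarith [Int.lt_floor_add_one b]

/-- The grid indices within sup-distance `n` of `a`. -/
noncomputable def nbr (n : ℕ) (a : ℤ × ℤ) : Finset (ℤ × ℤ) :=
  Finset.Icc (a.1 - n) (a.1 + n) ×ˢ Finset.Icc (a.2 - n) (a.2 + n)

lemma card_nbr (n : ℕ) (a : ℤ × ℤ) : (nbr n a).card = (2 * n + 1) ^ 2 := by
  simp only [nbr, Finset.card_product, Int.card_Icc]
  rw [sq]; congr 1 <;> omega

lemma cell_mem_nbr {η : ℝ} (hη : 0 < η) {p r : Pt} (n : ℕ) (h : ‖p - r‖ ≤ n * η) :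
    cell η p ∈ nbr (n + 1) (cell η r) := by
  have key : ∀ i : Fin 2, |p i / η - r i / η| ≤ n := fun i => by
    have := (abs_coord_le (p - r) i).trans h
    rw [← sub_div, abs_div, abs_of_pos hη, div_le_iff₀ hη]
    simpa using this
  simp only [nbr, cell, Finset.mem_product]
  refine ⟨?_, ?_⟩
  · simpa using floor_mem_of_abs_sub_le n le_rfl (key 0)
  · simpa using floor_mem_of_abs_sub_le n le_rfl (key 1)

/-- A set of grid cells met by points within distance `n * η` of a fixed point is small. -/
lemma card_cells_le {η : ℝ} (hη : 0 < η) (S : Finset Pt) (n : ℕ)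
    (r : Pt) (h : ∀ p ∈ S, ‖p - r‖ ≤ n * η) :
    (S.image (cell η)).card ≤ (2 * n + 3) ^ 2 := by
  have : S.image (cell η) ⊆ nbr (n + 1) (cell η r) := by
    intro c hc
    obtain ⟨p, hp, rfl⟩ := Finset.mem_image.1 hc
    exact cell_mem_nbr hη n (h p hp)
  refine (Finset.card_le_card this).trans ?_
  rw [card_nbr]
  apply le_of_eq; ring

/-- If the ball of radius `4 η` about every point of `S` has weight at least `β` inside `T`,
then the number of `η`-cells met by `S` is at most `121 * wt T / β`. -/
lemma card_cells_mul_le {X : Finset Pt} {ν : Pt → ℝ} (hν : ∀ x, 0 ≤ ν x) {η β : ℝ} (hη : 0 < η)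
    (S : Finset Pt) (T : Pt → Prop)
    (hβ : ∀ x ∈ S, β ≤ wt X ν (fun p => ‖p - x‖ ≤ 4 * η))
    (hT : ∀ x ∈ S, ∀ p ∈ X, ‖p - x‖ ≤ 4 * η → T p) :
    ((S.image (cell η)).card : ℝ) * β ≤ 121 * wt X ν T := by
  classical
  have hrep : ∀ c ∈ S.image (cell η), ∃ x ∈ S, cell η x = c := fun c hc => by
    simpa using hc
  choose! g hgS hgc using hrep
  set C := S.image (cell η) with hC
  calc (C.card : ℝ) * β = ∑ c ∈ C, β := by simp
    _ ≤ ∑ c ∈ C, wt X ν (fun p => ‖p - g c‖ ≤ 4 * η) :=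
        Finset.sum_le_sum fun c hc => hβ _ (hgS c hc)
    _ = ∑ p ∈ X, ∑ c ∈ C, (if ‖p - g c‖ ≤ 4 * η then ν p else 0) := by
        simp only [wt]; rw [Finset.sum_comm]
    _ ≤ ∑ p ∈ X, 121 * (if T p then ν p else 0) := by
        refine Finset.sum_le_sum fun p hp => ?_
        rw [← Finset.sum_filter, Finset.sum_const, nsmul_eq_mul]
        by_cases hTp : T p
        · simp only [hTp, if_true]
          refine mul_le_mul_of_nonneg_right ?_ (hν p)
          have hsub : C.filter (fun c => ‖p - g c‖ ≤ 4 * η) ⊆ nbr 5 (cell η p) := by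
            intro c hc
            rw [Finset.mem_filter] at hc
            have h4 : ‖g c - p‖ ≤ (4 : ℕ) * η := by
              rw [norm_sub_rev]; simpa using hc.2
            have := cell_mem_nbr hη 4 h4
            rwa [hgc c hc.1] at this
          have := Finset.card_le_card hsub
          rw [card_nbr] at this
          norm_num at this
          exact_mod_cast this
        · have : C.filter (fun c => ‖p - g c‖ ≤ 4 * η) = ∅ := by
            apply Finset.filter_false_of_mem
            intro c hc h
            exact hTp (hT _ (hgS c hc) p hp h)
          simp [this, hTp]
    _ = 121 * wt X ν T := by
        rw [wt, Finset.mul_sum]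
        

end PinnedDistance

/-! ### Dyadic scales, energies and the combinatorial configuration -/

namespace PinnedDistance
open Finset

/-- The dyadic scale `2⁻ʲ`. -/
noncomputable def sc (j : ℕ) : ℝ := (1 / 2 : ℝ) ^ j

lemma sc_pos (j : ℕ) : 0 < sc j := by unfold sc; positivity
lemma sc_zero : sc 0 = 1 := by simp [sc]
lemma sc_succ (j : ℕ) : sc j = 2 * sc (j + 1) := by unfold sc; rw [pow_succ]; ring
lemma sc_anti {i j : ℕ} (h : i ≤ j) : sc j ≤ sc i :=
  pow_le_pow_of_le_one (by norm_num) (by norm_num) h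
lemma sc_le_one (j : ℕ) : sc j ≤ 1 := by rw [← sc_zero]; exact sc_anti (Nat.zero_le j)

/-- A distance below `2 · 2⁻ⁱ` is at most `2⁻ᵏ` or lies in one of the dyadic shells `i, …, k`. -/
lemma dyadic_shell {ζ : ℝ} (i : ℕ) (h : ζ ≤ 2 * sc i) (k : ℕ) (hk : i ≤ k) :
    ζ ≤ sc k ∨ ∃ j, i ≤ j ∧ j ≤ k ∧ sc j ≤ ζ ∧ ζ ≤ 2 * sc j := by
  induction k, hk using Nat.le_induction with
  | base =>
    rcases le_total ζ (sc i) with h1 | h1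
    · exact Or.inl h1
    · exact Or.inr ⟨i, le_rfl, le_rfl, h1, h⟩
  | succ k hk ih =>
    rcases ih with h1 | ⟨j, h1, h2, h3⟩
    · rcases le_total ζ (sc (k + 1)) with h2 | h2
      · exact Or.inl h2
      · exact Or.inr ⟨k + 1, by omega, le_rfl, h2, by rwa [← sc_succ]⟩
    · exact Or.inr ⟨j, h1, by omega, h3⟩

lemma card_cells_ball {η : ℝ} (hη : 0 < η) (S : Finset Pt) {R : ℝ} (hR : 0 ≤ R)
    (r : Pt) (h : ∀ p ∈ S, ‖p - r‖ ≤ R) :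
    ((S.image (cell η)).card : ℝ) ≤ (2 * (R / η) + 5) ^ 2 := by
  have h1 := card_cells_le hη S ⌈R / η⌉₊ r (fun p hp => (h p hp).trans (by
    rw [← div_le_iff₀ hη]; exact Nat.le_ceil _))
  have h2 : (⌈R / η⌉₊ : ℝ) ≤ R / η + 1 := (Nat.ceil_lt_add_one (by positivity)).le
  calc ((S.image (cell η)).card : ℝ) ≤ ((2 * ⌈R / η⌉₊ + 3 : ℕ) : ℝ) ^ 2 := by exact_mod_cast h1
    _ ≤ _ := by
      push_cast
      have : (2 * (⌈R / η⌉₊ : ℝ) + 3) ≤ 2 * (R / η) + 5 := by linarith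
      gcongr

section
variable {X : Finset Pt} {ν : Pt → ℝ}

lemma wt_le_cells (hν : ∀ x, 0 ≤ ν x) (S : Finset Pt) (η b : ℝ) {p : Pt → Prop}
    (hS : ∀ x ∈ X, p x → x ∈ S)
    (hb : ∀ x ∈ S, wt X ν (fun x' => p x' ∧ cell η x' = cell η x) ≤ b) :
    wt X ν p ≤ (S.image (cell η)).card * b := by
  refine wt_le_card_mul hν _ (fun c x' => p x' ∧ cell η x' = c) (fun x hx hp =>
    ⟨cell η x, mem_image_of_mem _ (hS x hx hp), hp, rfl⟩) (fun c hc => ?_)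
  obtain ⟨x, hx, rfl⟩ := mem_image.1 hc
  exact hb x hx

/-- Points whose `2⁻ʲ`-ball has weight below `β · 4⁻ʲ` for some `j ≤ k`. -/
def low (X : Finset Pt) (ν : Pt → ℝ) (k : ℕ) (β : ℝ) (x : Pt) : Prop :=
  ∃ j ≤ k, wt X ν (fun p => ‖p - x‖ ≤ sc j) < β * sc j ^ 2

/-- A bounded planar set meets at most about `L² 4ʲ` cells of side comparable to `2⁻ʲ`, so the points
with light balls have small total weight. -/
lemma low_mass (hν : ∀ x, 0 ≤ ν x) {L β : ℝ} (hL : 100 ≤ L) {k : ℕ} (hk : (k : ℝ) + 1 ≤ L)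
    (hX : ∀ x ∈ X, ‖x‖ ≤ L) (hβ : 0 ≤ β) : wt X ν (low X ν k β) ≤ L ^ 4 * β := by
  classical
  have h1 : ∀ j ∈ range (k + 1),
      wt X ν (fun x => wt X ν (fun p => ‖p - x‖ ≤ sc j) < β * sc j ^ 2) ≤ 25 * L ^ 2 * β := by
    intro j _
    have hs := sc_pos j
    have hs1 := sc_le_one j
    set S := X.filter (fun x => wt X ν (fun p => ‖p - x‖ ≤ sc j) < β * sc j ^ 2) with hS
    have h2 := wt_le_cells (X := X) (ν := ν) hν S (sc j / 2) (β * sc j ^ 2)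
      (p := fun x => wt X ν (fun p => ‖p - x‖ ≤ sc j) < β * sc j ^ 2)
      (fun x hx hp => mem_filter.2 ⟨hx, hp⟩) (fun x hx => by
        refine le_trans (wt_mono hν fun p _ hp => ?_) (mem_filter.1 hx).2.le
        have := norm_sub_le_of_cell_eq (half_pos hs) hp.2
        linarith)
    have h3 := card_cells_ball (half_pos hs) S (by linarith : 0 ≤ L) 0 (fun p hp => by
      simpa using hX p (mem_filter.1 hp).1)
    refine h2.trans ((mul_le_mul_of_nonneg_right h3 (by positivity)).trans ?_)
    have h4 : (2 * (L / (sc j / 2)) + 5) * sc j ≤ 5 * L := by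
      have : L / (sc j / 2) * sc j = 2 * L := by field_simp
      nlinarith
    calc (2 * (L / (sc j / 2)) + 5) ^ 2 * (β * sc j ^ 2)
        = ((2 * (L / (sc j / 2)) + 5) * sc j) ^ 2 * β := by ring
      _ ≤ (5 * L) ^ 2 * β := by gcongr
      _ = _ := by ring
  refine (wt_le_card_mul hν (range (k + 1)) _ (fun x _ hx => ?_) h1).trans ?_
  · obtain ⟨j, hj, h⟩ := hx
    exact ⟨j, by simp; omega, h⟩
  · simp only [card_range]
    push_cast
    calc ((k : ℝ) + 1) * (25 * L ^ 2 * β) ≤ L * (L * L ^ 2 * β) := by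
          gcongr
          linarith
      _ = _ := by ring

/-- The one-dimensional energy of a measure with linear ball growth is at most logarithmic; the
kernel is truncated at `w` and scaled to be at most one. -/
lemma energy (hν : ∀ x, 0 ≤ ν x) {L w : ℝ} (hL : 100 ≤ L) {k : ℕ} (hk : (k : ℝ) + 1 ≤ L)
    (tX : ∑ x ∈ X, ν x ≤ 1) (hw : sc k ≤ w)
    (bX : ∀ p τ, sc k ≤ τ → wt X ν (fun x => ‖x - p‖ ≤ τ) ≤ L * τ) (p : Pt) :
    ∑ x ∈ X, ν x * (w / max w ‖x - p‖) ≤ 3 * L ^ 2 * w := by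
  classical
  have hw0 : 0 < w := (sc_pos k).trans_le hw
  have key : ∀ x ∈ X, ν x * (w / max w ‖x - p‖) ≤
      ν x * w + ∑ j ∈ range (k + 1), 2 * w / sc j * (if ‖x - p‖ ≤ sc j then ν x else 0) := by
    intro x _
    have hn : ∀ j ∈ range (k + 1), 0 ≤ 2 * w / sc j * (if ‖x - p‖ ≤ sc j then ν x else 0) := by
      intro j _
      have := sc_pos j
      have := hν x
      split_ifs <;> positivity
    have hone : ∀ j ≤ k, ‖x - p‖ ≤ sc j → (w / max w ‖x - p‖ ≤ 2 * w / sc j) →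
        ν x * (w / max w ‖x - p‖) ≤
      ν x * w + ∑ j ∈ range (k + 1), 2 * w / sc j * (if ‖x - p‖ ≤ sc j then ν x else 0) := by
      intro j hj h1 h2
      have := single_le_sum hn (by simp; omega : j ∈ range (k + 1))
      rw [if_pos h1] at this
      nlinarith [hν x, mul_nonneg (hν x) hw0.le]
    rcases le_or_gt ‖x - p‖ 1 with h1 | h1
    · rcases dyadic_shell (ζ := ‖x - p‖) 0 (by rw [sc_zero]; linarith) k (Nat.zero_le k) with h2 | ⟨j, -, hj, h3, h4⟩
      · refine hone k le_rfl h2 ?_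
        rw [max_eq_left (h2.trans hw), div_self hw0.ne', le_div_iff₀ (sc_pos k)]
        linarith
      · rcases Nat.eq_zero_or_pos j with h0 | h0
        · subst h0
          refine hone 0 hj (by rwa [sc_zero]) ?_
          rw [sc_zero] at h3 ⊢
          have : 1 ≤ max w ‖x - p‖ := h3.trans (le_max_right _ _)
          rw [div_le_iff₀ (by linarith)]
          nlinarith
        · obtain ⟨i, rfl⟩ : ∃ i, j = i + 1 := ⟨j - 1, by omega⟩
          have h5 := sc_succ i
          refine hone i (by omega) (by linarith) ?_
          have : sc (i + 1) ≤ max w ‖x - p‖ := h3.trans (le_max_right _ _)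
          rw [h5]
          have hp := sc_pos (i + 1)
          rw [div_le_div_iff₀ (by linarith) (by linarith)]
          nlinarith
    · have : 1 ≤ max w ‖x - p‖ := h1.le.trans (le_max_right _ _)
      have h2 : w / max w ‖x - p‖ ≤ w := div_le_self hw0.le this
      have := sum_nonneg hn
      nlinarith [hν x, mul_le_mul_of_nonneg_left h2 (hν x)]
  refine (sum_le_sum key).trans ?_
  rw [sum_add_distrib, sum_comm, ← sum_mul]
  have h2 : ∀ j ∈ range (k + 1),
      ∑ x ∈ X, 2 * w / sc j * (if ‖x - p‖ ≤ sc j then ν x else 0) ≤ 2 * w * L := by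
    intro j hj
    rw [← mul_sum]
    have := bX p (sc j) (sc_anti (by simp at hj; omega))
    have hs := sc_pos j
    calc 2 * w / sc j * ∑ x ∈ X, (if ‖x - p‖ ≤ sc j then ν x else 0)
        ≤ 2 * w / sc j * (L * sc j) := by
          rw [← wt_ite (X := X) (ν := ν) (fun x => ‖x - p‖ ≤ sc j)]
          exact mul_le_mul_of_nonneg_left this (by positivity)
      _ = _ := by field_simp
  have h3 := sum_le_card_nsmul _ _ _ h2
  simp only [card_range, nsmul_eq_mul] at h3
  push_cast at h3
  have h4 : ((k : ℝ) + 1) * (2 * w * L) ≤ L * (2 * w * L) := by gcongr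
  have h5 : w ≤ L ^ 2 * w := by
    have : 1 ≤ L ^ 2 := by nlinarith
    nlinarith
  nlinarith
end

/-- The data of the finite combinatorial estimate: weighted finite sets `X`, `Y` with Frostman-type
ball conditions down to scale `δ = 2⁻ᵏ = q²`, and a relation `G` all of whose pairs `(x, y)` span
lines with thin tubes carrying little mass. -/
structure Cfg (X Y : Finset Pt) (ν μ : Pt → ℝ) (k : ℕ) (L q m : ℝ) (G : Pt → Pt → Prop) :
    Prop where
  hν : ∀ x, 0 ≤ ν x
  hμ : ∀ x, 0 ≤ μ x
  hX : ∀ x ∈ X, ‖x‖ ≤ L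
  hY : ∀ x ∈ Y, ‖x‖ ≤ L
  tX : ∑ x ∈ X, ν x ≤ 1
  tY : ∑ x ∈ Y, μ x ≤ 1
  hL : 100 ≤ L
  hk : (k : ℝ) + 1 ≤ L
  hq : 0 < q
  hq2 : q ^ 2 = sc k
  hm : 0 < m
  hmq : m ≤ q
  hLd : L ^ 8 * sc k ≤ 1
  bX : ∀ p τ, sc k ≤ τ → wt X ν (fun x => ‖x - p‖ ≤ τ) ≤ L * τ
  bY : ∀ p ρ, sc k ≤ ρ → ρ ≤ q → wt Y μ (fun y => ‖y - p‖ ≤ 2 * ρ) * (sc k / ρ) ≤ L * m * q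
  tbX : ∀ x ∈ X, ∀ y ∈ Y, G x y → ∀ w, sc k ≤ w →
    wt X ν (fun p => |crs (p - x) (y - x)| ≤ w) ≤ L * w
  tbY : ∀ x ∈ X, ∀ y ∈ Y, G x y → ∀ w, sc k ≤ w →
    wt Y μ (fun p => |crs (p - x) (y - x)| ≤ w) ≤ L * w

/-- The part of the `2·2⁻ʲ`-ball about `x` lying in the bush-shaped neighbourhood of the line `xy`
attached to the scale `2⁻ⁱ`. -/
def inR (L : ℝ) (k i j : ℕ) (x y x' : Pt) : Prop :=
  ‖x' - x‖ ≤ 2 * sc j ∧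
    |crs (x' - x) (y - x)| ≤ 12 * L ^ 2 * (sc k / sc i + ‖x' - x‖ * sc i)

/-- Pairs for which some `inR` region is too heavy although the ball containing it is light. -/
def badR (X : Finset Pt) (ν : Pt → ℝ) (L : ℝ) (k : ℕ) (x y : Pt) : Prop :=
  ∃ i ≤ k, ∃ j ≤ k, wt X ν (fun p => ‖p - x‖ ≤ 2 * sc j) ≤ 2 * L * (sc k / sc i ^ 2) ∧
    L ^ 13 * (sc k / sc i) < wt X ν (inR L k i j x y)

/-- Two vectors nearly parallel to `a` are nearly parallel to each other. -/
lemma crs_triple (a b c : Pt) :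
    |crs b c| * ‖a‖ ≤ |crs a b| * ‖c‖ + |crs c a| * ‖b‖ := by
  have : crs b c • a = -(crs a b • c + crs c a • b) := by
    ext i
    fin_cases i <;> simp [crs] <;> ring
  calc |crs b c| * ‖a‖ = ‖crs b c • a‖ := by rw [norm_smul, Real.norm_eq_abs]
    _ = ‖crs a b • c + crs c a • b‖ := by rw [this, norm_neg]
    _ ≤ ‖crs a b • c‖ + ‖crs c a • b‖ := norm_add_le _ _
    _ = _ := by simp [norm_smul]

lemma crs_swap (a b : Pt) : crs a b = - crs b a := by simp only [crs]; ring

end PinnedDistance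

/-! ### Typical pairs -/

namespace PinnedDistance
open Finset

/-- Markov's inequality for weights, restricted to the points satisfying `P`. -/
lemma wt_markov {Y : Finset Pt} {μ : Pt → ℝ} (hμ : ∀ x, 0 ≤ μ x) (P : Pt → Prop) [DecidablePred P]
    (f : Pt → ℝ) (hf : ∀ y, 0 ≤ f y) (T : ℝ) :
    wt Y μ (fun y => P y ∧ T < f y) * T ≤ ∑ y ∈ Y, if P y then μ y * f y else 0 := by
  classical
  rw [wt_ite, sum_mul]
  refine sum_le_sum fun y _ => ?_
  by_cases hP : P y <;> by_cases hT : T < f y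
  · simp only [hP, hT, and_self, if_true]
    exact mul_le_mul_of_nonneg_left hT.le (hμ y)
  · simp only [hP, hT, and_false, if_false, if_true]
    have := mul_nonneg (hμ y) (hf y)
    linarith
  · simp [hP]
  · simp [hP]

variable {X Y : Finset Pt} {ν μ : Pt → ℝ} {k : ℕ} {L q m : ℝ} {G : Pt → Pt → Prop}

/-- For fixed `x` and `x'`, the `y` whose region `inR` at `x` contains `x'` lie in a tube through `x`
in the direction of `x'`; its mass is bounded by the tube condition. -/
lemma Cfg.inR_dual (h : Cfg X Y ν μ k L q m G) {x x' : Pt} (hx : x ∈ X)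
    {i j : ℕ} (hi : i ≤ k) :
    wt Y μ (fun y => G x y ∧ inR L k i j x y x') ≤
      48 * L ^ 4 * ((sc k / sc i) / max (sc k / sc i) ‖x' - x‖ + sc i) := by
  classical
  have hL := h.hL
  have hsi := sc_pos i
  have hsk := sc_pos k
  set w := sc k / sc i with hw
  have hw0 : 0 < w := by positivity
  have hL4 : (1 : ℝ) ≤ L ^ 4 := one_le_pow₀ (by linarith)
  rcases le_or_gt ‖x' - x‖ w with hζ | hζ
  · rw [max_eq_left hζ, div_self hw0.ne']
    have := (wt_le_total (X := Y) h.hμ (fun y => G x y ∧ inR L k i j x y x')).trans h.tY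
    nlinarith
  · rw [max_eq_right hζ.le]
    by_cases hne : ∃ y1 ∈ Y, G x y1 ∧ inR L k i j x y1 x'
    · obtain ⟨y1, hy1, hG1, hR1⟩ := hne
      set ζ := ‖x' - x‖ with hζd
      have hζ0 : 0 < ζ := hw0.trans hζ
      have hω : sc k ≤ 48 * L ^ 3 * (w / ζ + sc i) := by
        have h1 : sc k ≤ sc i := sc_anti hi
        have h2 : 0 < w / ζ := by positivity
        have : (1 : ℝ) ≤ L ^ 3 := one_le_pow₀ (by linarith)
        nlinarith
      have := h.tbY x hx y1 hy1 hG1 _ hω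
      refine (wt_mono h.hμ fun y hy hyp => ?_).trans (this.trans (le_of_eq (by ring)))
      obtain ⟨-, -, hR⟩ := hyp
      have ht := crs_triple (x' - x) (y - x) (y1 - x)
      have hb : ‖y - x‖ ≤ 2 * L := by
        have := norm_sub_le y x
        have := h.hY y hy
        have := h.hX x hx
        linarith
      have hc : ‖y1 - x‖ ≤ 2 * L := by
        have := norm_sub_le y1 x
        have := h.hY y1 hy1
        have := h.hX x hx
        linarith
      have hR1' := hR1.2
      rw [crs_swap, abs_neg] at hR1'
      rw [← hζd] at hR hR1' ht
      have e : 48 * L ^ 3 * (w / ζ + sc i) = (2 * (12 * L ^ 2 * (w + ζ * sc i) * (2 * L))) / ζ := by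
        field_simp; ring
      rw [e, le_div_iff₀ hζ0]
      refine ht.trans ?_
      have hpos : 0 ≤ 12 * L ^ 2 * (w + ζ * sc i) := by positivity
      have := mul_le_mul hR hc (norm_nonneg _) hpos
      have := mul_le_mul hR1' hb (norm_nonneg _) hpos
      linarith
    · push Not at hne
      rw [wt_eq_zero (fun y hy hh => hne y hy hh.1 hh.2)]
      positivity

/-- Summing `Cfg.inR_dual` over `x'`: the first term is controlled by the energy of `ν`, the second by
the mass bound on the ball that contains the region. -/
lemma Cfg.inR_sum [∀ x y, Decidable (G x y)] (h : Cfg X Y ν μ k L q m G) {x : Pt} (hx : x ∈ X)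
    {i j : ℕ} (hi : i ≤ k)
    (hb : wt X ν (fun p => ‖p - x‖ ≤ 2 * sc j) ≤ 2 * L * (sc k / sc i ^ 2)) :
    ∑ y ∈ Y, (if G x y then μ y * wt X ν (inR L k i j x y) else 0) ≤ L ^ 8 * (sc k / sc i) := by
  classical
  have hL := h.hL
  have hsi := sc_pos i
  have hsk := sc_pos k
  have hw1 : sc k ≤ sc k / sc i := by
    rw [le_div_iff₀ hsi]; nlinarith [sc_le_one i]
  have hw0 : 0 < sc k / sc i := by positivity
  have e1 : ∑ y ∈ Y, (if G x y then μ y * wt X ν (inR L k i j x y) else 0) =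
      ∑ x' ∈ X, ν x' * wt Y μ (fun y => G x y ∧ inR L k i j x y x') := by
    have : ∀ y ∈ Y, (if G x y then μ y * wt X ν (inR L k i j x y) else 0) =
        ∑ x' ∈ X, ν x' * (if G x y ∧ inR L k i j x y x' then μ y else 0) := by
      intro y _
      by_cases hG : G x y
      · simp only [hG, if_true, true_and]
        rw [wt_ite, mul_sum]
        refine sum_congr rfl fun x' _ => ?_
        split_ifs <;> ring
      · simp [hG]
    rw [sum_congr rfl this, sum_comm]
    refine sum_congr rfl fun x' _ => ?_
    rw [wt_ite, mul_sum]
  rw [e1]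
  have e2 : ∀ x' ∈ X, ν x' * wt Y μ (fun y => G x y ∧ inR L k i j x y x') ≤
      48 * L ^ 4 * (ν x' * ((sc k / sc i) / max (sc k / sc i) ‖x' - x‖)) +
      48 * L ^ 4 * sc i * (if ‖x' - x‖ ≤ 2 * sc j then ν x' else 0) := by
    intro x' _
    have hn := h.hν x'
    by_cases hball : ‖x' - x‖ ≤ 2 * sc j
    · rw [if_pos hball]
      have := mul_le_mul_of_nonneg_left (h.inR_dual hx (x' := x') (j := j) hi) hn
      refine this.trans (le_of_eq (by ring))
    · rw [if_neg hball, wt_eq_zero (fun y _ hh => hball hh.2.1)]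
      have : 0 < max (sc k / sc i) ‖x' - x‖ := hw0.trans_le (le_max_left _ _)
      simp only [mul_zero, add_zero]
      positivity
  refine (sum_le_sum e2).trans ?_
  rw [sum_add_distrib, ← mul_sum, ← mul_sum, ← wt_ite (fun x' => ‖x' - x‖ ≤ 2 * sc j)]
  have h3 := energy h.hν hL h.hk h.tX hw1 h.bX x
  have h4 : 48 * L ^ 4 * sc i * wt X ν (fun p => ‖p - x‖ ≤ 2 * sc j) ≤
      48 * L ^ 4 * (2 * L * (sc k / sc i)) := by
    calc _ ≤ 48 * L ^ 4 * sc i * (2 * L * (sc k / sc i ^ 2)) := by gcongr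
      _ = _ := by field_simp
  have h5 := mul_le_mul_of_nonneg_left h3 (by positivity : 0 ≤ 48 * L ^ 4)
  have h6 : 48 * L ^ 4 * (3 * L ^ 2 * (sc k / sc i)) + 48 * L ^ 4 * (2 * L * (sc k / sc i)) ≤
      L ^ 8 * (sc k / sc i) := by
    have : 48 * (3 * L ^ 2) + 48 * (2 * L) ≤ L ^ 4 := by
      have h1 : 10000 ≤ L ^ 2 := by nlinarith
      have h2 : L ≤ L ^ 2 := by nlinarith
      have h3 : L ^ 4 = L ^ 2 * L ^ 2 := by ring
      nlinarith
    calc _ = (48 * (3 * L ^ 2) + 48 * (2 * L)) * (L ^ 4 * (sc k / sc i)) := by ring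
      _ ≤ L ^ 4 * (L ^ 4 * (sc k / sc i)) := by gcongr
      _ = _ := by ring
  linarith

/-- The exceptional pairs have small mass, by Markov's inequality for each pair of scales. -/
lemma Cfg.badR_mass (h : Cfg X Y ν μ k L q m G) {x : Pt} (hx : x ∈ X) :
    wt Y μ (fun y => G x y ∧ badR X ν L k x y) ≤ 1 / L ^ 3 := by
  classical
  have hL := h.hL
  have hL0 : 0 < L := by linarith
  have key : ∀ ij ∈ range (k + 1) ×ˢ range (k + 1), wt Y μ (fun y => G x y ∧
      (wt X ν (fun p => ‖p - x‖ ≤ 2 * sc ij.2) ≤ 2 * L * (sc k / sc ij.1 ^ 2) ∧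
    L ^ 13 * (sc k / sc ij.1) < wt X ν (inR L k ij.1 ij.2 x y))) ≤ 1 / L ^ 5 := by
    rintro ⟨i, j⟩ hij
    simp only [mem_product, mem_range] at hij
    dsimp only
    have hw0 : 0 < sc k / sc i := div_pos (sc_pos _) (sc_pos _)
    by_cases hb : wt X ν (fun p => ‖p - x‖ ≤ 2 * sc j) ≤ 2 * L * (sc k / sc i ^ 2)
    · simp only [hb, true_and]
      have h1 := h.inR_sum hx (i := i) (j := j) (by omega) hb
      have h2 := wt_markov (Y := Y) h.hμ (G x) (fun y => wt X ν (inR L k i j x y))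
        (fun y => wt_nonneg h.hν _) (L ^ 13 * (sc k / sc i))
      have h3 := h2.trans h1
      rw [le_div_iff₀ (by positivity)]
      have h4 : 0 < L ^ 8 * (sc k / sc i) := by positivity
      refine le_of_mul_le_mul_right ?_ h4
      calc _ = _ := by ring
        _ ≤ _ := h3
        _ = _ := by ring
    · rw [wt_eq_zero (fun y _ hh => hb hh.2.1)]
      positivity
  refine (wt_le_card_mul h.hμ (range (k + 1) ×ˢ range (k + 1)) _ (fun y _ hy => ?_) key).trans ?_
  · obtain ⟨hG, i, hi, j, hj, hh⟩ := hy
    exact ⟨(i, j), by simp; omega, hG, hh⟩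
  · simp only [card_product, card_range]
    push_cast
    have := h.hk
    calc ((k : ℝ) + 1) * (k + 1) * (1 / L ^ 5) ≤ L * L * (1 / L ^ 5) := by gcongr
      _ = _ := by field_simp

/-- The relation `G` with atypical points and pairs removed. -/
def good (X Y : Finset Pt) (ν μ : Pt → ℝ) (k : ℕ) (L : ℝ) (G : Pt → Pt → Prop) (x y : Pt) : Prop :=
  G x y ∧ ¬ low X ν k (1 / L ^ 7) x ∧ ¬ low Y μ k (1 / L ^ 7) y ∧ ¬ badR X ν L k x y

lemma Cfg.good_mass (h : Cfg X Y ν μ k L q m G)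
    (hG : 1 / L ≤ ∑ x ∈ X, ν x * wt Y μ (G x)) :
    1 / (2 * L) ≤ ∑ x ∈ X, ν x * wt Y μ (good X Y ν μ k L G x) := by
  classical
  have hL := h.hL
  have hL0 : 0 < L := by linarith
  have hlX := low_mass h.hν hL h.hk h.hX (β := 1 / L ^ 7) (by positivity)
  have hlY := low_mass h.hμ hL h.hk h.hY (β := 1 / L ^ 7) (by positivity)
  have e3 : L ^ 4 * (1 / L ^ 7) = 1 / L ^ 3 := by field_simp
  rw [e3] at hlX hlY
  have h1 : ∀ x ∈ X, ν x * wt Y μ (G x) ≤ ν x * wt Y μ (good X Y ν μ k L G x) +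
      ν x * (2 / L ^ 3) + (if low X ν k (1 / L ^ 7) x then ν x else 0) := by
    intro x hx
    have hn := h.hν x
    by_cases hlow : low X ν k (1 / L ^ 7) x
    · rw [if_pos hlow]
      have h2 := (wt_le_total (X := Y) h.hμ (G x)).trans h.tY
      have h3 := wt_nonneg (X := Y) h.hμ (good X Y ν μ k L G x)
      have : 0 ≤ ν x * (2 / L ^ 3) := by positivity
      nlinarith [mul_nonneg hn h3]
    · rw [if_neg hlow, add_zero, ← mul_add]
      refine mul_le_mul_of_nonneg_left ?_ hn
      have h4 := h.badR_mass hx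
      have h5 := wt_or (X := Y) h.hμ (p := G x)
        (r := good X Y ν μ k L G x)
        (t := fun y => low Y μ k (1 / L ^ 7) y ∨ (G x y ∧ badR X ν L k x y)) (fun y _ hy => by
          by_cases h1 : low Y μ k (1 / L ^ 7) y
          · exact Or.inr (Or.inl h1)
          · by_cases h2 : badR X ν L k x y
            · exact Or.inr (Or.inr ⟨hy, h2⟩)
            · exact Or.inl ⟨hy, hlow, h1, h2⟩)
      have h6 := wt_or (X := Y) h.hμ
        (p := fun y => low Y μ k (1 / L ^ 7) y ∨ (G x y ∧ badR X ν L k x y)) (fun y _ hy => hy)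
      have : 2 / L ^ 3 = 1 / L ^ 3 + 1 / L ^ 3 := by ring
      linarith
  have h2 := sum_le_sum h1
  rw [sum_add_distrib, sum_add_distrib, ← sum_mul, ← wt_ite (low X ν k (1 / L ^ 7))] at h2
  have h3 : (∑ x ∈ X, ν x) * (2 / L ^ 3) ≤ 2 / L ^ 3 := by
    have := h.tX
    have : 0 < 2 / L ^ 3 := by positivity
    nlinarith
  have h4 : 3 / L ^ 3 ≤ 1 / (2 * L) := by
    rw [div_le_div_iff₀ (by positivity) (by positivity)]
    nlinarith [mul_self_nonneg L]
  have h5 : 1 / L = 1 / (2 * L) + 1 / (2 * L) := by field_simp; norm_num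
  have h6 : 3 / L ^ 3 = 2 / L ^ 3 + 1 / L ^ 3 := by ring
  linarith

end PinnedDistance

/-! ### Points almost equidistant from two given points -/

namespace PinnedDistance
open Finset

variable {X Y : Finset Pt} {ν μ : Pt → ℝ} {k : ℕ} {L q m : ℝ} {G : Pt → Pt → Prop}

lemma crs_via_dt (a b v : Pt) :
    |crs a b| * ‖v‖ ≤ |dt a v| * ‖b‖ + |dt b v| * ‖a‖ := by
  rcases eq_or_ne v 0 with rfl | hv
  · simp [dt]
  have hv0 : 0 < ‖v‖ := norm_pos_iff.2 hv
  have e : crs a b * ‖v‖ ^ 2 = dt a v * crs v b - dt b v * crs v a := by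
    rw [norm_sq_pt]; simp only [crs, dt]; ring
  have h1 : |crs a b| * ‖v‖ ^ 2 ≤ |dt a v| * (‖v‖ * ‖b‖) + |dt b v| * (‖v‖ * ‖a‖) := by
    calc |crs a b| * ‖v‖ ^ 2 = |crs a b * ‖v‖ ^ 2| := by
          rw [abs_mul, abs_of_nonneg (by positivity : 0 ≤ ‖v‖ ^ 2)]
      _ ≤ |dt a v * crs v b| + |dt b v * crs v a| := by rw [e]; exact abs_sub _ _
      _ ≤ _ := by
        rw [abs_mul, abs_mul]
        gcongr <;> exact abs_crs_le _ _
  refine le_of_mul_le_mul_right ?_ hv0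
  nlinarith

/-- A point almost equidistant from `y` and `z` lies near their perpendicular bisector. -/
lemma dt_of_dist {x y z : Pt} {L δ : ℝ} (hx : ‖x‖ ≤ L) (hy : ‖y‖ ≤ L) (hz : ‖z‖ ≤ L)
    (hd : |‖x - y‖ - ‖x - z‖| ≤ δ) :
    |2 * dt (x - y) (z - y) - ‖z - y‖ ^ 2| ≤ 4 * L * δ := by
  have e : 2 * dt (x - y) (z - y) - ‖z - y‖ ^ 2 =
      (‖x - y‖ - ‖x - z‖) * (‖x - y‖ + ‖x - z‖) := by
    have : (‖x - y‖ - ‖x - z‖) * (‖x - y‖ + ‖x - z‖) = ‖x - y‖ ^ 2 - ‖x - z‖ ^ 2 := by ring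
    rw [this, norm_sq_pt, norm_sq_pt, norm_sq_pt]
    simp only [dt, PiLp.sub_apply]; ring
  rw [e, abs_mul, abs_of_nonneg (by positivity : 0 ≤ ‖x - y‖ + ‖x - z‖)]
  have h1 := norm_sub_le x y
  have h2 := norm_sub_le x z
  have h3 : ‖x - y‖ + ‖x - z‖ ≤ 4 * L := by linarith
  calc _ ≤ δ * (4 * L) := mul_le_mul hd h3 (by positivity) ((abs_nonneg _).trans hd)
    _ = _ := by ring

/-- Two points almost equidistant from `y` and `z` are nearly aligned with `y`. -/
lemma crs_of_dist {x x' y z : Pt} {L δ ρ : ℝ} (hL : 0 ≤ L) (hδ : 0 ≤ δ) (hρ : 0 < ρ)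
    (hx : ‖x‖ ≤ L) (hx' : ‖x'‖ ≤ L) (hy : ‖y‖ ≤ L) (hz : ‖z‖ ≤ L)
    (hd : |‖x - y‖ - ‖x - z‖| ≤ δ) (hd' : |‖x' - y‖ - ‖x' - z‖| ≤ δ)
    (h1 : ρ ≤ ‖y - z‖) (h2 : ‖y - z‖ ≤ 2 * ρ) :
    |crs (x' - x) (y - x)| ≤ 8 * L ^ 2 * (δ / ρ) + ‖x' - x‖ * (ρ + 2 * L * (δ / ρ)) := by
  rw [norm_sub_rev] at h1 h2
  have ha := dt_of_dist hx hy hz hd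
  have ha' := dt_of_dist hx' hy hz hd'
  set v := z - y with hv
  have hv0 : 0 < ‖v‖ := hρ.trans_le h1
  have e1 : dt (x' - x) v = (2 * dt (x' - y) v - ‖v‖ ^ 2) / 2 - (2 * dt (x - y) v - ‖v‖ ^ 2) / 2 := by
    simp only [dt, PiLp.sub_apply]; ring
  have e2 : dt (y - x) v = - dt (x - y) v := by
    simp only [dt, PiLp.sub_apply]; ring
  have b1 : |dt (x' - x) v| ≤ 4 * L * δ := by
    rw [e1, abs_le]; rw [abs_le] at ha ha'
    constructor <;> linarith
  have b2 : |dt (y - x) v| ≤ ‖v‖ ^ 2 / 2 + 2 * L * δ := by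
    have : 0 ≤ ‖v‖ ^ 2 := by positivity
    rw [e2, abs_neg, abs_le]; rw [abs_le] at ha
    constructor <;> linarith
  have b3 : ‖y - x‖ ≤ 2 * L := by
    have := norm_sub_le y x; linarith
  have key := crs_via_dt (x' - x) (y - x) v
  have key2 : |crs (x' - x) (y - x)| * ‖v‖ ≤
      4 * L * δ * (2 * L) + (‖v‖ ^ 2 / 2 + 2 * L * δ) * ‖x' - x‖ := by
    refine key.trans ?_
    gcongr
  have : |crs (x' - x) (y - x)| ≤
      8 * L ^ 2 * (δ / ‖v‖) + ‖x' - x‖ * (‖v‖ / 2 + 2 * L * (δ / ‖v‖)) := by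
    refine le_of_mul_le_mul_right (key2.trans (le_of_eq ?_)) hv0
    field_simp
    ring
  refine this.trans ?_
  have h3 : δ / ‖v‖ ≤ δ / ρ := by gcongr
  have h4 : ‖v‖ / 2 ≤ ρ := by linarith
  gcongr

/-- Points of `X` that see `y` and `z` (with `y` a good partner) at almost equal distances. -/
def eqd (X Y : Finset Pt) (ν μ : Pt → ℝ) (k : ℕ) (L : ℝ) (G : Pt → Pt → Prop) (y z x : Pt) : Prop :=
  good X Y ν μ k L G x y ∧ |‖x - y‖ - ‖x - z‖| ≤ sc k

lemma Cfg.eqd_crs (h : Cfg X Y ν μ k L q m G) {y z : Pt} (hy : y ∈ Y) (hz : z ∈ Y) {i : ℕ}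
    (h1 : sc i ≤ ‖y - z‖) (h2 : ‖y - z‖ ≤ 2 * sc i) {x x' : Pt} (hx : x ∈ X) (hx' : x' ∈ X)
    (he : eqd X Y ν μ k L G y z x) (he' : eqd X Y ν μ k L G y z x') :
    |crs (x' - x) (y - x)| ≤ 8 * L ^ 2 * (sc k / sc i) +
      ‖x' - x‖ * (sc i + 2 * L * (sc k / sc i)) :=
  crs_of_dist (by linarith [h.hL]) (sc_pos k).le (sc_pos i) (h.hX _ hx) (h.hX _ hx') (h.hY _ hy)
    (h.hY _ hz) he.2 he'.2 h1 h2

lemma Cfg.q_le_one (h : Cfg X Y ν μ k L q m G) : q ≤ 1 := by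
  have := h.hq2
  have := sc_le_one k
  have := h.hq
  nlinarith

/-- The mass bound for `eqd` sets at separation below `q`: by `Cfg.eqd_crs` such a set lies in a
single tube of width about `2⁻ᵏ / 2⁻ⁱ`, which dominates `2⁻ⁱ`. -/
lemma Cfg.eqd_small (h : Cfg X Y ν μ k L q m G) {y z : Pt} (hy : y ∈ Y) (hz : z ∈ Y) {i : ℕ}
    (hiq : sc i ≤ q)
    (h1 : sc i ≤ ‖y - z‖) (h2 : ‖y - z‖ ≤ 2 * sc i) :
    wt X ν (eqd X Y ν μ k L G y z) ≤ 16 * L ^ 3 * (sc k / sc i) := by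
  have hL := h.hL
  have hsi := sc_pos i
  have hsk := sc_pos k
  have hw0 : 0 < sc k / sc i := by positivity
  have hwi : sc i ≤ sc k / sc i := by
    rw [le_div_iff₀ hsi, ← h.hq2]; nlinarith
  by_cases hne : ∃ x1 ∈ X, eqd X Y ν μ k L G y z x1
  · obtain ⟨x1, hx1, he1⟩ := hne
    have hw1 : sc k ≤ 16 * L ^ 2 * (sc k / sc i) := by
      have : sc k ≤ sc k / sc i := by rw [le_div_iff₀ hsi]; nlinarith [sc_le_one i]
      have h3 : (1 : ℝ) ≤ 16 * L ^ 2 := by nlinarith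
      nlinarith
    refine (wt_mono h.hν fun x hx he => ?_).trans
      ((h.tbX x1 hx1 y hy he1.1.1 _ hw1).trans (le_of_eq (by ring)))
    refine (h.eqd_crs hy hz h1 h2 hx1 hx he1 he).trans ?_
    have hn : ‖x - x1‖ ≤ 2 * L := by
      have := norm_sub_le x x1
      linarith [h.hX x hx, h.hX x1 hx1]
    have : ‖x - x1‖ * (sc i + 2 * L * (sc k / sc i)) ≤
        2 * L * ((sc k / sc i) + 2 * L * (sc k / sc i)) := by gcongr
    have h3 : 2 * L * ((sc k / sc i) + 2 * L * (sc k / sc i)) ≤ 8 * L ^ 2 * (sc k / sc i) := by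
      calc _ = (2 * L + 4 * L ^ 2) * (sc k / sc i) := by ring
        _ ≤ _ := by gcongr; nlinarith
    linarith
  · push Not at hne
    rw [wt_eq_zero hne]; positivity

set_option maxHeartbeats 1000000 in
/-- The mass bound for `eqd` sets at separation above `q`. The set lies only in a tube of width about
`2⁻ⁱ`. Each of its points `x` is given the largest radius at which the ball about it has mass at
most about `κ = 2⁻ᵏ / 4⁻ⁱ`; as `x` is typical, the part of the set in such a ball has mass at most
about `2⁻ᵏ / 2⁻ⁱ`, and the mass of the tube bounds the number of these balls. -/
lemma Cfg.eqd_large (h : Cfg X Y ν μ k L q m G) {y z : Pt} (hy : y ∈ Y) (hz : z ∈ Y) {i : ℕ}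
    (hik : i ≤ k) (hiq : q ≤ sc i) (hi4 : sc i ^ 2 ≤ 4 * L ^ 8 * q)
    (h1 : sc i ≤ ‖y - z‖) (h2 : ‖y - z‖ ≤ 2 * sc i) :
    wt X ν (eqd X Y ν μ k L G y z) ≤ L ^ 27 * q := by
  classical
  have hL := h.hL
  have hL0 : 0 < L := by linarith
  have hq := h.hq
  have hsi := sc_pos i
  have hsi1 := sc_le_one i
  have hsk := sc_pos k
  set w := sc k / sc i with hw
  set κ := sc k / sc i ^ 2 with hκ
  set σ := q / sc i with hσ
  have hσ0 : 0 < σ := by positivity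
  have hw0 : 0 < w := by positivity
  have hκ0 : 0 < κ := by positivity
  have hκσ : κ = σ ^ 2 := by rw [hκ, hσ, ← h.hq2]; field_simp
  have hwσ : w = σ * q := by rw [hw, hσ, ← h.hq2]; field_simp
  have hwi : w ≤ sc i := by
    rw [hw, div_le_iff₀ hsi, ← h.hq2]; nlinarith
  have hiσ : sc i ≤ 4 * L ^ 8 * σ := by
    rw [hσ, ← mul_div_assoc, le_div_iff₀ hsi]; linarith
  have hσ1 : σ ≤ 1 := by rw [hσ, div_le_one hsi]; exact hiq
  -- two equidistant points close to each other lie in each other's region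
  have hR : ∀ x ∈ X, ∀ x' ∈ X, eqd X Y ν μ k L G y z x → eqd X Y ν μ k L G y z x' →
      |crs (x' - x) (y - x)| ≤ 12 * L ^ 2 * (w + ‖x' - x‖ * sc i) := by
    intro x hx x' hx' he he'
    refine (h.eqd_crs hy hz h1 h2 hx hx' he he').trans ?_
    rw [← hw]
    have h3 : sc i + 2 * L * w ≤ 12 * L ^ 2 * sc i := by
      calc sc i + 2 * L * w ≤ sc i + 2 * L * sc i := by gcongr
        _ = (1 + 2 * L) * sc i := by ring
        _ ≤ _ := by gcongr; nlinarith
    have h4 := mul_le_mul_of_nonneg_left h3 (norm_nonneg (x' - x))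
    have h5 : 8 * L ^ 2 * w ≤ 12 * L ^ 2 * w := by gcongr; norm_num
    linarith
  have hex : ∀ x, ∃ j, j ≤ k ∧ wt X ν (fun p => ‖p - x‖ ≤ 2 * sc j) ≤ 2 * L * κ := by
    intro x
    refine ⟨k, le_rfl, (h.bX x (2 * sc k) (by linarith)).trans ?_⟩
    have : sc k ≤ κ := by
      rw [hκ, le_div_iff₀ (by positivity)]
      have : sc i ^ 2 ≤ 1 := by nlinarith
      nlinarith
    nlinarith
  let J : Pt → ℕ := fun x => Nat.find (hex x)
  have hJ : ∀ x, J x ≤ k ∧ wt X ν (fun p => ‖p - x‖ ≤ 2 * sc (J x)) ≤ 2 * L * κ :=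
    fun x => Nat.find_spec (hex x)
  have hJm : ∀ x j, j < J x → 2 * L * κ < wt X ν (fun p => ‖p - x‖ ≤ 2 * sc j) := by
    intro x j hj
    have := Nat.find_min (hex x) hj
    push Not at this
    exact this ((hj.le).trans (hJ x).1)
  have key : ∀ j ∈ range (k + 1), wt X ν (fun x => eqd X Y ν μ k L G y z x ∧ J x = j) ≤
      L ^ 26 * q := by
    intro j _
    set S := X.filter (fun x => eqd X Y ν μ k L G y z x ∧ J x = j) with hS
    have hsj := sc_pos j
    have hcell := wt_le_cells (X := X) (ν := ν) h.hν S (sc j) (L ^ 13 * w)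
      (p := fun x => eqd X Y ν μ k L G y z x ∧ J x = j)
      (fun x hx hp => mem_filter.2 ⟨hx, hp⟩) (fun x hx => by
        obtain ⟨hxX, hxe, hxj⟩ := mem_filter.1 hx
        have hb := hxe.1.2.2.2
        have hJx := hJ x
        rw [hxj] at hJx
        have hle : wt X ν (inR L k i j x y) ≤ L ^ 13 * w := by
          by_contra hcon
          push Not at hcon
          exact hb ⟨i, hik, j, hJx.1, hJx.2, hcon⟩
        refine (wt_mono h.hν fun x' hx' hp => ?_).trans hle
        exact ⟨norm_sub_le_of_cell_eq hsj hp.2, hR x hxX x' hx' hxe hp.1.1⟩)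
    have hcard : ((S.image (cell (sc j))).card : ℝ) * σ ≤ L ^ 13 := by
      rcases S.eq_empty_or_nonempty with hSe | ⟨x1, hx1⟩
      · simp [hSe]; positivity
      obtain ⟨hx1X, hx1e, hx1j⟩ := mem_filter.1 hx1
      rcases Nat.eq_zero_or_pos j with hj0 | hj0
      · have := card_cells_ball hsj S hL0.le 0 (fun p hp => by
          simpa using h.hX p (mem_filter.1 hp).1)
        rw [hj0, sc_zero] at this
        rw [hj0, sc_zero]
        have h3 : (2 * (L / 1) + 5) ^ 2 ≤ L ^ 13 := by
          have : (2 * (L / 1) + 5) ^ 2 ≤ L ^ 3 := by rw [div_one]; nlinarith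
          exact this.trans (pow_le_pow_right₀ (by linarith) (by norm_num))
        have h4 : (0:ℝ) ≤ ((S.image (cell 1)).card : ℝ) := by positivity
        nlinarith
      · obtain ⟨j', rfl⟩ : ∃ j', j = j' + 1 := ⟨j - 1, by omega⟩
        have hjs := sc_succ j'
        set η := sc (j' + 1) with hη
        have hη2 : η ^ 2 ≤ 2 * L ^ 8 * κ := by
          have hlow := hx1e.1.2.1
          have hjk : j' + 1 ≤ k := by rw [← hx1j]; exact (hJ x1).1
          have h3 : 1 / L ^ 7 * η ^ 2 ≤ wt X ν (fun p => ‖p - x1‖ ≤ η) := by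
            by_contra hcon
            push Not at hcon
            exact hlow ⟨j' + 1, hjk, hcon⟩
          have h4 := (hJ x1).2
          rw [hx1j, ← hη] at h4
          have h5 : wt X ν (fun p => ‖p - x1‖ ≤ η) ≤ wt X ν (fun p => ‖p - x1‖ ≤ 2 * η) :=
            wt_mono h.hν fun p _ hp => by linarith
          have h6 : 1 / L ^ 7 * η ^ 2 ≤ 2 * L * κ := by linarith
          rw [one_div_mul_eq_div, div_le_iff₀ (by positivity)] at h6
          linarith
        have hησ : η ≤ 2 * L ^ 4 * σ := by
          have : η ^ 2 ≤ (2 * L ^ 4 * σ) ^ 2 := by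
            rw [hκσ] at hη2
            have : 0 ≤ L ^ 8 * σ ^ 2 := by positivity
            nlinarith
          exact (abs_le_of_sq_le_sq' this (by positivity)).2
        set ω := 36 * L ^ 3 * sc i + 8 * L * η with hω
        have hωk : sc k ≤ ω := by
          have h3 : sc k ≤ sc i := sc_anti hik
          have h4 : (1 : ℝ) ≤ L ^ 3 := one_le_pow₀ (by linarith)
          have : 0 < L * η := by positivity
          nlinarith
        have hT := card_cells_mul_le (X := X) (ν := ν) h.hν hsj S (β := 2 * L * κ)
          (fun p => |crs (p - x1) (y - x1)| ≤ ω)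
          (fun x hx => by
            have := hJm x j' (by rw [(mem_filter.1 hx).2.2]; omega)
            rw [hjs] at this
            refine this.le.trans (le_of_eq ?_)
            congr 1; ext p; rw [← mul_assoc]; norm_num)
          (fun x hx p hp hpx => by
            obtain ⟨hxX, hxe, hxj⟩ := mem_filter.1 hx
            have h3 := hR x1 hx1X x hxX hx1e hxe
            have e : crs (p - x1) (y - x1) = crs (x - x1) (y - x1) + crs (p - x) (y - x1) := by
              simp only [crs, PiLp.sub_apply]; ring
            have h4 := abs_crs_le (p - x) (y - x1)
            have h5 : ‖y - x1‖ ≤ 2 * L := by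
              have := norm_sub_le y x1
              linarith [h.hX x1 hx1X, h.hY y hy]
            have h6 : ‖x - x1‖ ≤ 2 * L := by
              have := norm_sub_le x x1
              linarith [h.hX x1 hx1X, h.hX x hxX]
            have h7 : ‖p - x‖ * ‖y - x1‖ ≤ 4 * η * (2 * L) := by gcongr
            have h8 : 12 * L ^ 2 * (w + ‖x - x1‖ * sc i) ≤ 36 * L ^ 3 * sc i := by
              have : w + ‖x - x1‖ * sc i ≤ 3 * L * sc i := by
                calc w + ‖x - x1‖ * sc i ≤ L * sc i + 2 * L * sc i := by
                      gcongr
                      calc w ≤ 1 * sc i := by linarith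
                        _ ≤ L * sc i := by gcongr; linarith
                  _ = _ := by ring
              calc _ ≤ 12 * L ^ 2 * (3 * L * sc i) := by gcongr
                _ = _ := by ring
            rw [e]
            refine (abs_add_le _ _).trans ?_
            rw [hω]; linarith)
        have htube := h.tbX x1 hx1X y hy hx1e.1.1 ω hωk
        set n := ((S.image (cell η)).card : ℝ) with hn
        have hωσ : ω ≤ 160 * L ^ 11 * σ := by
          have e1 : 36 * L ^ 3 * sc i ≤ 36 * L ^ 3 * (4 * L ^ 8 * σ) := by gcongr
          have e2 : 8 * L * η ≤ 8 * L * (2 * L ^ 4 * σ) := by gcongr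
          have e3 : L ^ 5 * σ ≤ L ^ 11 * σ := by
            gcongr
            · linarith
            · norm_num
          have e4 : 36 * L ^ 3 * (4 * L ^ 8 * σ) = 144 * (L ^ 11 * σ) := by ring
          have e5 : 8 * L * (2 * L ^ 4 * σ) = 16 * (L ^ 5 * σ) := by ring
          rw [hω]; linarith
        have h3 : n * (2 * L * κ) ≤ 121 * (L * (160 * L ^ 11 * σ)) := by
          refine hT.trans ?_
          have : L * ω ≤ L * (160 * L ^ 11 * σ) := by gcongr
          linarith
        have h4 : n * σ * (2 * L * σ) ≤ 9680 * L ^ 11 * (2 * L * σ) := by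
          calc _ = n * (2 * L * κ) := by rw [hκσ]; ring
            _ ≤ _ := h3
            _ = _ := by ring
        have h5 := le_of_mul_le_mul_right h4 (by positivity)
        refine h5.trans ?_
        have : (9680 : ℝ) ≤ L ^ 2 := by nlinarith
        calc 9680 * L ^ 11 ≤ L ^ 2 * L ^ 11 := by gcongr
          _ = _ := by ring
    refine hcell.trans ?_
    rw [hwσ]
    calc _ = ((S.image (cell (sc j))).card : ℝ) * σ * (L ^ 13 * q) := by ring
      _ ≤ L ^ 13 * (L ^ 13 * q) := by gcongr
      _ = _ := by ring
  refine (wt_le_card_mul h.hν (range (k + 1)) _ (fun x _ hx => ⟨J x, ?_, hx, rfl⟩) key).trans ?_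
  · have := (hJ x).1
    simp; omega
  · rw [card_range]; push_cast
    have := h.hk
    calc ((k : ℝ) + 1) * (L ^ 26 * q) ≤ L * (L ^ 26 * q) := by gcongr
      _ = _ := by ring

end PinnedDistance

/-! ### Counting collisions of distances -/

namespace PinnedDistance
open Finset

variable {X Y : Finset Pt} {ν μ : Pt → ℝ} {k : ℕ} {L q m : ℝ} {G : Pt → Pt → Prop}

lemma Cfg.sc_le_q (h : Cfg X Y ν μ k L q m G) : sc k ≤ q := by
  have := h.q_le_one
  have := h.hq
  rw [← h.hq2]; nlinarith

/-- The total collision mass at `y` within distance `2 · 2⁻ⁱ`, summed over dyadic shells: the bounds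
`Cfg.eqd_small` and `Cfg.eqd_large` apply according to the size of the shell relative to `q`, and the
ball conditions on `μ` compensate for the growth of the first one. -/
lemma Cfg.eqd_sum (h : Cfg X Y ν μ k L q m G) {y : Pt} (hy : y ∈ Y) {i : ℕ} (hik : i ≤ k)
    (hl : wt Y μ (fun z => ‖z - y‖ ≤ 2 * sc i) ≤ L * m) (hρ : sc i ^ 2 ≤ L ^ 8 * m) :
    ∑ z ∈ Y, μ z * (if ‖z - y‖ ≤ 2 * sc i then wt X ν (eqd X Y ν μ k L G y z) else 0) ≤
      L ^ 30 * (m * q) := by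
  classical
  have hL := h.hL
  have hL0 : 0 < L := by linarith
  have hq := h.hq
  have hm := h.hm
  have hsk := sc_pos k
  let c : ℕ → ℝ := fun j => if q ≤ sc j then L ^ 27 * q else 16 * L ^ 3 * (sc k / sc j)
  have hc : ∀ j, 0 ≤ c j := fun j => by
    have := sc_pos j
    simp only [c]; split_ifs <;> positivity
  have key : ∀ z ∈ Y, μ z * (if ‖z - y‖ ≤ 2 * sc i then wt X ν (eqd X Y ν μ k L G y z) else 0) ≤
      (if ‖z - y‖ ≤ 2 * sc k then μ z else 0) + ∑ j ∈ (range (k + 1)).filter (i ≤ ·),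
        c j * (if ‖z - y‖ ≤ 2 * sc j then μ z else 0) := by
    intro z hz
    have hn : ∀ j ∈ (range (k + 1)).filter (i ≤ ·),
        0 ≤ c j * (if ‖z - y‖ ≤ 2 * sc j then μ z else 0) := fun j _ => by
      have := hc j
      have := h.hμ z
      split_ifs <;> positivity
    have hμz := h.hμ z
    have h0 : 0 ≤ (if ‖z - y‖ ≤ 2 * sc k then μ z else 0) := by split_ifs <;> simp [hμz]
    by_cases hb : ‖z - y‖ ≤ 2 * sc i
    · rw [if_pos hb]
      rcases dyadic_shell i hb k hik with h1 | ⟨j, hij, hjk, h1, h2⟩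
      · rw [if_pos (by linarith)]
        have h2 := (wt_le_total (X := X) h.hν (eqd X Y ν μ k L G y z)).trans h.tX
        have := sum_nonneg hn
        nlinarith
      · have hs := single_le_sum hn (by simp; omega : j ∈ (range (k + 1)).filter (i ≤ ·))
        rw [if_pos h2] at hs
        have hcj : wt X ν (eqd X Y ν μ k L G y z) ≤ c j := by
          rw [norm_sub_rev] at h1 h2
          simp only [c]
          split_ifs with hqj
          · refine h.eqd_large hy hz hjk hqj ?_ h1 h2
            have hji := sc_anti hij
            have hj0 := sc_pos j
            have : L ^ 8 * m ≤ L ^ 8 * q := by have := h.hmq; gcongr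
            have h5 : sc j ^ 2 ≤ sc i ^ 2 := by gcongr
            have h6 : 0 < L ^ 8 * q := by positivity
            linarith
          · exact h.eqd_small hy hz (by linarith) h1 h2
        have := mul_le_mul_of_nonneg_left hcj hμz
        linarith
    · rw [if_neg hb, mul_zero]
      exact add_nonneg h0 (sum_nonneg hn)
  refine (sum_le_sum key).trans ?_
  rw [sum_add_distrib, sum_comm, ← wt_ite (fun z => ‖z - y‖ ≤ 2 * sc k)]
  have h1 : wt Y μ (fun z => ‖z - y‖ ≤ 2 * sc k) ≤ L * m * q := by
    have := h.bY y (sc k) le_rfl h.sc_le_q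
    rwa [div_self hsk.ne', mul_one] at this
  have h2 : ∀ j ∈ (range (k + 1)).filter (i ≤ ·),
      ∑ z ∈ Y, c j * (if ‖z - y‖ ≤ 2 * sc j then μ z else 0) ≤ L ^ 28 * (m * q) := by
    intro j hj
    simp only [mem_filter, mem_range] at hj
    have hsj := sc_pos j
    rw [← mul_sum, ← wt_ite (fun z => ‖z - y‖ ≤ 2 * sc j)]
    simp only [c]
    split_ifs with hqj
    · have : wt Y μ (fun z => ‖z - y‖ ≤ 2 * sc j) ≤ L * m :=
        (wt_mono h.hμ fun z _ hz => by have := sc_anti hj.2; linarith).trans hl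
      calc _ ≤ L ^ 27 * q * (L * m) := by gcongr
        _ = _ := by ring
    · have := h.bY y (sc j) (sc_anti (by omega)) (by linarith)
      calc _ = 16 * L ^ 3 * (wt Y μ (fun z => ‖z - y‖ ≤ 2 * sc j) * (sc k / sc j)) := by ring
        _ ≤ 16 * L ^ 3 * (L * m * q) := by gcongr
        _ = 16 * L ^ 4 * (m * q) := by ring
        _ ≤ L ^ 28 * (m * q) := by
          gcongr
          calc 16 * L ^ 4 ≤ L * L ^ 4 := by gcongr; linarith
            _ = L ^ 5 := by ring
            _ ≤ L ^ 28 := pow_le_pow_right₀ (by linarith) (by norm_num)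
  have h3 := sum_le_card_nsmul _ _ _ h2
  rw [nsmul_eq_mul] at h3
  have h4 : (((range (k + 1)).filter (i ≤ ·)).card : ℝ) ≤ L := by
    refine le_trans ?_ h.hk
    have := card_filter_le (range (k + 1)) (i ≤ ·)
    rw [card_range] at this
    exact_mod_cast this
  have h5 : (((range (k + 1)).filter (i ≤ ·)).card : ℝ) * (L ^ 28 * (m * q)) ≤
      L * (L ^ 28 * (m * q)) := by gcongr
  have h6 : L * m * q ≤ L ^ 29 * (m * q) := by
    rw [mul_assoc]
    gcongr
    exact le_self_pow₀ (by linarith) (by norm_num)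
  have h7 : 2 * (L ^ 29 * (m * q)) ≤ L ^ 30 * (m * q) := by
    calc 2 * (L ^ 29 * (m * q)) ≤ L * (L ^ 29 * (m * q)) := by gcongr; linarith
      _ = _ := by ring
  have h8 : L * (L ^ 28 * (m * q)) = L ^ 29 * (m * q) := by ring
  linarith

open Classical in
/-- Weighted number of pairs in `P` inside a common grid cell with nearly equal `d`-values. -/
noncomputable def colS (Y : Finset Pt) (μ : Pt → ℝ) (P : Pt → Prop) (η : ℝ) (d : Pt → ℝ) (δ : ℝ) : ℝ :=
  ∑ y ∈ Y, ∑ z ∈ Y, if P y ∧ P z ∧ cell η y = cell η z ∧ |d y - d z| ≤ δ then μ y * μ z else 0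

open Classical in
/-- The contribution of the single cell `c` to `colS`. -/
noncomputable def col (Y : Finset Pt) (μ : Pt → ℝ) (P : Pt → Prop) (η : ℝ) (d : Pt → ℝ) (δ : ℝ)
    (c : ℤ × ℤ) : ℝ :=
  ∑ y ∈ Y, ∑ z ∈ Y, if P y ∧ P z ∧ cell η y = c ∧ cell η z = c ∧ |d y - d z| ≤ δ
    then μ y * μ z else 0

/-- Points lying in cells with many collisions carry little mass. -/
lemma col_markov (hμ : ∀ x, 0 ≤ μ x) (P : Pt → Prop) (η : ℝ) (d : Pt → ℝ) (δ T b : ℝ)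
    (hb : ∀ y ∈ Y, P y → wt Y μ (fun z => P z ∧ cell η z = cell η y) ≤ b) :
    wt Y μ (fun y => P y ∧ T < col Y μ P η d δ (cell η y)) * T ≤ b * colS Y μ P η d δ := by
  classical
  refine (wt_markov hμ P (fun y => col Y μ P η d δ (cell η y)) (fun y => ?_) T).trans ?_
  · refine sum_nonneg fun y _ => sum_nonneg fun z _ => ?_
    have := hμ y
    have := hμ z
    split_ifs <;> positivity
  · have e : ∀ u ∈ Y, (if P u then μ u * col Y μ P η d δ (cell η u) else 0) =
        ∑ y ∈ Y, ∑ z ∈ Y, (if P y ∧ P z ∧ cell η y = cell η z ∧ |d y - d z| ≤ δ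
          then μ y * μ z * (if P u ∧ cell η u = cell η y then μ u else 0) else 0) := by
      intro u _
      by_cases hu : P u
      · simp only [hu, if_true, true_and]
        rw [col, mul_sum]
        refine sum_congr rfl fun y _ => ?_
        rw [mul_sum]
        refine sum_congr rfl fun z _ => ?_
        by_cases h1 : cell η u = cell η y
        · by_cases h2 : P y ∧ P z ∧ cell η y = cell η z ∧ |d y - d z| ≤ δ
          · rw [if_pos h2, if_pos h1, if_pos ⟨h2.1, h2.2.1, h1.symm, by rw [h1, h2.2.2.1], h2.2.2.2⟩]
            ring
          · rw [if_neg h2, if_neg, mul_zero]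
            rintro ⟨a1, a2, a3, a4, a5⟩
            exact h2 ⟨a1, a2, a3.trans a4.symm, a5⟩
        · rw [if_neg h1, if_neg (fun hh => h1 hh.2.2.1.symm)]
          simp
      · simp [hu]
    rw [sum_congr rfl e, sum_comm, colS, mul_sum]
    refine sum_le_sum fun y hy => ?_
    rw [sum_comm, mul_sum]
    refine sum_le_sum fun z _ => ?_
    split_ifs with h1
    · rw [← mul_sum, ← wt_ite (fun u => P u ∧ cell η u = cell η y), mul_comm b]
      exact mul_le_mul_of_nonneg_left (hb y hy h1.1) (mul_nonneg (hμ y) (hμ z))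
    · simp

open Classical in
/-- Cauchy-Schwarz: a cell with few collisions and large mass realises many `δ`-separated values
of `d`. -/
lemma col_cs (hμ : ∀ x, 0 ≤ μ x) (P : Pt → Prop) (η : ℝ) (d : Pt → ℝ) {δ : ℝ} (hδ : 0 < δ)
    (c : ℤ × ℤ) :
    wt Y μ (fun z => P z ∧ cell η z = c) ^ 2 ≤
      (((Y.filter (fun z => P z ∧ cell η z = c)).image (fun z => ⌊d z / δ⌋)).card : ℝ) *
        col Y μ P η d δ c := by
  set A := Y.filter (fun z => P z ∧ cell η z = c) with hA
  set f : Pt → ℤ := fun z => ⌊d z / δ⌋ with hf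
  have e1 : wt Y μ (fun z => P z ∧ cell η z = c) =
      ∑ e ∈ A.image f, ∑ y ∈ A.filter (fun y => f y = e), μ y := by
    rw [wt_eq_filter, sum_fiberwise_of_maps_to]
    intro y hy
    exact mem_image_of_mem _ hy
  rw [e1]
  refine sq_sum_le_card_mul_sum_sq.trans (mul_le_mul_of_nonneg_left ?_ (by positivity))
  have e2 : ∀ e ∈ A.image f, (∑ y ∈ A.filter (fun y => f y = e), μ y) ^ 2 =
      ∑ y ∈ A.filter (fun y => f y = e), ∑ z ∈ A, if f z = f y then μ y * μ z else 0 := by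
    intro e _
    rw [sq, sum_mul]
    refine sum_congr rfl fun y hy => ?_
    rw [mul_sum, sum_filter]
    refine sum_congr rfl fun z _ => ?_
    rw [(mem_filter.1 hy).2]
  rw [sum_congr rfl e2, sum_fiberwise_of_maps_to (fun y hy => mem_image_of_mem _ hy), col, hA,
    sum_filter]
  refine sum_le_sum fun y _ => ?_
  split_ifs with hy
  · rw [sum_filter]
    refine sum_le_sum fun z _ => ?_
    have h0 := mul_nonneg (hμ y) (hμ z)
    by_cases hz : P z ∧ cell η z = c
    · rw [if_pos hz]
      by_cases hfz : f z = f y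
      · rw [if_pos hfz, if_pos ⟨hy.1, hz.1, hy.2, hz.2, (abs_sub_lt_of_floor_eq hδ hfz.symm).le⟩]
      · rw [if_neg hfz]; split_ifs <;> simp [h0]
    · rw [if_neg hz]; split_ifs <;> simp [h0]
  · refine sum_nonneg fun z _ => ?_
    have h0 := mul_nonneg (hμ y) (hμ z)
    split_ifs <;> simp [h0]

end PinnedDistance

/-! ### Levels, and passing from fine to coarse distances -/

namespace PinnedDistance
open Finset

variable {X Y : Finset Pt} {ν μ : Pt → ℝ} {k : ℕ} {L q m : ℝ} {G : Pt → Pt → Prop}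

/-- `2⁻ⁱ` is (up to a factor two) the largest scale at which balls about `y` have mass `≲ m`. -/
def lvl (Y : Finset Pt) (μ : Pt → ℝ) (L m : ℝ) (i : ℕ) (y : Pt) : Prop :=
  wt Y μ (fun z => ‖z - y‖ ≤ 2 * sc i) ≤ L * m ∧
    (i = 0 ∨ L * m ≤ wt Y μ (fun z => ‖z - y‖ ≤ 4 * sc i))

/-- Good pairs whose second point lives at level `i`. -/
def hp (X Y : Finset Pt) (ν μ : Pt → ℝ) (k : ℕ) (L m : ℝ) (G : Pt → Pt → Prop) (i : ℕ) (x y : Pt) :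
    Prop := good X Y ν μ k L G x y ∧ lvl Y μ L m i y

lemma Cfg.exists_lvl (h : Cfg X Y ν μ k L q m G) (y : Pt) : ∃ i ≤ k, lvl Y μ L m i y := by
  classical
  have hex : ∃ i, i ≤ k ∧ wt Y μ (fun z => ‖z - y‖ ≤ 2 * sc i) ≤ L * m := by
    refine ⟨k, le_rfl, ?_⟩
    have := h.bY y (sc k) le_rfl h.sc_le_q
    rw [div_self (sc_pos k).ne', mul_one] at this
    refine this.trans ?_
    have h1 := h.q_le_one
    have h2 : 0 < L * m := mul_pos (by linarith [h.hL]) h.hm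
    nlinarith
  refine ⟨Nat.find hex, (Nat.find_spec hex).1, (Nat.find_spec hex).2, ?_⟩
  rcases Nat.eq_zero_or_pos (Nat.find hex) with h0 | h0
  · exact Or.inl h0
  · right
    have := Nat.find_min hex (m := Nat.find hex - 1) (by omega)
    push Not at this
    have h3 := this (by have := (Nat.find_spec hex).1; omega)
    rw [sc_succ (Nat.find hex - 1), Nat.sub_add_cancel h0, ← mul_assoc] at h3
    norm_num at h3
    exact h3.le

/-- Pigeonholing the level: some level carries a fraction `1 / L` of the good pairs. -/
lemma Cfg.exists_hp (h : Cfg X Y ν μ k L q m G)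
    (hG : 1 / L ≤ ∑ x ∈ X, ν x * wt Y μ (G x)) :
    ∃ i ≤ k, 1 / (2 * L ^ 2) ≤ ∑ x ∈ X, ν x * wt Y μ (hp X Y ν μ k L m G i x) := by
  have hL := h.hL
  have h1 := h.good_mass hG
  by_contra hcon
  push Not at hcon
  have h2 : ∑ x ∈ X, ν x * wt Y μ (good X Y ν μ k L G x) ≤
      ∑ i ∈ range (k + 1), ∑ x ∈ X, ν x * wt Y μ (hp X Y ν μ k L m G i x) := by
    rw [sum_comm]
    refine sum_le_sum fun x _ => ?_
    rw [← mul_sum]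
    refine mul_le_mul_of_nonneg_left (wt_le_sum h.hμ _ _ fun y _ hy => ?_) (h.hν x)
    obtain ⟨i, hi, hl⟩ := h.exists_lvl y
    exact ⟨i, by simp; omega, hy, hl⟩
  have h3 : ∑ i ∈ range (k + 1), ∑ x ∈ X, ν x * wt Y μ (hp X Y ν μ k L m G i x) <
      ∑ i ∈ range (k + 1), 1 / (2 * L ^ 2) :=
    sum_lt_sum_of_nonempty (by simp) fun i hi => hcon i (by simp at hi; omega)
  rw [sum_const, card_range, nsmul_eq_mul] at h3
  push_cast at h3
  have h4 : ((k : ℝ) + 1) * (1 / (2 * L ^ 2)) ≤ L * (1 / (2 * L ^ 2)) := by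
    have := h.hk; gcongr
  have h5 : L * (1 / (2 * L ^ 2)) = 1 / (2 * L) := by
    have : L ≠ 0 := by linarith
    field_simp
  linarith

/-- A point with no light ball has level scale at most about `√m`. -/
lemma Cfg.hp_rho (h : Cfg X Y ν μ k L q m G) {i : ℕ} (hi : i ≤ k) {x y : Pt}
    (hh : hp X Y ν μ k L m G i x y) : sc i ^ 2 ≤ L ^ 8 * m := by
  have hL := h.hL
  have h1 : 1 / L ^ 7 * sc i ^ 2 ≤ wt Y μ (fun z => ‖z - y‖ ≤ sc i) := by
    by_contra hcon
    push Not at hcon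
    exact hh.1.2.2.1 ⟨i, hi, hcon⟩
  have h2 : wt Y μ (fun z => ‖z - y‖ ≤ sc i) ≤ wt Y μ (fun z => ‖z - y‖ ≤ 2 * sc i) :=
    wt_mono h.hμ fun z _ hz => by have := sc_pos i; linarith
  have h3 := (h1.trans h2).trans hh.2.1
  have : 0 < L := by linarith
  rw [one_div_mul_eq_div, div_le_iff₀ (by positivity)] at h3
  linarith

/-- The average number of collisions inside the cells of level `i`, obtained from `Cfg.eqd_sum` after
interchanging the sums over `X` and `Y`. -/
lemma Cfg.colS_mass (h : Cfg X Y ν μ k L q m G) {i : ℕ} (hi : i ≤ k) :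
    ∑ x ∈ X, ν x * colS Y μ (hp X Y ν μ k L m G i x) (sc i) (fun y => ‖x - y‖) (sc k) ≤
      L ^ 30 * (m * q) := by
  classical
  have hL := h.hL
  have hq := h.hq
  have hm := h.hm
  set e : Pt → Pt → Pt → Prop := fun x y z => hp X Y ν μ k L m G i x y ∧ hp X Y ν μ k L m G i x z ∧
    cell (sc i) y = cell (sc i) z ∧ |‖x - y‖ - ‖x - z‖| ≤ sc k with he
  have e1 : ∑ x ∈ X, ν x * colS Y μ (hp X Y ν μ k L m G i x) (sc i) (fun y => ‖x - y‖) (sc k) =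
      ∑ y ∈ Y, μ y * ∑ z ∈ Y, μ z * wt X ν (fun x => e x y z) := by
    have : ∀ x ∈ X, ν x * colS Y μ (hp X Y ν μ k L m G i x) (sc i) (fun y => ‖x - y‖) (sc k) =
        ∑ y ∈ Y, ∑ z ∈ Y, μ y * (μ z * (if e x y z then ν x else 0)) := by
      intro x _
      rw [colS, mul_sum]
      refine sum_congr rfl fun y _ => ?_
      rw [mul_sum]
      refine sum_congr rfl fun z _ => ?_
      simp only [he]
      split_ifs <;> ring
    rw [sum_congr rfl this, sum_comm]
    refine sum_congr rfl fun y _ => ?_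
    rw [sum_comm, mul_sum]
    refine sum_congr rfl fun z _ => ?_
    rw [wt_ite, mul_sum, mul_sum]
  rw [e1]
  have e2 : ∀ y ∈ Y, μ y * ∑ z ∈ Y, μ z * wt X ν (fun x => e x y z) ≤
      μ y * (L ^ 30 * (m * q)) := by
    intro y hy
    refine mul_le_mul_of_nonneg_left ?_ (h.hμ y)
    by_cases hne : ∃ x, hp X Y ν μ k L m G i x y
    · obtain ⟨x0, hx0⟩ := hne
      refine le_trans (sum_le_sum fun z _ => ?_) (h.eqd_sum hy hi hx0.2.1 (h.hp_rho hi hx0))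
      refine mul_le_mul_of_nonneg_left ?_ (h.hμ z)
      split_ifs with hb
      · exact wt_mono h.hν fun x _ hx => ⟨hx.1.1, hx.2.2.2⟩
      · rw [wt_eq_zero]
        intro x _ hx
        exact hb (norm_sub_le_of_cell_eq (sc_pos i) hx.2.2.1.symm)
    · push Not at hne
      rw [sum_eq_zero]
      · positivity
      · intro z _
        rw [wt_eq_zero (fun x _ hx => hne x hx.1), mul_zero]
  refine (sum_le_sum e2).trans ?_
  rw [← sum_mul]
  have := h.tY
  have h3 : 0 < L ^ 30 * (m * q) := by positivity
  nlinarith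

lemma Cfg.cell_mass (h : Cfg X Y ν μ k L q m G) {i : ℕ} {y : Pt} (hl : lvl Y μ L m i y) :
    wt Y μ (fun z => cell (sc i) z = cell (sc i) y) ≤ L * m :=
  (wt_mono h.hμ fun _ _ hz => norm_sub_le_of_cell_eq (sc_pos i) hz).trans hl.1

/-- Points of level `i` occupy at most about `1 / m` cells of side `2⁻ⁱ`, since the surrounding balls
have mass at least about `m`. -/
lemma Cfg.card_lvl (h : Cfg X Y ν μ k L q m G) (i : ℕ) (S : Finset Pt)
    (hS : ∀ y ∈ S, y ∈ Y ∧ lvl Y μ L m i y) :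
    ((S.image (cell (sc i))).card : ℝ) * m ≤ 5 * L ^ 2 := by
  have hL := h.hL
  have hm := h.hm
  rcases Nat.eq_zero_or_pos i with h0 | h0
  · subst h0
    have h1 := card_cells_ball (sc_pos 0) S (by linarith : 0 ≤ L) 0 (fun p hp => by
      simpa using h.hY p (hS p hp).1)
    rw [sc_zero, div_one] at h1
    rw [sc_zero]
    have h2 : m ≤ 1 := h.hmq.trans h.q_le_one
    have h3 : (2 * L + 5) ^ 2 ≤ 5 * L ^ 2 := by nlinarith
    have h4 : (0 : ℝ) ≤ ((S.image (cell 1)).card : ℝ) := by positivity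
    nlinarith
  · have h1 := card_cells_mul_le (X := Y) (ν := μ) h.hμ (sc_pos i) S (β := L * m) (fun _ => True)
      (fun y hy => by
        rcases (hS y hy).2.2 with h1 | h1
        · omega
        · exact h1) (fun _ _ _ _ _ => trivial)
    have h2 := (wt_le_total (X := Y) h.hμ (fun _ => True)).trans h.tY
    have h4 : (0 : ℝ) ≤ ((S.image (cell (sc i))).card : ℝ) * m := by positivity
    nlinarith

/-- Pairs `(x, y)` for which the cell of `y` is rich and has few collisions as seen from `x`. -/
def hp3 (X Y : Finset Pt) (ν μ : Pt → ℝ) (k : ℕ) (L q m : ℝ) (G : Pt → Pt → Prop) (i : ℕ)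
    (x y : Pt) : Prop :=
  hp X Y ν μ k L m G i x y ∧
  col Y μ (hp X Y ν μ k L m G i x) (sc i) (fun y => ‖x - y‖) (sc k) (cell (sc i) y) ≤
    L ^ 35 * (m ^ 2 * q) ∧
  m / L ^ 7 ≤ wt Y μ (fun z => hp X Y ν μ k L m G i x z ∧ cell (sc i) z = cell (sc i) y)

lemma Cfg.hp3_mass (h : Cfg X Y ν μ k L q m G) {i : ℕ} (hi : i ≤ k)
    (hH : 1 / (2 * L ^ 2) ≤ ∑ x ∈ X, ν x * wt Y μ (hp X Y ν μ k L m G i x)) :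
    1 / L ^ 3 ≤ ∑ x ∈ X, ν x * wt Y μ (hp3 X Y ν μ k L q m G i x) := by
  classical
  have hL := h.hL
  have hL0 : 0 < L := by linarith
  have hq := h.hq
  have hm := h.hm
  set T := L ^ 35 * (m ^ 2 * q) with hT
  have hT0 : 0 < T := by positivity
  set C : Pt → ℝ := fun x =>
    colS Y μ (hp X Y ν μ k L m G i x) (sc i) (fun y => ‖x - y‖) (sc k) with hC
  have key : ∀ x ∈ X, ν x * wt Y μ (hp X Y ν μ k L m G i x) ≤
      ν x * wt Y μ (hp3 X Y ν μ k L q m G i x) + (L * m / T) * (ν x * C x) +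
        ν x * (1 / L ^ 4) := by
    intro x _
    have hn := h.hν x
    have h1 := col_markov (Y := Y) h.hμ (hp X Y ν μ k L m G i x) (sc i) (fun y => ‖x - y‖) (sc k) T
      (L * m) (fun y _ hy => (wt_mono h.hμ fun z _ hz => hz.2).trans (h.cell_mass hy.2))
    have h1' : wt Y μ (fun y => hp X Y ν μ k L m G i x y ∧
        T < col Y μ (hp X Y ν μ k L m G i x) (sc i) (fun y => ‖x - y‖) (sc k) (cell (sc i) y)) ≤
        L * m / T * C x := by
      rw [div_mul_eq_mul_div, le_div_iff₀ hT0]; exact h1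
    have h2 : wt Y μ (fun y => hp X Y ν μ k L m G i x y ∧
        wt Y μ (fun z => hp X Y ν μ k L m G i x z ∧ cell (sc i) z = cell (sc i) y) < m / L ^ 7) ≤
        1 / L ^ 4 := by
      set S := Y.filter (fun y => hp X Y ν μ k L m G i x y ∧
        wt Y μ (fun z => hp X Y ν μ k L m G i x z ∧ cell (sc i) z = cell (sc i) y) < m / L ^ 7)
      refine (wt_le_cells h.hμ S (sc i) (m / L ^ 7) (fun y hy hp => mem_filter.2 ⟨hy, hp⟩)
        (fun y hy => ?_)).trans ?_
      · refine le_trans (wt_mono h.hμ fun z _ hz => ?_) (mem_filter.1 hy).2.2.le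
        exact ⟨hz.1.1, hz.2⟩
      · have h3 := h.card_lvl i S (fun y hy => ⟨(mem_filter.1 hy).1, (mem_filter.1 hy).2.1.2⟩)
        calc _ = ((S.image (cell (sc i))).card : ℝ) * m / L ^ 7 := by ring
          _ ≤ 5 * L ^ 2 / L ^ 7 := by gcongr
          _ ≤ L * L ^ 2 / L ^ 7 := by gcongr; linarith
          _ = _ := by field_simp
    have h3 := wt_le_sum (X := Y) (ν := μ) h.hμ (p := hp X Y ν μ k L m G i x) (univ : Finset (Fin 3))
      ![hp3 X Y ν μ k L q m G i x, fun y => hp X Y ν μ k L m G i x y ∧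
        T < col Y μ (hp X Y ν μ k L m G i x) (sc i) (fun y => ‖x - y‖) (sc k) (cell (sc i) y),
        fun y => hp X Y ν μ k L m G i x y ∧
        wt Y μ (fun z => hp X Y ν μ k L m G i x z ∧ cell (sc i) z = cell (sc i) y) < m / L ^ 7]
      (fun y _ hy => by
        rcases lt_or_ge T (col Y μ (hp X Y ν μ k L m G i x) (sc i) (fun y => ‖x - y‖) (sc k)
          (cell (sc i) y)) with h1 | h1
        · exact ⟨1, mem_univ _, hy, h1⟩
        · rcases lt_or_ge (wt Y μ (fun z => hp X Y ν μ k L m G i x z ∧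
            cell (sc i) z = cell (sc i) y)) (m / L ^ 7) with h2 | h2
          · exact ⟨2, mem_univ _, hy, h2⟩
          · exact ⟨0, mem_univ _, hy, h1, h2⟩)
    rw [Fin.sum_univ_three] at h3
    simp only [Matrix.cons_val_zero, Matrix.cons_val_one, Matrix.cons_val] at h3
    have h4 := mul_le_mul_of_nonneg_left h3 hn
    have h5 := mul_le_mul_of_nonneg_left h1' hn
    have h6 := mul_le_mul_of_nonneg_left h2 hn
    linarith
  have h1 := sum_le_sum key
  rw [sum_add_distrib, sum_add_distrib, ← mul_sum, ← sum_mul] at h1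
  have h2 : L * m / T * ∑ x ∈ X, ν x * C x ≤ 1 / L ^ 4 := by
    calc _ ≤ L * m / T * (L ^ 30 * (m * q)) := by
          have := h.colS_mass hi
          gcongr
      _ = _ := by rw [hT]; field_simp
  have h3 : (∑ x ∈ X, ν x) * (1 / L ^ 4) ≤ 1 / L ^ 4 := by
    have := h.tX
    have : 0 < 1 / L ^ 4 := by positivity
    nlinarith
  have h4 : 1 / L ^ 3 + 2 / L ^ 4 ≤ 1 / (2 * L ^ 2) := by
    have : 1 / L ^ 3 + 2 / L ^ 4 = (L + 2) / L ^ 4 := by field_simp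
    rw [this, div_le_div_iff₀ (by positivity) (by positivity)]
    have : (L + 2) * 2 ≤ L ^ 2 := by nlinarith
    calc (L + 2) * (2 * L ^ 2) = ((L + 2) * 2) * L ^ 2 := by ring
      _ ≤ L ^ 2 * L ^ 2 := by gcongr
      _ = _ := by ring
  have h5 : 2 / L ^ 4 = 1 / L ^ 4 + 1 / L ^ 4 := by ring
  linarith

open Classical in
/-- Each coarse distance is refined into about `1 / q` fine ones: a rich cell with few collisions
produces that many distances by `col_cs`, and a fine distance arises from boundedly many coarse ones.
Hence `N` fine distances leave room for at most about `N q` coarse distances. -/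
lemma Cfg.card_index (h : Cfg X Y ν μ k L q m G) {i : ℕ} (hi : i ≤ k) (x : Pt) {N : ℝ}
    (hN : (((Y.filter (G x)).image (fun y => ⌊‖x - y‖ / sc k⌋)).card : ℝ) ≤ N) :
    (((Y.filter (hp3 X Y ν μ k L q m G i x)).image (fun y => ⌊‖x - y‖ / sc i⌋)).card : ℝ) ≤
      L ^ 50 * N * q := by
  have hL := h.hL
  have hL0 : 0 < L := by linarith
  have hq := h.hq
  have hm := h.hm
  have hsi := sc_pos i
  have hsk := sc_pos k
  set D := (Y.filter (hp3 X Y ν μ k L q m G i x)).image (fun y => ⌊‖x - y‖ / sc i⌋) with hD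
  set I := (Y.filter (G x)).image (fun y => ⌊‖x - y‖ / sc k⌋) with hI
  have hrep : ∀ e ∈ D, ∃ y ∈ Y, hp3 X Y ν μ k L q m G i x y ∧ ⌊‖x - y‖ / sc i⌋ = e := by
    intro e he
    obtain ⟨y, hy, rfl⟩ := mem_image.1 he
    exact ⟨y, (mem_filter.1 hy).1, (mem_filter.1 hy).2, rfl⟩
  choose! g hgY hg3 hge using hrep
  let J : ℤ → Finset ℤ := fun e =>
    (Y.filter (fun z => hp X Y ν μ k L m G i x z ∧ cell (sc i) z = cell (sc i) (g e))).image
      (fun z => ⌊‖x - z‖ / sc k⌋)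
  have hJc : ∀ e ∈ D, 1 / (L ^ 49 * q) ≤ ((J e).card : ℝ) := by
    intro e he
    obtain ⟨-, h2, h3⟩ := hg3 e he
    have h1 := col_cs (Y := Y) h.hμ (hp X Y ν μ k L m G i x) (sc i) (fun y => ‖x - y‖) hsk
      (cell (sc i) (g e))
    have h4 : (m / L ^ 7) ^ 2 ≤ ((J e).card : ℝ) * (L ^ 35 * (m ^ 2 * q)) := by
      calc (m / L ^ 7) ^ 2 ≤ _ := pow_le_pow_left₀ (by positivity) h3 2
        _ ≤ _ := h1
        _ ≤ _ := by gcongr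
    rw [div_le_iff₀ (by positivity)]
    have h5 : (m / L ^ 7) ^ 2 = m ^ 2 / L ^ 14 := by field_simp
    rw [h5, div_le_iff₀ (by positivity)] at h4
    have : 0 < m ^ 2 := by positivity
    refine le_of_mul_le_mul_right ?_ this
    calc _ = m ^ 2 := by ring
      _ ≤ _ := h4
      _ = _ := by ring
  have hJI : ∀ e ∈ D, J e ⊆ I := by
    intro e _
    refine image_subset_image fun z hz => ?_
    rw [mem_filter] at hz ⊢
    exact ⟨hz.1, hz.2.1.1.1⟩
  have hcount : ∀ f ∈ I, ((D.filter (fun e => f ∈ J e)).card : ℝ) ≤ 9 := by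
    intro f _
    have hsub : D.filter (fun e => f ∈ J e) ⊆
        Icc (⌊sc k * f / sc i⌋ - ((3 : ℕ) + 1)) (⌊sc k * f / sc i⌋ + ((3 : ℕ) + 1)) := by
      intro e he
      obtain ⟨heD, hfe⟩ := mem_filter.1 he
      obtain ⟨z, hz, hzf⟩ := mem_image.1 hfe
      have hz' := (mem_filter.1 hz).2.2
      rw [← hge e heD]
      refine floor_mem_of_abs_sub_le 3 (R := 3) (by norm_num) ?_
      have h1 := norm_sub_le_of_cell_eq hsi hz'
      have h2 : |‖x - g e‖ - ‖x - z‖| ≤ 2 * sc i := by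
        refine (abs_norm_sub_norm_le _ _).trans (le_trans (le_of_eq ?_) h1)
        congr 1; abel
      have h3 := Int.floor_le (‖x - z‖ / sc k)
      have h4 := (Int.lt_floor_add_one (‖x - z‖ / sc k)).le
      rw [hzf] at h3 h4
      rw [le_div_iff₀ hsk] at h3
      rw [div_le_iff₀ hsk] at h4
      have h5 : sc k ≤ sc i := sc_anti hi
      rw [← sub_div, abs_div, abs_of_pos hsi, div_le_iff₀ hsi]
      rw [abs_le] at h2 ⊢
      constructor <;> nlinarith
    have := card_le_card hsub
    rw [Int.card_Icc] at this
    have h9 : (D.filter (fun e => f ∈ J e)).card ≤ 9 := by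
      refine this.trans (le_of_eq ?_)
      have : ∀ a : ℤ, (a + ((3 : ℕ) + 1) + 1 - (a - ((3 : ℕ) + 1))).toNat = 9 := by
        intro a
        have : a + (((3 : ℕ) : ℤ) + 1) + 1 - (a - (((3 : ℕ) : ℤ) + 1)) = 9 := by push_cast; ring
        rw [this]; rfl
      exact this _
    exact_mod_cast h9
  have hdc : ∑ e ∈ D, ((J e).card : ℝ) = ∑ f ∈ I, ((D.filter (fun e => f ∈ J e)).card : ℝ) := by
    have : ∀ e ∈ D, ((J e).card : ℝ) = ∑ f ∈ I, if f ∈ J e then (1 : ℝ) else 0 := by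
      intro e he
      rw [sum_ite_mem, inter_eq_right.2 (hJI e he)]
      simp
    rw [sum_congr rfl this, sum_comm]
    refine sum_congr rfl fun f _ => ?_
    rw [← sum_filter]; simp
  have h1 : (D.card : ℝ) * (1 / (L ^ 49 * q)) ≤ I.card * 9 := by
    calc _ = ∑ e ∈ D, 1 / (L ^ 49 * q) := by simp
      _ ≤ ∑ e ∈ D, ((J e).card : ℝ) := sum_le_sum hJc
      _ ≤ _ := by
        rw [hdc]
        simpa using sum_le_card_nsmul I _ 9 hcount
  rw [mul_one_div, div_le_iff₀ (by positivity)] at h1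
  have hN0 : 0 ≤ N := le_trans (by positivity) hN
  calc (D.card : ℝ) ≤ I.card * 9 * (L ^ 49 * q) := h1
    _ ≤ N * L * (L ^ 49 * q) := by
      gcongr
      linarith
    _ = _ := by ring

end PinnedDistance

/-! ### Two pins and the combinatorial estimate -/

namespace PinnedDistance
open Finset

variable {X Y : Finset Pt} {ν μ : Pt → ℝ} {k : ℕ} {L q m : ℝ} {G : Pt → Pt → Prop}

/-- By Cauchy-Schwarz, two pins `x, x'` share a large set of partners `y`. Those near the line
`xx'` can be discarded, because for fixed `x` and `y` the tube condition bounds the mass of the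
`x'` near the line `xy`. -/
lemma Cfg.exists_pair (h : Cfg X Y ν μ k L q m G) {A : Pt → Pt → Prop}
    (hAG : ∀ x y, A x y → G x y) (hA : 1 / L ^ 3 ≤ ∑ x ∈ X, ν x * wt Y μ (A x)) :
    ∃ x ∈ X, ∃ x' ∈ X, 1 / L ^ 7 ≤
      wt Y μ (fun y => A x y ∧ A x' y ∧ 1 / L ^ 8 < |crs (x' - x) (y - x)|) := by
  classical
  have hL := h.hL
  have hL0 : 0 < L := by linarith
  by_contra hcon
  push Not at hcon
  set a : Pt → ℝ := fun y => ∑ x ∈ X, if A x y then ν x else 0 with ha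
  set t := ∑ y ∈ Y, μ y * a y with ht
  have e1 : ∑ x ∈ X, ν x * wt Y μ (A x) = t := by
    have : ∀ x ∈ X, ν x * wt Y μ (A x) = ∑ y ∈ Y, μ y * (if A x y then ν x else 0) := by
      intro x _
      rw [wt_ite, mul_sum]
      refine sum_congr rfl fun y _ => ?_
      split_ifs <;> ring
    rw [sum_congr rfl this, sum_comm, ht]
    refine sum_congr rfl fun y _ => ?_
    rw [ha, mul_sum]
  rw [e1] at hA
  have h1 : t ^ 2 ≤ ∑ y ∈ Y, μ y * a y ^ 2 := by
    have h0 : 0 ≤ ∑ y ∈ Y, μ y * (a y - t) ^ 2 :=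
      sum_nonneg fun y _ => mul_nonneg (h.hμ y) (sq_nonneg _)
    have e : ∑ y ∈ Y, μ y * (a y - t) ^ 2 =
        ∑ y ∈ Y, μ y * a y ^ 2 - 2 * t * t + t ^ 2 * ∑ y ∈ Y, μ y := by
      have : ∀ y ∈ Y, μ y * (a y - t) ^ 2 = μ y * a y ^ 2 - 2 * t * (μ y * a y) + t ^ 2 * μ y :=
        fun y _ => by ring
      rw [sum_congr rfl this, sum_add_distrib, sum_sub_distrib, ← mul_sum, ← mul_sum, ← ht]
    have := h.tY
    nlinarith [sq_nonneg t]
  have h2 : ∑ y ∈ Y, μ y * a y ^ 2 = ∑ x ∈ X, ∑ x' ∈ X, ν x * ν x' *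
      wt Y μ (fun y => A x y ∧ A x' y) := by
    have : ∀ y ∈ Y, μ y * a y ^ 2 =
        ∑ x ∈ X, ∑ x' ∈ X, ν x * ν x' * (if A x y ∧ A x' y then μ y else 0) := by
      intro y _
      rw [sq, ha, sum_mul_sum, mul_sum]
      refine sum_congr rfl fun x _ => ?_
      rw [mul_sum]
      refine sum_congr rfl fun x' _ => ?_
      by_cases h1 : A x y <;> by_cases h2 : A x' y <;> simp [h1, h2]
      ring
    rw [sum_congr rfl this, sum_comm]
    refine sum_congr rfl fun x _ => ?_
    rw [sum_comm]
    refine sum_congr rfl fun x' _ => ?_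
    rw [wt_ite, mul_sum]
  have h3 : ∀ x ∈ X, ∑ x' ∈ X, ν x * ν x' * wt Y μ (fun y => A x y ∧ A x' y) ≤
      ν x * (2 / L ^ 7) := by
    intro x hx
    have e3 : ∀ x' ∈ X, ν x * ν x' * wt Y μ (fun y => A x y ∧ A x' y) ≤
        ν x * (ν x' * (1 / L ^ 7)) + ν x * ∑ y ∈ Y, (if A x y then μ y *
          (if |crs (x' - x) (y - x)| ≤ 1 / L ^ 8 then ν x' else 0) else 0) := by
      intro x' hx'
      have h4 := wt_or (X := Y) h.hμ (p := fun y => A x y ∧ A x' y)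
        (r := fun y => A x y ∧ A x' y ∧ 1 / L ^ 8 < |crs (x' - x) (y - x)|)
        (t := fun y => A x y ∧ |crs (x' - x) (y - x)| ≤ 1 / L ^ 8) (fun y _ hy => by
          rcases lt_or_ge (1 / L ^ 8) |crs (x' - x) (y - x)| with h1 | h1
          · exact Or.inl ⟨hy.1, hy.2, h1⟩
          · exact Or.inr ⟨hy.1, h1⟩)
      have h5 := hcon x hx x' hx'
      have h6 : ν x' * wt Y μ (fun y => A x y ∧ |crs (x' - x) (y - x)| ≤ 1 / L ^ 8) =
          ∑ y ∈ Y, (if A x y then μ y *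
          (if |crs (x' - x) (y - x)| ≤ 1 / L ^ 8 then ν x' else 0) else 0) := by
        rw [wt_ite, mul_sum]
        refine sum_congr rfl fun y _ => ?_
        by_cases h1 : A x y <;> by_cases h2 : |crs (x' - x) (y - x)| ≤ 1 / L ^ 8 <;>
          simp only [h1, h2, and_self, and_false, false_and, if_true, if_false, mul_zero]
        ring
      rw [← h6, ← mul_add, ← mul_add, mul_assoc]
      refine mul_le_mul_of_nonneg_left (mul_le_mul_of_nonneg_left ?_ (h.hν x')) (h.hν x)
      linarith
    refine (sum_le_sum e3).trans ?_
    rw [sum_add_distrib, ← mul_sum, ← mul_sum, ← mul_add, sum_comm, ← sum_mul]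
    refine mul_le_mul_of_nonneg_left ?_ (h.hν x)
    have e4 : ∀ y ∈ Y, ∑ x' ∈ X, (if A x y then μ y *
          (if |crs (x' - x) (y - x)| ≤ 1 / L ^ 8 then ν x' else 0) else 0) ≤ μ y * (1 / L ^ 7) := by
      intro y hy
      by_cases h1 : A x y
      · simp only [h1, if_true]
        rw [← mul_sum, ← wt_ite (fun x' => |crs (x' - x) (y - x)| ≤ 1 / L ^ 8)]
        refine mul_le_mul_of_nonneg_left ?_ (h.hμ y)
        refine (h.tbX x hx y hy (hAG x y h1) (1 / L ^ 8) ?_).trans (le_of_eq (by field_simp))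
        rw [le_div_iff₀ (by positivity)]
        linarith [h.hLd]
      · simp only [h1, if_false, sum_const_zero]
        have := h.hμ y
        positivity
    have h7 := sum_le_sum e4
    rw [← sum_mul] at h7
    have h8 : 0 < 1 / L ^ 7 := by positivity
    have h9 : 2 / L ^ 7 = 1 / L ^ 7 + 1 / L ^ 7 := by ring
    have := h.tX
    have := h.tY
    nlinarith
  have h4 := sum_le_sum h3
  rw [← h2, ← sum_mul] at h4
  have h5 : (∑ x ∈ X, ν x) * (2 / L ^ 7) ≤ 2 / L ^ 7 := by
    have := h.tX
    have : 0 < 2 / L ^ 7 := by positivity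
    nlinarith
  have h6 : (1 / L ^ 3) ^ 2 ≤ t ^ 2 := pow_le_pow_left₀ (by positivity) hA 2
  have h7 : 2 / L ^ 7 < (1 / L ^ 3) ^ 2 := by
    have : (1 / L ^ 3) ^ 2 = L / L ^ 7 := by field_simp
    rw [this]
    gcongr
    linarith
  linarith

/-- Two points with comparable distances to two centres, on the same side of and away from the line
through them, are close. -/
lemma close_of_dists {x x' y z : Pt} {L ρ : ℝ} (hL : 100 ≤ L) (hρ : 0 < ρ)
    (hx : ‖x‖ ≤ L) (hx' : ‖x'‖ ≤ L) (hy : ‖y‖ ≤ L) (hz : ‖z‖ ≤ L)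
    (h1 : |‖x - y‖ - ‖x - z‖| ≤ ρ) (h2 : |‖x' - y‖ - ‖x' - z‖| ≤ ρ)
    (hc : 1 / L ^ 8 < |crs (x' - x) (y - x)|) (hc' : 1 / L ^ 8 < |crs (x' - x) (z - x)|)
    (hs : 0 < crs (x' - x) (y - x) ↔ 0 < crs (x' - x) (z - x)) :
    ‖y - z‖ ≤ L ^ 21 * ρ := by
  have hL0 : 0 < L := by linarith
  set u := x' - x with hu
  set a := y - x with ha
  set b := z - x with hb
  set τ := 1 / L ^ 8 with hτ
  have hτ0 : 0 < τ := by positivity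
  have nu : ‖u‖ ≤ 2 * L := by have := norm_sub_le x' x; linarith
  have na : ‖a‖ ≤ 2 * L := by have := norm_sub_le y x; linarith
  have nb : ‖b‖ ≤ 2 * L := by have := norm_sub_le z x; linarith
  have nc : ‖x' - y‖ ≤ 2 * L := by have := norm_sub_le x' y; linarith
  have nd : ‖x' - z‖ ≤ 2 * L := by have := norm_sub_le x' z; linarith
  rw [norm_sub_rev x y, norm_sub_rev x z, ← ha, ← hb] at h1
  have sqd : ∀ {s t : ℝ}, 0 ≤ s → 0 ≤ t → s ≤ 2 * L → t ≤ 2 * L → |s - t| ≤ ρ →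
      |s ^ 2 - t ^ 2| ≤ 4 * L * ρ := by
    intro s t hs ht hs2 ht2 hst
    rw [sq_sub_sq, abs_mul, abs_of_nonneg (by positivity : 0 ≤ s + t)]
    exact mul_le_mul (by linarith) hst (abs_nonneg _) (by positivity)
  have q1 := sqd (norm_nonneg a) (norm_nonneg b) na nb h1
  have q2 := sqd (norm_nonneg _) (norm_nonneg _) nc nd h2
  have ed : dt u a - dt u b = ((‖a‖ ^ 2 - ‖b‖ ^ 2) - (‖x' - y‖ ^ 2 - ‖x' - z‖ ^ 2)) / 2 := by
    simp only [norm_sq_pt, dt, hu, ha, hb, PiLp.sub_apply]; ring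
  have bd : |dt u a - dt u b| ≤ 4 * L * ρ := by
    rw [ed]; rw [abs_le] at q1 q2 ⊢
    constructor <;> linarith
  have ec : crs u a ^ 2 - crs u b ^ 2 =
      ‖u‖ ^ 2 * (‖a‖ ^ 2 - ‖b‖ ^ 2) - (dt u a - dt u b) * (dt u a + dt u b) := by
    have := lagrange u a
    have := lagrange u b
    linarith
  have bs : |dt u a + dt u b| ≤ 8 * L ^ 2 := by
    have e1 := abs_dt_le u a
    have e2 := abs_dt_le u b
    have e3 : ‖u‖ * ‖a‖ ≤ 2 * L * (2 * L) := by gcongr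
    have e4 : ‖u‖ * ‖b‖ ≤ 2 * L * (2 * L) := by gcongr
    have := abs_add_le (dt u a) (dt u b)
    nlinarith
  have bc : |crs u a ^ 2 - crs u b ^ 2| ≤ 48 * L ^ 3 * ρ := by
    rw [ec]
    refine (abs_sub _ _).trans ?_
    rw [abs_mul, abs_mul, abs_of_nonneg (by positivity : 0 ≤ ‖u‖ ^ 2)]
    have e1 : ‖u‖ ^ 2 * |‖a‖ ^ 2 - ‖b‖ ^ 2| ≤ (2 * L) ^ 2 * (4 * L * ρ) := by gcongr
    have e2 : |dt u a - dt u b| * |dt u a + dt u b| ≤ 4 * L * ρ * (8 * L ^ 2) := by gcongr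
    nlinarith
  have bsum : 2 * τ ≤ |crs u a + crs u b| := by
    rcases lt_or_ge 0 (crs u a) with h | h
    · have h' := hs.1 h
      rw [abs_of_pos h] at hc
      rw [abs_of_pos h'] at hc'
      rw [abs_of_pos (by linarith)]; linarith
    · have h' : crs u b ≤ 0 := by
        by_contra hh; push Not at hh; exact absurd (hs.2 hh) (not_lt.2 h)
      rw [abs_of_nonpos h] at hc
      rw [abs_of_nonpos h'] at hc'
      rw [abs_of_nonpos (by linarith)]; linarith
  have bdc : |crs u a - crs u b| ≤ 24 * L ^ 11 * ρ := by
    have e1 : |crs u a - crs u b| * (2 * τ) ≤ 48 * L ^ 3 * ρ := by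
      refine le_trans ?_ bc
      rw [sq_sub_sq, abs_mul, mul_comm]
      gcongr
    have e2 : 48 * L ^ 3 * ρ = 24 * L ^ 11 * ρ * (2 * τ) := by rw [hτ]; field_simp; norm_num
    rw [e2] at e1
    exact le_of_mul_le_mul_right e1 (by positivity)
  have hab : a - b = y - z := by rw [ha, hb]; abel
  have e1 : ‖u‖ * ‖y - z‖ ≤ 25 * L ^ 11 * ρ := by
    have e2 := lagrange u (a - b)
    have e3 : crs u (a - b) = crs u a - crs u b := by simp only [crs, PiLp.sub_apply]; ring
    have e4 : dt u (a - b) = dt u a - dt u b := by simp only [dt, PiLp.sub_apply]; ring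
    rw [e3, e4, hab] at e2
    have e5 : (crs u a - crs u b) ^ 2 ≤ (24 * L ^ 11 * ρ) ^ 2 := by
      rw [← sq_abs]; gcongr
    have e6 : (dt u a - dt u b) ^ 2 ≤ (L ^ 11 * ρ) ^ 2 := by
      rw [← sq_abs]
      gcongr
      refine bd.trans ?_
      gcongr
      calc 4 * L ≤ L * L := by gcongr; linarith
        _ = L ^ 2 := by ring
        _ ≤ L ^ 11 := pow_le_pow_right₀ (by linarith) (by norm_num)
    have e7 : (‖u‖ * ‖y - z‖) ^ 2 ≤ (25 * L ^ 11 * ρ) ^ 2 := by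
      rw [mul_pow, ← e2]
      have e8 : 24 * L ^ 11 * ρ = 24 * (L ^ 11 * ρ) := by ring
      have e9 : 25 * L ^ 11 * ρ = 25 * (L ^ 11 * ρ) := by ring
      rw [e8, mul_pow] at e5
      rw [e9, mul_pow]
      have := sq_nonneg (L ^ 11 * ρ)
      linarith
    exact (abs_le_of_sq_le_sq' e7 (by positivity)).2
  have e2 : τ ≤ ‖u‖ * (2 * L) :=
    hc.le.trans ((abs_crs_le u a).trans (by gcongr))
  have e3 : τ * ‖y - z‖ ≤ 50 * L ^ 12 * ρ := by
    calc τ * ‖y - z‖ ≤ ‖u‖ * (2 * L) * ‖y - z‖ := by gcongr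
      _ = 2 * L * (‖u‖ * ‖y - z‖) := by ring
      _ ≤ 2 * L * (25 * L ^ 11 * ρ) := by gcongr
      _ = _ := by ring
  rw [hτ, one_div_mul_eq_div, div_le_iff₀ (by positivity)] at e3
  refine e3.trans ?_
  calc 50 * L ^ 12 * ρ * L ^ 8 ≤ L * L ^ 12 * ρ * L ^ 8 := by gcongr; linarith
    _ = _ := by ring

set_option maxRecDepth 8000 in
open Classical in
/-- The finite combinatorial estimate `N ≳ q⁻¹ m^{-1/2}`. Two pins determine a point, up to the
scale `2⁻ⁱ` and the side of the line joining them, by its two coarse distances; there are at most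
about `(N q)²` pairs of these, and each accounts for mass at most about `m`. -/
theorem Cfg.main (h : Cfg X Y ν μ k L q m G) (hG : 1 / L ≤ ∑ x ∈ X, ν x * wt Y μ (G x)) {N : ℝ}
    (hN : ∀ x ∈ X, (((Y.filter (G x)).image (fun y => ⌊‖x - y‖ / sc k⌋)).card : ℝ) ≤ N) :
    1 ≤ N ^ 2 * q ^ 2 * m * L ^ 152 := by
  have hL := h.hL
  have hL0 : 0 < L := by linarith
  have hq := h.hq
  have hm := h.hm
  obtain ⟨i, hi, hH⟩ := h.exists_hp hG
  have hsi := sc_pos i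
  have h3 := h.hp3_mass hi hH
  obtain ⟨x, hx, x', hx', hp⟩ := h.exists_pair (A := hp3 X Y ν μ k L q m G i)
    (fun x y hh => hh.1.1.1) h3
  set D : Pt → Finset ℤ := fun x =>
    (Y.filter (hp3 X Y ν μ k L q m G i x)).image (fun y => ⌊‖x - y‖ / sc i⌋) with hD
  have hDx := h.card_index hi x (hN x hx)
  have hDx' := h.card_index hi x' (hN x' hx')
  set Z : Pt → Prop := fun y => hp3 X Y ν μ k L q m G i x y ∧ hp3 X Y ν μ k L q m G i x' y ∧
    1 / L ^ 8 < |crs (x' - x) (y - x)| with hZ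
  have key := wt_le_card_mul (X := Y) h.hμ (p := Z) ((D x ×ˢ D x') ×ˢ (univ : Finset Bool))
    (fun e y => Z y ∧ ⌊‖x - y‖ / sc i⌋ = e.1.1 ∧ ⌊‖x' - y‖ / sc i⌋ = e.1.2 ∧
      decide (0 < crs (x' - x) (y - x)) = e.2) (b := L ^ 44 * m)
    (fun y hy hZy => ⟨((⌊‖x - y‖ / sc i⌋, ⌊‖x' - y‖ / sc i⌋), decide (0 < crs (x' - x) (y - x))),
      by
        simp only [mem_product, mem_univ, and_true]
        exact ⟨mem_image_of_mem _ (mem_filter.2 ⟨hy, hZy.1⟩),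
          mem_image_of_mem _ (mem_filter.2 ⟨hy, hZy.2.1⟩)⟩, hZy, rfl, rfl, rfl⟩)
    (fun e _ => by
      set P : Pt → Prop := fun y => Z y ∧ ⌊‖x - y‖ / sc i⌋ = e.1.1 ∧ ⌊‖x' - y‖ / sc i⌋ = e.1.2 ∧
        decide (0 < crs (x' - x) (y - x)) = e.2 with hP
      by_cases hne : ∃ y0 ∈ Y, P y0
      · obtain ⟨y0, hy0, hPy0⟩ := hne
        set S := Y.filter P with hS
        have h1 := wt_le_cells (X := Y) h.hμ S (sc i) (L * m) (p := P)
          (fun y hy hp => mem_filter.2 ⟨hy, hp⟩) (fun y hy =>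
            (wt_mono h.hμ fun z _ hz => hz.2).trans
              (h.cell_mass (mem_filter.1 hy).2.1.1.1.2))
        refine h1.trans ?_
        have h2 := card_cells_ball hsi S (R := L ^ 21 * sc i) (by positivity) y0 (fun y hy => by
          obtain ⟨hyY, hyP⟩ := mem_filter.1 hy
          have hiff : (0 < crs (x' - x) (y - x)) ↔ (0 < crs (x' - x) (y0 - x)) := by
            rw [← decide_eq_decide]
            exact hyP.2.2.2.trans hPy0.2.2.2.symm
          exact close_of_dists hL hsi (h.hX x hx) (h.hX x' hx') (h.hY y hyY) (h.hY y0 hy0)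
            (abs_sub_lt_of_floor_eq hsi (hyP.2.1.trans hPy0.2.1.symm)).le
            (abs_sub_lt_of_floor_eq hsi (hyP.2.2.1.trans hPy0.2.2.1.symm)).le
            hyP.1.2.2 hPy0.1.2.2 hiff)
        rw [mul_div_cancel_right₀ _ hsi.ne'] at h2
        have h3 : (2 * L ^ 21 + 5) ^ 2 ≤ L ^ 43 := by
          have h5 : (1 : ℝ) ≤ L ^ 21 := one_le_pow₀ (by linarith)
          calc (2 * L ^ 21 + 5) ^ 2 ≤ (7 * L ^ 21) ^ 2 := by gcongr; linarith
            _ = 49 * L ^ 42 := by ring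
            _ ≤ L * L ^ 42 := by gcongr; linarith
            _ = _ := by ring
        calc _ ≤ L ^ 43 * (L * m) := by
              gcongr
              exact h2.trans h3
          _ = _ := by ring
      · push Not at hne
        rw [wt_eq_zero hne]
        positivity)
  rw [card_product, card_product, card_univ, Fintype.card_bool] at key
  push_cast at key
  have h5 := hp.trans key
  have hN0 : 0 ≤ N := le_trans (by positivity) (hN x hx)
  have h6 : 1 / L ^ 7 ≤ (L ^ 50 * N * q) * (L ^ 50 * N * q) * 2 * (L ^ 44 * m) := by
    refine h5.trans ?_
    gcongr
  rw [div_le_iff₀ (by positivity)] at h6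
  refine h6.trans ?_
  calc _ = 2 * (N ^ 2 * q ^ 2 * m * L ^ 151) := by ring
    _ ≤ L * (N ^ 2 * q ^ 2 * m * L ^ 151) := by
      have : (0 : ℝ) ≤ N ^ 2 * q ^ 2 * m * L ^ 151 := by positivity
      exact mul_le_mul_of_nonneg_right (by linarith) this
    _ = _ := by ring

end PinnedDistance

/-! ### The kernel `a / (a² + τ²)` and its directional averages -/

namespace PinnedDistance
open Finset MeasureTheory

/-- The Poisson-type kernel `a / (a² + τ²)`, the cosine transform of `e^{-aξ}`. -/
noncomputable def phi (a τ : ℝ) : ℝ := a / (a ^ 2 + τ ^ 2)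

lemma phi_cos {a : ℝ} (ha : 0 < a) (τ : ℝ) :
    IntegrableOn (fun ξ : ℝ => Real.exp (-(a * ξ)) * Real.cos (τ * ξ)) (Set.Ioi 0) ∧
    ∫ ξ in Set.Ioi (0 : ℝ), Real.exp (-(a * ξ)) * Real.cos (τ * ξ) = phi a τ := by
  set z : ℂ := ⟨-a, τ⟩ with hz
  have hre : z.re < 0 := by simp [hz, ha]
  have h1 := integrableOn_exp_mul_complex_Ioi hre 0
  have h2 := integral_exp_mul_complex_Ioi hre 0
  have e : ∀ ξ : ℝ, (Complex.exp (z * ξ)).re = Real.exp (-(a * ξ)) * Real.cos (τ * ξ) := by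
    intro ξ
    rw [Complex.exp_re]
    simp [hz]
  have h3 : IntegrableOn (fun ξ : ℝ => Real.exp (-(a * ξ)) * Real.cos (τ * ξ)) (Set.Ioi 0) := by
    have := h1.re
    refine this.congr (Filter.Eventually.of_forall fun ξ => ?_)
    simpa using e ξ
  refine ⟨h3, ?_⟩
  have h4 := integral_re h1
  simp only [RCLike.re_to_complex, e] at h4
  rw [h4, h2]
  simp only [hz, phi]
  simp [Complex.div_re, Complex.normSq_apply]
  ring

/-- Positive definiteness of `phi`. -/
lemma phi_psd {ι : Type*} (s : Finset ι) (c a τ : ι → ℝ) (ha : ∀ i, 0 < a i) :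
    0 ≤ ∑ i ∈ s, ∑ j ∈ s, c i * c j * phi (a i + a j) (τ i - τ j) := by
  have h1 : ∑ i ∈ s, ∑ j ∈ s, c i * c j * phi (a i + a j) (τ i - τ j) =
      ∫ ξ in Set.Ioi (0 : ℝ), ∑ i ∈ s, ∑ j ∈ s, c i * c j *
        (Real.exp (-((a i + a j) * ξ)) * Real.cos ((τ i - τ j) * ξ)) := by
    have hintg : ∀ i j, IntegrableOn (fun ξ : ℝ => c i * c j *
        (Real.exp (-((a i + a j) * ξ)) * Real.cos ((τ i - τ j) * ξ))) (Set.Ioi 0) := fun i j =>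
      (phi_cos (add_pos (ha i) (ha j)) _).1.const_mul _
    rw [integral_finsetSum _ fun i _ => integrable_finsetSum _ fun j _ => hintg i j]
    refine sum_congr rfl fun i _ => ?_
    rw [integral_finsetSum _ fun j _ => hintg i j]
    refine sum_congr rfl fun j _ => ?_
    rw [integral_const_mul, (phi_cos (add_pos (ha i) (ha j)) _).2]
  rw [h1]
  refine integral_nonneg fun ξ => ?_
  have : (∑ i ∈ s, ∑ j ∈ s, c i * c j *
        (Real.exp (-((a i + a j) * ξ)) * Real.cos ((τ i - τ j) * ξ))) =
      (∑ i ∈ s, c i * Real.exp (-(a i * ξ)) * Real.cos (τ i * ξ)) ^ 2 +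
      (∑ i ∈ s, c i * Real.exp (-(a i * ξ)) * Real.sin (τ i * ξ)) ^ 2 := by
    rw [sq, sq, sum_mul_sum, sum_mul_sum, ← sum_add_distrib]
    refine sum_congr rfl fun i _ => ?_
    rw [← sum_add_distrib]
    refine sum_congr rfl fun j _ => ?_
    rw [add_mul, neg_add, Real.exp_add, sub_mul, Real.cos_sub]
    ring
  simp only [Pi.zero_apply]
  rw [this]
  positivity

/-- The kernel `phi` evaluated along the direction `(1, t)`, with the density of the
direction measure in the coordinate `t` included. -/
noncomputable def ker (a : ℝ) (v : Pt) (t : ℝ) : ℝ :=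
  a / (a ^ 2 * (1 + t ^ 2) + (v 0 + v 1 * t) ^ 2)

lemma ker_eq_phi (a : ℝ) (v : Pt) (t : ℝ) :
    phi (a * √(1 + t ^ 2)) (v 0 + v 1 * t) = √(1 + t ^ 2) * ker a v t := by
  rw [phi, ker, mul_pow, Real.sq_sqrt (by positivity)]
  ring

lemma ker_nonneg {a : ℝ} (ha : 0 < a) (v : Pt) (t : ℝ) : 0 ≤ ker a v t := by
  unfold ker; positivity

lemma ker_continuous {a : ℝ} (ha : 0 < a) (v : Pt) : Continuous (ker a v) := by
  unfold ker
  refine Continuous.div (by fun_prop) (by fun_prop) fun t => ?_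
  positivity

/-- The directional averages of `phi` are `π / √(a² + |v|²)`. -/
lemma ker_integral {a : ℝ} (ha : 0 < a) (v : Pt) :
    Integrable (ker a v) ∧ ∫ t, ker a v t = Real.pi / √(a ^ 2 + ‖v‖ ^ 2) := by
  set A := a ^ 2 + v 1 ^ 2 with hA
  have hA0 : 0 < A := by positivity
  set D := √(a ^ 2 + ‖v‖ ^ 2) with hD
  have hD2 : D ^ 2 = a ^ 2 + v 0 ^ 2 + v 1 ^ 2 := by
    rw [hD, Real.sq_sqrt (by positivity), norm_sq_pt]; ring
  have hD0 : 0 < D := by rw [hD]; exact Real.sqrt_pos.2 (by positivity)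
  have e : ker a v = fun t => A / (a * D ^ 2) *
      (1 + (A / (a * D) * (t + v 0 * v 1 / A)) ^ 2)⁻¹ := by
    funext t
    have h1 : a ^ 2 * (1 + t ^ 2) + (v 0 + v 1 * t) ^ 2 ≠ 0 := by positivity
    rw [ker, div_eq_iff h1]
    have h2 : a ^ 2 * (1 + t ^ 2) + (v 0 + v 1 * t) ^ 2 =
        a ^ 2 * D ^ 2 / A * (1 + (A / (a * D) * (t + v 0 * v 1 / A)) ^ 2) := by
      have h3 : a ^ 2 * D ^ 2 / A * (1 + (A / (a * D) * (t + v 0 * v 1 / A)) ^ 2) =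
        (a ^ 2 * D ^ 2 + (A * t + v 0 * v 1) ^ 2) / A := by
        field_simp
      rw [h3, eq_div_iff hA0.ne', hD2, hA]; ring
    rw [h2]
    have h4 : (1 + (A / (a * D) * (t + v 0 * v 1 / A)) ^ 2) ≠ 0 := by positivity
    generalize (1 + (A / (a * D) * (t + v 0 * v 1 / A)) ^ 2) = Q at h4
    field_simp
  have hne : A / (a * D) ≠ 0 := by positivity
  rw [e]
  constructor
  · exact ((integrable_inv_one_add_sq.comp_mul_left' hne).comp_add_right (v 0 * v 1 / A)).const_mul _
  · rw [integral_const_mul,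
      integral_add_right_eq_self (fun t => (1 + (A / (a * D) * t) ^ 2)⁻¹) (v 0 * v 1 / A),
      Measure.integral_comp_mul_left (fun t => (1 + t ^ 2)⁻¹), integral_univ_inv_one_add_sq,
      abs_of_nonneg (by positivity), smul_eq_mul]
    field_simp

end PinnedDistance

/-! ### Pointwise estimates for the directional kernel -/

namespace PinnedDistance
open Finset MeasureTheory

/-- The directional kernels inherit positive definiteness from `phi`. -/
lemma ker_psd {ι : Type*} (s : Finset ι) (c a : ι → ℝ) (p : ι → Pt) (ha : ∀ i, 0 < a i) (t : ℝ) :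
    0 ≤ ∑ i ∈ s, ∑ j ∈ s, c i * c j * ker (a i + a j) (p j - p i) t := by
  set r := √(1 + t ^ 2) with hr
  have hr0 : 0 < r := Real.sqrt_pos.2 (by positivity)
  have h := phi_psd s c (fun i => a i * r) (fun i => -(p i 0 + p i 1 * t))
    (fun i => mul_pos (ha i) hr0)
  have e : ∑ i ∈ s, ∑ j ∈ s, c i * c j *
      phi (a i * r + a j * r) (-(p i 0 + p i 1 * t) - -(p j 0 + p j 1 * t)) =
      r * ∑ i ∈ s, ∑ j ∈ s, c i * c j * ker (a i + a j) (p j - p i) t := by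
    rw [mul_sum]
    refine sum_congr rfl fun i _ => ?_
    rw [mul_sum]
    refine sum_congr rfl fun j _ => ?_
    have := ker_eq_phi (a i + a j) (p j - p i) t
    rw [← hr] at this
    rw [← add_mul, mul_left_comm, ← this]
    congr 2
    simp only [PiLp.sub_apply]; ring
  rw [e] at h
  exact nonneg_of_mul_nonneg_right h hr0

lemma ker_neg (a : ℝ) (v : Pt) (t : ℝ) : ker a (-v) t = ker a v t := by
  simp only [ker, PiLp.neg_apply]
  congr 2; ring

/-- Cauchy-Schwarz for the positive definite kernel, pairing a weight `f` with the difference of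
two regularisations of `μ`. -/
lemma ker_cs (X Y : Finset Pt) (f μ : Pt → ℝ) {w w0 l : ℝ} (hw : 0 < w) (hw0 : 0 < w0)
    (hl : 0 < l) (t : ℝ) :
    2 * ∑ x ∈ X, ∑ y ∈ Y, f x * μ y * (ker (w + w) (y - x) t - ker (w + w0) (y - x) t) ≤
      l * (∑ x ∈ X, ∑ x' ∈ X, f x * f x' * ker (w + w) (x' - x) t) +
      1 / l * ∑ y ∈ Y, ∑ y' ∈ Y, μ y * μ y' * (ker (w + w) (y' - y) t
        - 2 * ker (w + w0) (y' - y) t + ker (w0 + w0) (y' - y) t) := by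
  have h := ker_psd (X.disjSum (Y.disjSum Y))
    (Sum.elim (fun x => l * f x) (Sum.elim (fun y => - μ y) μ))
    (Sum.elim (fun _ => w) (Sum.elim (fun _ => w) (fun _ => w0)))
    (Sum.elim id (Sum.elim id id)) (by rintro (i | i | i) <;> simpa) t
  simp only [sum_disjSum, Sum.elim_inl, Sum.elim_inr, sum_add_distrib, id] at h
  set A := ∑ x ∈ X, ∑ x' ∈ X, f x * f x' * ker (w + w) (x' - x) t with hA
  set C1 := ∑ x ∈ X, ∑ y ∈ Y, f x * μ y * ker (w + w) (y - x) t with hC1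
  set C2 := ∑ x ∈ X, ∑ y ∈ Y, f x * μ y * ker (w + w0) (y - x) t with hC2
  set B1 := ∑ y ∈ Y, ∑ y' ∈ Y, μ y * μ y' * ker (w + w) (y' - y) t with hB1
  set B2 := ∑ y ∈ Y, ∑ y' ∈ Y, μ y * μ y' * ker (w + w0) (y' - y) t with hB2
  set B3 := ∑ y ∈ Y, ∑ y' ∈ Y, μ y * μ y' * ker (w0 + w0) (y' - y) t with hB3
  have e1 : ∑ x ∈ X, ∑ x' ∈ X, l * f x * (l * f x') * ker (w + w) (x' - x) t = l ^ 2 * A := by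
    simp only [hA, mul_sum]
    exact sum_congr rfl fun _ _ => sum_congr rfl fun _ _ => by ring
  have e2 : ∑ x ∈ X, ∑ y ∈ Y, l * f x * -μ y * ker (w + w) (y - x) t = - (l * C1) := by
    simp only [hC1, mul_sum, ← sum_neg_distrib]
    exact sum_congr rfl fun _ _ => sum_congr rfl fun _ _ => by ring
  have e3 : ∑ x ∈ X, ∑ y ∈ Y, l * f x * μ y * ker (w + w0) (y - x) t = l * C2 := by
    simp only [hC2, mul_sum]
    exact sum_congr rfl fun _ _ => sum_congr rfl fun _ _ => by ring
  have e4 : ∑ y ∈ Y, ∑ x ∈ X, -μ y * (l * f x) * ker (w + w) (x - y) t = - (l * C1) := by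
    rw [sum_comm]
    simp only [hC1, mul_sum, ← sum_neg_distrib]
    exact sum_congr rfl fun x _ => sum_congr rfl fun y _ => by
      rw [← neg_sub y x, ker_neg]; ring
  have e5 : ∑ y ∈ Y, ∑ x ∈ X, μ y * (l * f x) * ker (w0 + w) (x - y) t = l * C2 := by
    rw [sum_comm]
    simp only [hC2, mul_sum]
    exact sum_congr rfl fun x _ => sum_congr rfl fun y _ => by
      rw [← neg_sub y x, ker_neg, add_comm w0 w]; ring
  have e6 : ∑ y ∈ Y, ∑ y' ∈ Y, -μ y * -μ y' * ker (w + w) (y' - y) t = B1 := by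
    simp only [hB1, neg_mul_neg]
  have e7 : ∑ y ∈ Y, ∑ y' ∈ Y, -μ y * μ y' * ker (w + w0) (y' - y) t = -B2 := by
    simp only [hB2, neg_mul, sum_neg_distrib]
  have e8 : ∑ y ∈ Y, ∑ y' ∈ Y, μ y * -μ y' * ker (w0 + w) (y' - y) t = -B2 := by
    simp only [hB2, mul_neg, neg_mul, sum_neg_distrib, add_comm w0 w]
  rw [e1, e2, e3, e4, e5, e6, e7, e8] at h
  have g1 : ∑ x ∈ X, ∑ y ∈ Y, f x * μ y * (ker (w + w) (y - x) t - ker (w + w0) (y - x) t) =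
      C1 - C2 := by
    simp only [mul_sub, sum_sub_distrib, hC1, hC2]
  have g2 : ∑ y ∈ Y, ∑ y' ∈ Y, μ y * μ y' * (ker (w + w) (y' - y) t
        - 2 * ker (w + w0) (y' - y) t + ker (w0 + w0) (y' - y) t) = B1 - 2 * B2 + B3 := by
    simp only [mul_add, mul_sub, sum_add_distrib, sum_sub_distrib, hB1, hB2, hB3, mul_sum]
    congr 2
    exact sum_congr rfl fun _ _ => sum_congr rfl fun _ _ => by ring
  rw [g1, g2]
  have : 0 ≤ (l ^ 2 * A - 2 * l * (C1 - C2) + (B1 - 2 * B2 + B3)) / l :=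
    div_nonneg (by linarith) hl.le
  have e : (l ^ 2 * A - 2 * l * (C1 - C2) + (B1 - 2 * B2 + B3)) / l =
      l * A - 2 * (C1 - C2) + 1 / l * (B1 - 2 * B2 + B3) := by
    field_simp
  linarith

lemma ker_mul_le {a : ℝ} (ha : 0 < a) (v : Pt) (t : ℝ) : (1 + t ^ 2) * ker a v t ≤ 1 / a := by
  have : 0 < a ^ 2 * (1 + t ^ 2) + (v 0 + v 1 * t) ^ 2 := by positivity
  rw [ker, mul_div_assoc', div_le_div_iff₀ this ha]
  nlinarith [sq_nonneg (v 0 + v 1 * t)]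

/-- If `p` lies in the `w`-tube through `x` and `x + u`, then its offset `v` from `x` is nearly
orthogonal to every direction that `u` is nearly orthogonal to. -/
lemma ker_tube {u v : Pt} {R w t : ℝ} (hR : 1 ≤ R) (hw : 0 < w) (hu : 1 ≤ R * ‖u‖)
    (hv : ‖v‖ ≤ 2 * R) (hc : |crs v u| ≤ w)
    (ht : (u 0 + u 1 * t) ^ 2 ≤ 100 * w ^ 2 * (1 + t ^ 2)) :
    1 / (250 * R ^ 4 * w) ≤ (1 + t ^ 2) * ker (w + w) v t := by
  set r := √(1 + t ^ 2) with hr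
  have hr2 : r ^ 2 = 1 + t ^ 2 := Real.sq_sqrt (by positivity)
  have hr0 : 0 < r := Real.sqrt_pos.2 (by positivity)
  have hu0 : 0 < ‖u‖ := by
    by_contra h
    have : ‖u‖ = 0 := le_antisymm (not_lt.1 h) (norm_nonneg u)
    rw [this] at hu; norm_num at hu
  have h1 : |u 0 + u 1 * t| ≤ 10 * w * r := by
    refine abs_le_of_sq_le_sq ?_ (by positivity)
    rw [mul_pow, hr2]; linarith
  have h2 : |u 0 * t - u 1| ≤ ‖u‖ * r := by
    refine abs_le_of_sq_le_sq ?_ (by positivity)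
    rw [mul_pow, hr2, norm_sq_pt]; nlinarith [sq_nonneg (u 0 + u 1 * t)]
  have id : ‖u‖ ^ 2 * (v 0 + v 1 * t) = dt u v * (u 0 + u 1 * t) - crs v u * (u 0 * t - u 1) := by
    rw [norm_sq_pt, dt, crs]; ring
  have h3 : ‖u‖ ^ 2 * |v 0 + v 1 * t| ≤ ‖u‖ * (21 * R * w * r) := by
    have : ‖u‖ ^ 2 * |v 0 + v 1 * t| = |‖u‖ ^ 2 * (v 0 + v 1 * t)| := by
      rw [abs_mul, abs_of_nonneg (by positivity : 0 ≤ ‖u‖ ^ 2)]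
    rw [this, id]
    refine (abs_sub _ _).trans ?_
    rw [abs_mul, abs_mul]
    have a1 : |dt u v| * |u 0 + u 1 * t| ≤ ‖u‖ * (2 * R) * (10 * w * r) := by
      gcongr
      exact (abs_dt_le u v).trans (by gcongr)
    have a2 : |crs v u| * |u 0 * t - u 1| ≤ w * (‖u‖ * r) := by gcongr
    have a3 : w * (‖u‖ * r) ≤ R * (w * (‖u‖ * r)) := le_mul_of_one_le_left (by positivity) hR
    nlinarith
  have h4 : ‖u‖ * |v 0 + v 1 * t| ≤ 21 * R * w * r := by
    rw [sq, mul_assoc] at h3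
    exact le_of_mul_le_mul_left h3 hu0
  have h5 : |v 0 + v 1 * t| ≤ 21 * R ^ 2 * w * r := by
    calc |v 0 + v 1 * t| ≤ R * ‖u‖ * |v 0 + v 1 * t| := le_mul_of_one_le_left (abs_nonneg _) hu
      _ = R * (‖u‖ * |v 0 + v 1 * t|) := by ring
      _ ≤ R * (21 * R * w * r) := by gcongr
      _ = _ := by ring
  have h6 : (v 0 + v 1 * t) ^ 2 ≤ 441 * R ^ 4 * w ^ 2 * (1 + t ^ 2) := by
    rw [← sq_abs, ← hr2]
    calc |v 0 + v 1 * t| ^ 2 ≤ (21 * R ^ 2 * w * r) ^ 2 := by gcongr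
      _ = _ := by ring
  have hR4 : 1 ≤ R ^ 4 := one_le_pow₀ hR
  have hpos : 0 < (w + w) ^ 2 * (1 + t ^ 2) + (v 0 + v 1 * t) ^ 2 := by positivity
  rw [ker, mul_div_assoc', div_le_div_iff₀ (by positivity) hpos]
  have h7 : w ^ 2 * (1 + t ^ 2) ≤ R ^ 4 * (w ^ 2 * (1 + t ^ 2)) :=
    le_mul_of_one_le_left (by positivity) hR4
  nlinarith

/-- Away from the directions nearly orthogonal to `u`, the kernel is dominated by a wider one. -/
lemma ker_far {u : Pt} {w t : ℝ} (hw : 0 < w)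
    (ht : 100 * w ^ 2 * (1 + t ^ 2) < (u 0 + u 1 * t) ^ 2) :
    ker (w + w) u t ≤ 1 / 2 * ker (20 * w) u t := by
  rw [ker, ker, mul_div_assoc', div_le_div_iff₀ (by positivity) (by positivity)]
  nlinarith

end PinnedDistance

/-! ### Heavy tubes and energies -/

namespace PinnedDistance
open Finset MeasureTheory

/-- For a pair `(x, y)` whose `w`-tube is heavy, the directions in which `μ` has large density at
`x` carry a definite part of the kernel mass of `y - x`. -/
lemma ker_bad {Y : Finset Pt} {μ : Pt → ℝ} (hμ : ∀ y, 0 ≤ μ y) {R w w0 Λ : ℝ} (hR : 1 ≤ R)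
    (hw : 0 < w) (hw1 : w ≤ 1) (hw0 : Λ * w0 = 500 * R ^ 4) (hw00 : 0 < w0)
    (hY : ∀ y ∈ Y, ‖y‖ ≤ R) {x y : Pt} (hx : ‖x‖ ≤ R) (hy : y ∈ Y) (hxy : 1 ≤ R * ‖y - x‖)
    (hbad : Λ * w < wt Y μ (fun p => |crs (p - x) (y - x)| ≤ w)) {S : Set ℝ} (hSm : MeasurableSet S)
    (hS : S = {t | 2 / w0 < (1 + t ^ 2) * ∑ p ∈ Y, μ p * ker (w + w) (p - x) t}) :
    1 ≤ 2 * R * ∫ t, S.indicator (ker (w + w) (y - x)) t := by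
  classical
  have hww : 0 < w + w := by linarith
  have hmem : ∀ t : ℝ, ((y - x) 0 + (y - x) 1 * t) ^ 2 ≤ 100 * w ^ 2 * (1 + t ^ 2) → t ∈ S := by
    intro t ht
    rw [hS, Set.mem_ofPred_eq, mul_sum]
    have h1 : wt Y μ (fun p => |crs (p - x) (y - x)| ≤ w) * (1 / (250 * R ^ 4 * w)) ≤
        ∑ p ∈ Y, (1 + t ^ 2) * (μ p * ker (w + w) (p - x) t) := by
      rw [wt, sum_mul]
      refine sum_le_sum fun p hp => ?_
      split_ifs with hc
      · have hv : ‖p - x‖ ≤ 2 * R := by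
          have := norm_sub_le p x
          have := hY p hp
          linarith
        have := ker_tube hR hw hxy hv hc ht
        nlinarith [hμ p]
      · have := ker_nonneg hww (p - x) t
        have := hμ p
        rw [zero_mul]
        positivity
    refine lt_of_lt_of_le ?_ h1
    have h2 : 2 / w0 = Λ * w * (1 / (250 * R ^ 4 * w)) := by
      have : R ≠ 0 := by linarith
      field_simp
      linarith
    rw [h2]
    exact mul_lt_mul_of_pos_right hbad (by positivity)
  obtain ⟨i1, v1⟩ := ker_integral hww (y - x)
  obtain ⟨i2, v2⟩ := ker_integral (by linarith : 0 < 20 * w) (y - x)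
  have hle : ∀ t, ker (w + w) (y - x) t ≤
      S.indicator (ker (w + w) (y - x)) t + 1 / 2 * ker (20 * w) (y - x) t := by
    intro t
    by_cases ht : t ∈ S
    · rw [Set.indicator_of_mem ht]
      have := ker_nonneg (by linarith : 0 < 20 * w) (y - x) t
      linarith
    · rw [Set.indicator_of_notMem ht, zero_add]
      exact ker_far hw (not_le.1 fun h => ht (hmem t h))
  have hintg := integral_mono i1 ((i1.indicator hSm).add (i2.const_mul _)) hle
  simp only [Pi.add_apply] at hintg
  rw [integral_add (i1.indicator hSm) (i2.const_mul _), integral_const_mul, v1, v2] at hintg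
  have hux : ‖y - x‖ ≤ 2 * R := by
    have := norm_sub_le y x
    have := hY y hy
    linarith
  have p1 : 0 < √((w + w) ^ 2 + ‖y - x‖ ^ 2) := Real.sqrt_pos.2 (by positivity)
  have h3 : Real.pi / √((20 * w) ^ 2 + ‖y - x‖ ^ 2) ≤ Real.pi / √((w + w) ^ 2 + ‖y - x‖ ^ 2) := by
    have := Real.pi_pos
    gcongr
    linarith
  have h4 : √((w + w) ^ 2 + ‖y - x‖ ^ 2) ≤ 3 * R := by
    rw [Real.sqrt_le_left (by linarith)]
    have : ‖y - x‖ ^ 2 ≤ (2 * R) ^ 2 := by gcongr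
    have : (w + w) ^ 2 ≤ (1 + 1) ^ 2 := by gcongr
    nlinarith
  have h5 : 1 / R ≤ Real.pi / √((w + w) ^ 2 + ‖y - x‖ ^ 2) := by
    rw [div_le_div_iff₀ (by linarith) p1]
    nlinarith [Real.pi_gt_three]
  have h6 : 1 / R ≤ 2 * ∫ t, S.indicator (ker (w + w) (y - x)) t := by linarith
  rw [div_le_iff₀ (by linarith)] at h6
  linarith

/-- The pairs with heavy `w`-tube have small mass, in terms of energies of the two measures. -/
lemma radial {X Y : Finset Pt} {ν μ : Pt → ℝ} (hν : ∀ y, 0 ≤ ν y) (hμ : ∀ y, 0 ≤ μ y)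
    (tX : ∑ x ∈ X, ν x ≤ 1) (tY : ∑ x ∈ Y, μ x ≤ 1) {R w w0 Λ l E1 E2 : ℝ} (hR : 1 ≤ R)
    (hw : 0 < w) (hw1 : w ≤ 1) (hww0 : w ≤ w0) (hw0 : Λ * w0 = 500 * R ^ 4) (hl : 0 < l)
    (hX : ∀ y ∈ X, ‖y‖ ≤ R) (hY : ∀ y ∈ Y, ‖y‖ ≤ R) (hsep : ∀ x ∈ X, ∀ y ∈ Y, 1 ≤ R * ‖y - x‖)
    (hE1 : ∀ x ∈ X, ∑ x' ∈ X, ν x' * (1 / √((w + w) ^ 2 + ‖x' - x‖ ^ 2)) ≤ E1)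
    (hE2 : ∀ y ∈ Y, ∑ y' ∈ Y, μ y' * (1 / √((w + w) ^ 2 + ‖y' - y‖ ^ 2) -
      1 / √((w0 + w0) ^ 2 + ‖y' - y‖ ^ 2)) ≤ E2) (hE10 : 0 ≤ E1) (hE20 : 0 ≤ E2) :
    ∑ x ∈ X, ν x * wt Y μ (fun y => Λ * w < wt Y μ (fun p => |crs (p - x) (y - x)| ≤ w)) ≤
      2 * R * Real.pi * (l * E1 + 1 / l * E2) := by
  classical
  have hw00 : 0 < w0 := by linarith
  have hww : 0 < w + w := by linarith
  have hwv : 0 < w + w0 := by linarith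
  have hvv : 0 < w0 + w0 := by linarith
  have hpi := Real.pi_pos
  set S : Pt → Set ℝ := fun x =>
    {t | 2 / w0 < (1 + t ^ 2) * ∑ p ∈ Y, μ p * ker (w + w) (p - x) t} with hS
  have hSm : ∀ x, MeasurableSet (S x) := fun x => by
    refine (isOpen_lt continuous_const ?_).measurableSet
    have : ∀ p, Continuous (ker (w + w) p) := fun p => ker_continuous hww p
    exact (by fun_prop : Continuous fun t : ℝ => 1 + t ^ 2).mul
      (continuous_finsetSum _ fun p _ => continuous_const.mul (this _))
  set K : Pt → Pt → ℝ → ℝ := fun x y => (S x).indicator (ker (w + w) (y - x)) with hK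
  have hKi : ∀ x y, Integrable (K x y) := fun x y =>
    (ker_integral hww (y - x)).1.indicator (hSm x)
  have hK0 : ∀ x y t, 0 ≤ K x y t := fun x y t =>
    Set.indicator_nonneg (fun t _ => ker_nonneg hww _ t) t
  have step1 : ∑ x ∈ X, ν x * wt Y μ (fun y => Λ * w < wt Y μ (fun p => |crs (p - x) (y - x)| ≤ w))
      ≤ 2 * R * ∫ t, ∑ x ∈ X, ∑ y ∈ Y, ν x * μ y * K x y t := by
    rw [integral_finsetSum _ fun x _ => integrable_finsetSum _ fun y _ => (hKi x y).const_mul _,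
      mul_sum]
    refine sum_le_sum fun x hx => ?_
    rw [integral_finsetSum _ fun y _ => (hKi x y).const_mul _, wt, mul_sum, mul_sum]
    refine sum_le_sum fun y hy => ?_
    rw [integral_const_mul]
    have h0 : 0 ≤ ∫ t, K x y t := integral_nonneg (hK0 x y)
    have := hν x
    have := hμ y
    split_ifs with hb
    · have := ker_bad hμ hR hw hw1 hw0 hw00 hY (hX x hx) hy (hsep x hx y hy) hb (hSm x) rfl
      have h3 : 0 ≤ ν x * μ y := by positivity
      nlinarith
    · rw [mul_zero]; positivity
  -- the right-hand side after Cauchy-Schwarz, pointwise in the direction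
  set F : ℝ → ℝ := fun t => l * (∑ x ∈ X, ∑ x' ∈ X, ν x * ν x' * ker (w + w) (x' - x) t) +
      1 / l * ∑ y ∈ Y, ∑ y' ∈ Y, μ y * μ y' * (ker (w + w) (y' - y) t
        - 2 * ker (w + w0) (y' - y) t + ker (w0 + w0) (y' - y) t) with hF
  have step2 : ∀ t, ∑ x ∈ X, ∑ y ∈ Y, ν x * μ y * K x y t ≤ F t := by
    intro t
    set f : Pt → ℝ := fun x => if t ∈ S x then ν x else 0 with hf
    have hf0 : ∀ x, 0 ≤ f x := fun x => by simp only [hf]; split_ifs <;> simp [hν]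
    have hf1 : ∀ x, f x ≤ ν x := fun x => by simp only [hf]; split_ifs <;> simp [hν]
    have h1 := ker_cs X Y f μ hw hw00 hl t
    have h2 : ∑ x ∈ X, ∑ y ∈ Y, ν x * μ y * K x y t ≤
        2 * ∑ x ∈ X, ∑ y ∈ Y, f x * μ y * (ker (w + w) (y - x) t - ker (w + w0) (y - x) t) := by
      rw [mul_sum]
      refine sum_le_sum fun x _ => ?_
      by_cases hx : t ∈ S x
      · have e1 : f x = ν x := by simp [hf, hx]
        have e2 : ∀ y, K x y t = ker (w + w) (y - x) t := fun y => by
          simp only [hK, Set.indicator_of_mem hx]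
        simp only [e1, e2, mul_assoc, ← mul_sum]
        rw [mul_left_comm]
        refine mul_le_mul_of_nonneg_left ?_ (hν x)
        simp only [mul_sub, sum_sub_distrib]
        have hx' : 2 / w0 < (1 + t ^ 2) * ∑ p ∈ Y, μ p * ker (w + w) (p - x) t := hx
        have h3 : (1 + t ^ 2) * ∑ p ∈ Y, μ p * ker (w + w0) (p - x) t ≤ 1 / w0 := by
          calc (1 + t ^ 2) * ∑ p ∈ Y, μ p * ker (w + w0) (p - x) t
              = ∑ p ∈ Y, μ p * ((1 + t ^ 2) * ker (w + w0) (p - x) t) := by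
                rw [mul_sum]; exact sum_congr rfl fun p _ => by ring
            _ ≤ ∑ p ∈ Y, μ p * (1 / w0) := by
                refine sum_le_sum fun p _ => mul_le_mul_of_nonneg_left ?_ (hμ p)
                refine (ker_mul_le hwv _ _).trans ?_
                gcongr
                linarith
            _ = (∑ p ∈ Y, μ p) * (1 / w0) := by rw [sum_mul]
            _ ≤ 1 * (1 / w0) := by gcongr
            _ = _ := one_mul _
        have h4 : 2 / w0 = 2 * (1 / w0) := by ring
        have ht : 0 < 1 + t ^ 2 := by positivity
        have h5 : (1 + t ^ 2) * (2 * ∑ p ∈ Y, μ p * ker (w + w0) (p - x) t) ≤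
          (1 + t ^ 2) * ∑ p ∈ Y, μ p * ker (w + w) (p - x) t := by linarith
        have h6 := le_of_mul_le_mul_left h5 ht
        linarith
      · have e1 : f x = 0 := by simp [hf, hx]
        have e2 : ∀ y, K x y t = 0 := fun y => by
          simp only [hK, Set.indicator_of_notMem hx]
        simp [e1, e2]
    refine h2.trans (h1.trans ?_)
    simp only [hF]
    gcongr l * ?_ + _
    refine sum_le_sum fun x _ => sum_le_sum fun x' _ => ?_
    exact mul_le_mul_of_nonneg_right (mul_le_mul (hf1 x) (hf1 x') (hf0 x') (hν x))
      (ker_nonneg hww _ t)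
  have k1 := fun v => ker_integral hww v
  have k2 := fun v => ker_integral hwv v
  have k3 := fun v => ker_integral hvv v
  have i2 : ∀ x y, Integrable fun t => μ x * μ y * (ker (w + w) (y - x) t
        - 2 * ker (w + w0) (y - x) t + ker (w0 + w0) (y - x) t) := fun x y =>
    (((k1 _).1.sub ((k2 _).1.const_mul 2)).add (k3 _).1).const_mul _
  have j1 : Integrable fun t => ∑ x ∈ X, ∑ x' ∈ X, ν x * ν x' * ker (w + w) (x' - x) t :=
    integrable_finsetSum _ fun x _ => integrable_finsetSum _ fun y _ => (k1 _).1.const_mul _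
  have j2 : Integrable fun t => ∑ y ∈ Y, ∑ y' ∈ Y, μ y * μ y' * (ker (w + w) (y' - y) t
        - 2 * ker (w + w0) (y' - y) t + ker (w0 + w0) (y' - y) t) :=
    integrable_finsetSum _ fun x _ => integrable_finsetSum _ fun y _ => i2 x y
  have step3 : ∫ t, ∑ x ∈ X, ∑ y ∈ Y, ν x * μ y * K x y t ≤ ∫ t, F t :=
    integral_mono (integrable_finsetSum _ fun x _ => integrable_finsetSum _ fun y _ =>
      (hKi x y).const_mul _) ((j1.const_mul _).add (j2.const_mul _)) step2
  have step4 : ∫ t, F t ≤ Real.pi * (l * E1 + 1 / l * E2) := by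
    have : ∫ t, F t = l * (∫ t, ∑ x ∈ X, ∑ x' ∈ X, ν x * ν x' * ker (w + w) (x' - x) t) +
      1 / l * ∫ t, ∑ y ∈ Y, ∑ y' ∈ Y, μ y * μ y' * (ker (w + w) (y' - y) t
        - 2 * ker (w + w0) (y' - y) t + ker (w0 + w0) (y' - y) t) := by
      rw [← integral_const_mul, ← integral_const_mul,
        ← integral_add (j1.const_mul _) (j2.const_mul _)]
    rw [this, mul_add, mul_left_comm Real.pi, mul_left_comm Real.pi]
    gcongr
    · rw [integral_finsetSum _ fun x _ => integrable_finsetSum _ fun y _ => (k1 _).1.const_mul _]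
      calc _ ≤ ∑ x ∈ X, ν x * (Real.pi * E1) := by
            refine sum_le_sum fun x hx => ?_
            rw [integral_finsetSum _ fun y _ => (k1 _).1.const_mul _]
            simp only [integral_const_mul, (k1 _).2]
            calc _ = ν x * (Real.pi *
                  ∑ x' ∈ X, ν x' * (1 / √((w + w) ^ 2 + ‖x' - x‖ ^ 2))) := by
                  rw [mul_sum, mul_sum]; exact sum_congr rfl fun p _ => by ring
              _ ≤ _ := by
                  have := hν x
                  have := hE1 x hx
                  gcongr
        _ = (∑ x ∈ X, ν x) * (Real.pi * E1) := by rw [sum_mul]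
        _ ≤ 1 * (Real.pi * E1) := by gcongr
        _ = _ := one_mul _
    · rw [integral_finsetSum _ fun x _ => integrable_finsetSum _ fun y _ => i2 _ _]
      calc _ ≤ ∑ y ∈ Y, μ y * (Real.pi * E2) := by
            refine sum_le_sum fun y hy => ?_
            rw [integral_finsetSum _ fun y' _ => i2 _ _]
            have e : ∀ y', ∫ t, μ y * μ y' * (ker (w + w) (y' - y) t
                - 2 * ker (w + w0) (y' - y) t + ker (w0 + w0) (y' - y) t) ≤ μ y * (Real.pi *
                (μ y' * (1 / √((w + w) ^ 2 + ‖y' - y‖ ^ 2) -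
                1 / √((w0 + w0) ^ 2 + ‖y' - y‖ ^ 2)))) := by
              intro y'
              have hs : Integrable fun t => ker (w + w) (y' - y) t - 2 * ker (w + w0) (y' - y) t :=
                (k1 _).1.sub ((k2 _).1.const_mul 2)
              rw [integral_const_mul, integral_add hs (k3 _).1,
                integral_sub (k1 _).1 ((k2 _).1.const_mul 2), integral_const_mul,
                (k1 _).2, (k2 _).2, (k3 _).2]
              have h1 : Real.pi / √((w0 + w0) ^ 2 + ‖y' - y‖ ^ 2) ≤
                  Real.pi / √((w + w0) ^ 2 + ‖y' - y‖ ^ 2) := by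
                have : 0 < √((w + w0) ^ 2 + ‖y' - y‖ ^ 2) := Real.sqrt_pos.2 (by positivity)
                gcongr
              have h2 : 0 ≤ μ y * μ y' := mul_nonneg (hμ _) (hμ _)
              calc _ ≤ μ y * μ y' * (Real.pi / √((w + w) ^ 2 + ‖y' - y‖ ^ 2) -
                    Real.pi / √((w0 + w0) ^ 2 + ‖y' - y‖ ^ 2)) := by
                    gcongr; linarith
                _ = _ := by ring
            refine (sum_le_sum fun y' _ => e y').trans ?_
            rw [← mul_sum, ← mul_sum]
            have := hμ y
            have := hE2 y hy
            gcongr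
        _ = (∑ x ∈ Y, μ x) * (Real.pi * E2) := by rw [sum_mul]
        _ ≤ 1 * (Real.pi * E2) := by gcongr
        _ = _ := one_mul _
  calc _ ≤ 2 * R * ∫ t, ∑ x ∈ X, ∑ y ∈ Y, ν x * μ y * K x y t := step1
    _ ≤ 2 * R * (Real.pi * (l * E1 + 1 / l * E2)) := by
        gcongr; exact step3.trans step4
    _ = _ := by ring

end PinnedDistance

/-! ### Energy bounds and the radial projection estimate -/

namespace PinnedDistance
open Finset MeasureTheory

section
variable {X Y : Finset Pt} {ν μ : Pt → ℝ}

/-- Summation of a radial majorant over dyadic shells around `p`. -/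
lemma shell_sum (hν : ∀ x, 0 ≤ ν x) (tX : ∑ x ∈ X, ν x ≤ 1) (p : Pt) (κ : Pt → ℝ) {D : ℝ}
    (hD : 0 ≤ D) {k : ℕ} (a : ℕ → ℝ) (h0 : ∀ x ∈ X, 1 ≤ ‖x - p‖ → κ x ≤ D)
    (h1 : ∀ x ∈ X, ∀ j ≤ k, sc j ≤ ‖x - p‖ → ‖x - p‖ ≤ 2 * sc j → κ x ≤ a j)
    (h2 : ∀ x ∈ X, ‖x - p‖ ≤ sc k → κ x ≤ a k) (ha0 : ∀ j, 0 ≤ a j)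
    (ha : ∀ j ≤ k, a j * wt X ν (fun x => ‖x - p‖ ≤ 2 * sc j) ≤ D) :
    ∑ x ∈ X, ν x * κ x ≤ D * ((k : ℝ) + 2) := by
  classical
  have key : ∀ x ∈ X, ν x * κ x ≤
      ν x * D + ∑ j ∈ range (k + 1), a j * (if ‖x - p‖ ≤ 2 * sc j then ν x else 0) := by
    intro x hx
    have hn : ∀ j ∈ range (k + 1), 0 ≤ a j * (if ‖x - p‖ ≤ 2 * sc j then ν x else 0) := by
      intro j _
      have := ha0 j
      have := hν x
      split_ifs <;> positivity
    have hνx := hν x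
    have hone : ∀ j ≤ k, ‖x - p‖ ≤ 2 * sc j → κ x ≤ a j → ν x * κ x ≤
      ν x * D + ∑ j ∈ range (k + 1), a j * (if ‖x - p‖ ≤ 2 * sc j then ν x else 0) := by
      intro j hj h1 h2
      have := single_le_sum hn (by simp; omega : j ∈ range (k + 1))
      rw [if_pos h1] at this
      nlinarith [mul_nonneg hνx hD]
    rcases le_or_gt 1 ‖x - p‖ with h3 | h3
    · have := h0 x hx h3
      have := sum_nonneg hn
      nlinarith
    · rcases dyadic_shell (ζ := ‖x - p‖) 0 (by rw [sc_zero]; linarith) k (Nat.zero_le k) with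
        h4 | ⟨j, -, hj, h5, h6⟩
      · exact hone k le_rfl (by linarith [sc_pos k]) (h2 x hx h4)
      · exact hone j hj h6 (h1 x hx j hj h5 h6)
  refine (sum_le_sum key).trans ?_
  rw [sum_add_distrib, ← sum_mul, sum_comm]
  have e : ∑ j ∈ range (k + 1), ∑ x ∈ X, a j * (if ‖x - p‖ ≤ 2 * sc j then ν x else 0) ≤
      ∑ j ∈ range (k + 1), D := by
    refine sum_le_sum fun j hj => ?_
    rw [← mul_sum, ← wt_ite]
    exact ha j (by simp at hj; omega)
  rw [sum_const, card_range, nsmul_eq_mul] at e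
  push_cast at e
  nlinarith

lemma two_sc_rpow {s C : ℝ} (hC : 0 ≤ C) (hs2 : s ≤ 2) (j : ℕ) {m : ℝ}
    (h : m ≤ C * (2 * sc j) ^ s) : m ≤ 4 * C * sc j ^ s := by
  refine h.trans ?_
  have h1 := sc_pos j
  rw [Real.mul_rpow (by norm_num) h1.le]
  have h2 : (2 : ℝ) ^ s ≤ 4 := by
    calc (2 : ℝ) ^ s ≤ (2 : ℝ) ^ (2 : ℝ) := Real.rpow_le_rpow_of_exponent_le (by norm_num) hs2
      _ = 4 := by norm_num
  have : 0 ≤ sc j ^ s := Real.rpow_nonneg h1.le s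
  calc C * (2 ^ s * sc j ^ s) ≤ C * (4 * sc j ^ s) := by gcongr
    _ = _ := by ring

/-- The regularised one-dimensional energy of an `s`-dimensional Frostman measure, `s ≥ 1`. -/
lemma energy_one (hν : ∀ x, 0 ≤ ν x) (tX : ∑ x ∈ X, ν x ≤ 1) {k : ℕ} {C s w : ℝ} (hC : 1 ≤ C)
    (hs1 : 1 ≤ s) (hs2 : s ≤ 2) (hw : sc k ≤ w)
    (bX : ∀ p τ, sc k ≤ τ → wt X ν (fun x => ‖x - p‖ ≤ τ) ≤ C * τ ^ s) (p : Pt) :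
    ∑ x ∈ X, ν x * (1 / √((w + w) ^ 2 + ‖x - p‖ ^ 2)) ≤ 4 * C * ((k : ℝ) + 2) := by
  have hk := sc_pos k
  have hz : ∀ x : Pt, ∀ r, 0 < r → r ≤ ‖x - p‖ → 1 / √((w + w) ^ 2 + ‖x - p‖ ^ 2) ≤ 1 / r := by
    intro x r hr h
    gcongr
    refine Real.le_sqrt_of_sq_le ?_
    have : r ^ 2 ≤ ‖x - p‖ ^ 2 := by gcongr
    nlinarith [sq_nonneg (w + w)]
  refine shell_sum hν tX p _ (by linarith) (fun j => 1 / sc j) ?_ ?_ ?_ ?_ ?_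
  · intro x _ h
    have := hz x 1 one_pos h
    linarith
  · intro x _ j _ h _
    exact hz x _ (sc_pos j) h
  · intro x _ h
    gcongr
    refine Real.le_sqrt_of_sq_le ?_
    nlinarith [sq_nonneg ‖x - p‖]
  · intro j
    have := sc_pos j
    positivity
  · intro j hj
    have hj0 := sc_pos j
    have h1 := two_sc_rpow (by linarith) hs2 j (bX p (2 * sc j) (by linarith [sc_anti hj]))
    have h2 : sc j ^ s ≤ sc j := by
      calc sc j ^ s ≤ sc j ^ (1 : ℝ) :=
            Real.rpow_le_rpow_of_exponent_ge hj0 (sc_le_one j) hs1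
        _ = sc j := Real.rpow_one _
    rw [one_div_mul_eq_div, div_le_iff₀ hj0]
    refine h1.trans ?_
    gcongr

/-- The decay in `ζ` of the difference of two regularised kernels, used beyond the scale `w0`. -/
lemma kernel_diff {w w0 ζ r : ℝ} (hw : 0 < w) (hww0 : w ≤ w0) (hr : 0 < r) (h : r ≤ ζ) :
    1 / √((w + w) ^ 2 + ζ ^ 2) - 1 / √((w0 + w0) ^ 2 + ζ ^ 2) ≤ 2 * w0 ^ 2 / r ^ 3 := by
  have hw0 : 0 < w0 := by linarith
  set A := √((w + w) ^ 2 + ζ ^ 2) with hA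
  set B := √((w0 + w0) ^ 2 + ζ ^ 2) with hB
  have hζ2 : r ^ 2 ≤ ζ ^ 2 := by gcongr
  have hAr : r ≤ A := Real.le_sqrt_of_sq_le (by nlinarith [sq_nonneg (w + w)])
  have hBr : r ≤ B := Real.le_sqrt_of_sq_le (by nlinarith [sq_nonneg (w0 + w0)])
  have hA2 : A ^ 2 = (w + w) ^ 2 + ζ ^ 2 := Real.sq_sqrt (by positivity)
  have hB2 : B ^ 2 = (w0 + w0) ^ 2 + ζ ^ 2 := Real.sq_sqrt (by positivity)
  have hA0 : 0 < A := by linarith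
  have hB0 : 0 < B := by linarith
  have e : 1 / A - 1 / B = (B ^ 2 - A ^ 2) / (A * B * (A + B)) := by
    field_simp; ring
  rw [e]
  have h2 : B ^ 2 - A ^ 2 ≤ 4 * w0 ^ 2 := by rw [hA2, hB2]; nlinarith [sq_nonneg (w + w)]
  calc (B ^ 2 - A ^ 2) / (A * B * (A + B)) ≤ 4 * w0 ^ 2 / (r * r * (r + r)) := by gcongr
    _ = _ := by field_simp; norm_num

/-- The part of the one-dimensional energy between the scales `w` and `w0` gains `w0 ^ (s - 1)`. -/
lemma energy_two (hν : ∀ x, 0 ≤ ν x) (tX : ∑ x ∈ X, ν x ≤ 1) {k : ℕ} {C s w w0 : ℝ} (hC : 1 ≤ C)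
    (hs1 : 1 ≤ s) (hs2 : s ≤ 2) (hw : sc k ≤ w) (hww0 : w ≤ w0) (hw01 : w0 ≤ 1)
    (bX : ∀ p τ, sc k ≤ τ → wt X ν (fun x => ‖x - p‖ ≤ τ) ≤ C * τ ^ s) (p : Pt) :
    ∑ x ∈ X, ν x * (1 / √((w + w) ^ 2 + ‖x - p‖ ^ 2) - 1 / √((w0 + w0) ^ 2 + ‖x - p‖ ^ 2)) ≤
      8 * C * w0 ^ (s - 1) * ((k : ℝ) + 2) := by
  have hk := sc_pos k
  have hw' : 0 < w := by linarith
  have hw0 : 0 < w0 := by linarith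
  have hnn : ∀ x : Pt, 0 ≤ 1 / √((w0 + w0) ^ 2 + ‖x - p‖ ^ 2) := fun x => by positivity
  have hpw : 0 < w0 ^ (s - 1) := Real.rpow_pos_of_pos hw0 _
  have hz : ∀ x : Pt, ∀ r, 0 < r → r ≤ ‖x - p‖ → 1 / √((w + w) ^ 2 + ‖x - p‖ ^ 2) ≤ 1 / r := by
    intro x r hr h
    gcongr
    refine Real.le_sqrt_of_sq_le ?_
    have : r ^ 2 ≤ ‖x - p‖ ^ 2 := by gcongr
    nlinarith [sq_nonneg (w + w)]
  refine shell_sum hν tX p _ (by positivity) (fun j => min (1 / sc j) (2 * w0 ^ 2 / sc j ^ 3))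
    ?_ ?_ ?_ ?_ ?_
  · intro x _ h
    refine (kernel_diff hw' hww0 one_pos h).trans ?_
    have h1 : w0 ^ 2 ≤ w0 ^ (s - 1) := by
      rw [← Real.rpow_natCast]
      exact Real.rpow_le_rpow_of_exponent_ge hw0 hw01 (by push_cast; linarith)
    calc 2 * w0 ^ 2 / 1 ^ 3 = 2 * w0 ^ 2 := by ring
      _ ≤ 2 * w0 ^ (s - 1) := by gcongr
      _ ≤ 8 * C * w0 ^ (s - 1) := by gcongr; linarith
  · intro x _ j _ h _
    refine le_min ?_ (kernel_diff hw' hww0 (sc_pos j) h)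
    linarith [hz x _ (sc_pos j) h, hnn x]
  · intro x _ h
    have h1 : 1 / √((w + w) ^ 2 + ‖x - p‖ ^ 2) ≤ 1 / sc k := by
      gcongr
      refine Real.le_sqrt_of_sq_le ?_
      nlinarith [sq_nonneg ‖x - p‖]
    have h2 : 1 / sc k ≤ 2 * w0 ^ 2 / sc k ^ 3 := by
      rw [div_le_div_iff₀ hk (by positivity)]
      have : sc k ^ 2 ≤ w0 ^ 2 := by gcongr; linarith
      nlinarith
    have := hnn x
    exact le_min (by linarith) (by linarith)
  · intro j
    have := sc_pos j
    positivity
  · intro j hj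
    have hj0 := sc_pos j
    have h1 := two_sc_rpow (by linarith) hs2 j (bX p (2 * sc j) (by linarith [sc_anti hj]))
    have hwt := wt_nonneg (X := X) hν (fun x => ‖x - p‖ ≤ 2 * sc j)
    have hps : 0 < sc j ^ s := Real.rpow_pos_of_pos hj0 s
    rcases le_total (sc j) w0 with hc | hc
    · have h3 : sc j ^ s = sc j * sc j ^ (s - 1) := by
        rw [← Real.rpow_one_add' hj0.le (by linarith)]; ring_nf
      calc _ ≤ 1 / sc j * (4 * C * sc j ^ s) := by gcongr; exact min_le_left _ _
        _ = 4 * C * sc j ^ (s - 1) := by rw [h3]; field_simp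
        _ ≤ 4 * C * w0 ^ (s - 1) := by
            gcongr
        _ ≤ _ := by
            have : 0 < C * w0 ^ (s - 1) := by positivity
            linarith
    · have h3 : w0 ^ 2 * sc j ^ s ≤ w0 ^ (s - 1) * sc j ^ 3 := by
        have e1 : sc j ^ (3 : ℕ) = sc j ^ s * sc j ^ (3 - s) := by
          rw [← Real.rpow_add hj0, ← Real.rpow_natCast]; congr 1; push_cast; ring
        have e2 : w0 ^ (2 : ℕ) = w0 ^ (s - 1) * w0 ^ (3 - s) := by
          rw [← Real.rpow_add hw0, ← Real.rpow_natCast]; congr 1; push_cast; ring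
        have e3 : w0 ^ (3 - s) ≤ sc j ^ (3 - s) :=
          Real.rpow_le_rpow hw0.le hc (by linarith)
        rw [e1, e2]
        calc w0 ^ (s - 1) * w0 ^ (3 - s) * sc j ^ s = w0 ^ (s - 1) * sc j ^ s * w0 ^ (3 - s) := by ring
          _ ≤ w0 ^ (s - 1) * sc j ^ s * sc j ^ (3 - s) := by gcongr
          _ = _ := by ring
      calc _ ≤ 2 * w0 ^ 2 / sc j ^ 3 * (4 * C * sc j ^ s) := by gcongr; exact min_le_right _ _
        _ = 8 * C * (w0 ^ 2 * sc j ^ s) / sc j ^ 3 := by ring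
        _ ≤ 8 * C * (w0 ^ (s - 1) * sc j ^ 3) / sc j ^ 3 := by gcongr
        _ = _ := by field_simp

/-- The pairs `(x, y)` spanning a line some tube of which carries too much `μ`-mass are rare: the
quantitative radial projection estimate. -/
theorem heavy_tubes (hν : ∀ x, 0 ≤ ν x) (hμ : ∀ x, 0 ≤ μ x) (tX : ∑ x ∈ X, ν x ≤ 1)
    (tY : ∑ y ∈ Y, μ y ≤ 1) {k : ℕ} {C s R L : ℝ} (hC : 1 ≤ C)
    (hs1 : 1 ≤ s) (hs2 : s ≤ 2) (hR : 1 ≤ R) (hL : 1000 * R ^ 4 ≤ L)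
    (hX : ∀ y ∈ X, ‖y‖ ≤ R) (hY : ∀ y ∈ Y, ‖y‖ ≤ R) (hsep : ∀ x ∈ X, ∀ y ∈ Y, 1 ≤ R * ‖y - x‖)
    (bX : ∀ p τ, sc k ≤ τ → wt X ν (fun x => ‖x - p‖ ≤ τ) ≤ C * τ ^ s)
    (bY : ∀ p τ, sc k ≤ τ → wt Y μ (fun x => ‖x - p‖ ≤ τ) ≤ C * τ ^ s) :
    ∑ x ∈ X, ν x * wt Y μ (fun y => ∃ w, sc k ≤ w ∧
      L * w < wt Y μ (fun p => |crs (p - x) (y - x)| ≤ w)) ≤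
      100 * R * C * ((k : ℝ) + 2) ^ 2 * (1000 * R ^ 4 / L) ^ ((s - 1) / 2) := by
  have hR4 : 1 ≤ R ^ 4 := one_le_pow₀ hR
  have hL0 : 0 < L := by linarith
  set w0 := 1000 * R ^ 4 / L with hw0
  have hw00 : 0 < w0 := by positivity
  have hw01 : w0 ≤ 1 := by rw [hw0, div_le_one hL0]; exact hL
  have hLw : L / 2 * w0 = 500 * R ^ 4 := by rw [hw0]; field_simp; norm_num
  set l := w0 ^ ((s - 1) / 2) with hl
  have hl0 : 0 < l := Real.rpow_pos_of_pos hw00 _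
  have hl2 : w0 ^ (s - 1) = l * l := by
    rw [hl, ← Real.rpow_add hw00]; congr 1; ring
  have one : ∀ j ≤ k, ∑ x ∈ X, ν x * wt Y μ (fun y => L / 2 * sc j <
      wt Y μ (fun p => |crs (p - x) (y - x)| ≤ sc j)) ≤ 100 * R * C * ((k : ℝ) + 2) * l := by
    intro j hj
    rcases le_or_gt (sc j) w0 with hc | hc
    · have h1 := radial (Λ := L / 2) (w := sc j) (w0 := w0) hν hμ tX tY hR (sc_pos j) (sc_le_one j)
        hc hLw hl0 hX hY hsep (fun x _ => energy_one hν tX hC hs1 hs2 (sc_anti hj) bX x)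
        (fun x _ => energy_two hμ tY hC hs1 hs2 (sc_anti hj) hc hw01 bY x) (by positivity)
        (by positivity)
      refine h1.trans ?_
      have e : l * (4 * C * ((k : ℝ) + 2)) + 1 / l * (8 * C * w0 ^ (s - 1) * ((k : ℝ) + 2)) =
          12 * C * ((k : ℝ) + 2) * l := by
        rw [hl2]; field_simp; ring
      rw [e]
      have hpi := Real.pi_lt_four
      have hnn : 0 ≤ R * C * ((k : ℝ) + 2) * l := by positivity
      calc _ = (24 * Real.pi) * (R * C * ((k : ℝ) + 2) * l) := by ring
        _ ≤ 100 * (R * C * ((k : ℝ) + 2) * l) := by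
            gcongr; linarith
        _ = _ := by ring
    · have h0 : ∀ x ∈ X, ν x * wt Y μ (fun y => L / 2 * sc j <
        wt Y μ (fun p => |crs (p - x) (y - x)| ≤ sc j)) = 0 := by
        intro x _
        rw [wt_eq_zero, mul_zero]
        intro y _ h
        have h1 := wt_le_total (X := Y) hμ (fun p => |crs (p - x) (y - x)| ≤ sc j)
        have h2 : L / 2 * w0 ≤ L / 2 * sc j := by gcongr
        linarith
      rw [sum_eq_zero h0]
      positivity
  calc _ ≤ ∑ x ∈ X, ν x * ∑ j ∈ range (k + 1), wt Y μ (fun y => L / 2 * sc j <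
          wt Y μ (fun p => |crs (p - x) (y - x)| ≤ sc j)) := by
        refine sum_le_sum fun x _ => mul_le_mul_of_nonneg_left ?_ (hν x)
        refine wt_le_sum hμ _ _ ?_
        rintro y _ ⟨w, hkw, hw⟩
        have h1 := wt_le_total (X := Y) hμ (fun p => |crs (p - x) (y - x)| ≤ w)
        have hw1 : w < 1 := by
          by_contra h
          push Not at h
          nlinarith
        have hwk := sc_pos k
        rcases dyadic_shell (ζ := w) 0 (by rw [sc_zero]; linarith) k (Nat.zero_le k) with
          h4 | ⟨j, -, hj, h5, h6⟩
        · have : w = sc k := le_antisymm h4 hkw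
          subst this
          exact ⟨k, by simp, lt_of_le_of_lt (by nlinarith) hw⟩
        · rcases j with _ | i
          · rw [sc_zero] at h5; linarith
          · refine ⟨i, by simp; omega, ?_⟩
            rw [← sc_succ] at h6
            have h7 := sc_succ i
            refine lt_of_lt_of_le (lt_of_le_of_lt ?_ hw) (wt_mono hμ fun p _ hp => hp.trans h6)
            rw [h7]
            nlinarith
    _ = ∑ j ∈ range (k + 1), ∑ x ∈ X, ν x * wt Y μ (fun y => L / 2 * sc j <
          wt Y μ (fun p => |crs (p - x) (y - x)| ≤ sc j)) := by
        simp only [mul_sum]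
        rw [sum_comm]
    _ ≤ ∑ j ∈ range (k + 1), 100 * R * C * ((k : ℝ) + 2) * l :=
        sum_le_sum fun j hj => one j (by simp at hj; omega)
    _ = ((k : ℝ) + 1) * (100 * R * C * ((k : ℝ) + 2) * l) := by
        rw [sum_const, card_range, nsmul_eq_mul]; push_cast; ring
    _ ≤ ((k : ℝ) + 2) * (100 * R * C * ((k : ℝ) + 2) * l) := by gcongr; linarith
    _ = _ := by ring

end

end PinnedDistance

/-! ### The discretised theorem -/

namespace PinnedDistance
open Finset MeasureTheory

/-- Polynomial losses in the scale index are absorbed by any exponential gain. -/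
lemma eventually_exp (A : ℝ) {a : ℝ} (ha : 0 < a) :
    ∀ᶠ k : ℕ in Filter.atTop, A * ((k : ℝ) + 2) ^ 2 ≤ (2 : ℝ) ^ (a * (k : ℝ)) := by
  have hr1 : (2 : ℝ) ^ (-a) < 1 := Real.rpow_lt_one_of_one_lt_of_neg (by norm_num) (by linarith)
  have hr0 : (0 : ℝ) < (2 : ℝ) ^ (-a) := Real.rpow_pos_of_pos (by norm_num) _
  have h1 := tendsto_pow_const_mul_const_pow_of_lt_one 2 hr0.le hr1
  have h2 : Filter.Tendsto (fun k : ℕ => (9 * |A|) * ((k : ℝ) ^ 2 * ((2 : ℝ) ^ (-a)) ^ k)) Filter.atTop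
      (nhds 0) := by simpa using h1.const_mul (9 * |A|)
  filter_upwards [h2.eventually (ge_mem_nhds one_pos), Filter.eventually_ge_atTop 1] with k hk hk1
  have hk1' : (1 : ℝ) ≤ k := by exact_mod_cast hk1
  have e : ((2 : ℝ) ^ (-a)) ^ k * (2 : ℝ) ^ (a * (k : ℝ)) = 1 := by
    rw [← Real.rpow_natCast, ← Real.rpow_mul (by norm_num), ← Real.rpow_add (by norm_num)]
    ring_nf; simp
  have hp : (0 : ℝ) < (2 : ℝ) ^ (a * (k : ℝ)) := Real.rpow_pos_of_pos (by norm_num) _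
  calc A * ((k : ℝ) + 2) ^ 2 ≤ |A| * (3 * (k : ℝ)) ^ 2 := by
        gcongr
        · exact le_abs_self A
        · linarith
    _ = 9 * |A| * (k : ℝ) ^ 2 * 1 := by ring
    _ = (9 * |A| * ((k : ℝ) ^ 2 * ((2 : ℝ) ^ (-a)) ^ k)) * (2 : ℝ) ^ (a * (k : ℝ)) := by
        rw [← e]; ring
    _ ≤ 1 * (2 : ℝ) ^ (a * (k : ℝ)) := by gcongr
    _ = _ := one_mul _

lemma sc_eq_rpow (k : ℕ) : sc k = (2 : ℝ) ^ (-(k : ℝ)) := by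
  rw [sc, Real.rpow_neg (by norm_num), Real.rpow_natCast, one_div, inv_pow]

/-- A Frostman condition implies the one with a smaller exponent, as the total mass is at most one. -/
lemma ball_weaken {X : Finset Pt} {ν : Pt → ℝ} (hν : ∀ x, 0 ≤ ν x) (tX : ∑ x ∈ X, ν x ≤ 1)
    {C s t η : ℝ} (hC : 1 ≤ C) (hη : 0 < η) (ht : t ≤ s) (ht0 : 0 ≤ t)
    (bX : ∀ p τ, η ≤ τ → wt X ν (fun x => ‖x - p‖ ≤ τ) ≤ C * τ ^ s) :
    ∀ p τ, η ≤ τ → wt X ν (fun x => ‖x - p‖ ≤ τ) ≤ C * τ ^ t := by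
  intro p τ hτ
  have hτ0 : 0 < τ := by linarith
  rcases le_total τ 1 with h | h
  · refine (bX p τ hτ).trans ?_
    exact mul_le_mul_of_nonneg_left (Real.rpow_le_rpow_of_exponent_ge hτ0 h ht) (by linarith)
  · refine (wt_le_total hν _).trans (tX.trans ?_)
    have := Real.one_le_rpow h ht0
    nlinarith

set_option maxHeartbeats 1000000 in
/-- The discretised theorem. Let `ν` and `μ` be separated finite measures, Frostman of exponents `t`
and `s` down to scale `2⁻ᵏ`. If every pin `x` sees its `G0`-partners at no more than `24 · 2 ^ (σ k)`
distances, up to `2⁻ᵏ`, then the mass of `G0` is below `c · 2 ^ (-ε k)` for large `k`. All losses are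
powers of `L = 2 ^ (a k)` with `a` small compared with `1 + s / 2 - 2 σ`; `Cfg.main` is applied with
`q = 2 ^ (-k / 2)` and `m = 2 ^ (-s k / 2)`. -/
theorem finite_main {s t σ R C c : ℝ} (hs1 : 1 < s) (hs2 : s ≤ 2) (ht1 : 1 < t)
    (hσ : σ < s / 4 + 1 / 2) (hR : 1 ≤ R) (hC : 1 ≤ C) (hc : 0 < c) :
    ∃ ε > 0, ∀ᶠ k : ℕ in Filter.atTop, ∀ (X Y : Finset Pt) (ν μ : Pt → ℝ) (G0 : Pt → Pt → Prop),
      (∀ x, 0 ≤ ν x) → (∀ x, 0 ≤ μ x) → ∑ x ∈ X, ν x ≤ 1 → ∑ y ∈ Y, μ y ≤ 1 →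
      (∀ y ∈ X, ‖y‖ ≤ R) → (∀ y ∈ Y, ‖y‖ ≤ R) → (∀ x ∈ X, ∀ y ∈ Y, 1 ≤ R * ‖y - x‖) →
      (∀ p τ, sc k ≤ τ → wt X ν (fun x => ‖x - p‖ ≤ τ) ≤ C * τ ^ t) →
      (∀ p τ, sc k ≤ τ → wt Y μ (fun x => ‖x - p‖ ≤ τ) ≤ C * τ ^ s) →
      (∀ x ∈ X, ∃ I : Finset ℤ, (I.card : ℝ) ≤ 24 * (2 : ℝ) ^ (σ * (k : ℝ)) ∧
        ∀ y ∈ Y, G0 x y → ⌊‖x - y‖ / sc k⌋ ∈ I) →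
      c * (2 : ℝ) ^ (-ε * (k : ℝ)) ≤ ∑ x ∈ X, ν x * wt Y μ (G0 x) → False := by
  classical
  set δ := 1 + s / 2 - 2 * σ with hδ
  have hδ0 : 0 < δ := by linarith
  set u := min s t with hu
  have hu1 : 1 < u := lt_min hs1 ht1
  have hus : u ≤ s := min_le_left _ _
  have hut : u ≤ t := min_le_right _ _
  set γ := u - 1 with hγ
  have hγ0 : 0 < γ := by linarith
  have hγ1 : γ ≤ 1 := by linarith
  set a := min (1 / 8) (δ / 304) with ha
  have ha0 : 0 < a := lt_min (by norm_num) (by positivity)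
  have ha8 : a ≤ 1 / 8 := min_le_left _ _
  have haδ : a ≤ δ / 304 := min_le_right _ _
  set ε := a * γ / 8 with hε
  have hε0 : 0 < ε := by positivity
  have hεa : ε ≤ a / 8 := by rw [hε]; nlinarith
  set Q := (1000 * R ^ 4) ^ (γ / 2) with hQ
  have hR4 : 1 ≤ R ^ 4 := one_le_pow₀ hR
  have hQ0 : 0 < Q := Real.rpow_pos_of_pos (by positivity) _
  refine ⟨ε, hε0, ?_⟩
  filter_upwards [eventually_exp (100 + 4 * C + 1000 * R ^ 4) ha0,
    eventually_exp (400 * R * C * Q / c) (by linarith : 0 < 3 * ε),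
    eventually_exp (2 / c) (by linarith : 0 < a - ε),
    eventually_exp 576 (by linarith : 0 < δ / 2)] with k f1 f2 f3 f4
  intro X Y ν μ G0 hν hμ tX tY hX hY hsep bX bY hI hmass
  set P : ℝ → ℝ := fun x => (2 : ℝ) ^ (x * (k : ℝ)) with hP
  have P0 : ∀ x, 0 < P x := fun x => Real.rpow_pos_of_pos (by norm_num) _
  have Padd : ∀ x y, P (x + y) = P x * P y := fun x y => by
    simp only [hP]; rw [← Real.rpow_add (by norm_num)]; ring_nf
  have Ppow : ∀ x y, P x ^ y = P (x * y) := fun x y => by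
    simp only [hP]; rw [← Real.rpow_mul (by norm_num)]; ring_nf
  have Pmono : ∀ x y, x ≤ y → P x ≤ P y := fun x y h => by
    simp only [hP]
    exact Real.rpow_le_rpow_of_exponent_le (by norm_num) (by gcongr)
  have Pz : P 0 = 1 := by simp [hP]
  have hPk : sc k = P (-1) := by rw [sc_eq_rpow]; simp [hP]
  have hk2 : (1 : ℝ) ≤ ((k : ℝ) + 2) ^ 2 := by nlinarith [(k.cast_nonneg : (0 : ℝ) ≤ k)]
  have hk3 : (k : ℝ) + 1 ≤ ((k : ℝ) + 2) ^ 2 := by nlinarith [(k.cast_nonneg : (0 : ℝ) ≤ k)]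
  set L := P a with hL
  have hL0 : 0 < L := P0 a
  change _ ≤ L at f1
  change _ ≤ P (3 * ε) at f2
  change _ ≤ P (a - ε) at f3
  change _ ≤ P (δ / 2) at f4
  change c * P (-ε) ≤ _ at hmass
  have fL : 100 + 4 * C + 1000 * R ^ 4 ≤ L :=
    le_trans (le_mul_of_one_le_right (by positivity) hk2) f1
  have hLR : 1000 * R ^ 4 ≤ L := by linarith
  have hRL : R ≤ L := by
    have : R ≤ R ^ 4 := le_self_pow₀ hR (by norm_num)
    linarith
  have hkL : (k : ℝ) + 1 ≤ L := by
    refine le_trans (hk3.trans (le_mul_of_one_le_left (by positivity) ?_)) f1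
    linarith
  -- the mass of pairs spanning heavy tubes
  set W := 100 * R * C * ((k : ℝ) + 2) ^ 2 * (1000 * R ^ 4 / L) ^ ((u - 1) / 2) with hW
  have bXu := ball_weaken hν tX hC (sc_pos k) hut (by linarith) bX
  have bYu := ball_weaken hμ tY hC (sc_pos k) hus (by linarith) bY
  have hsep' : ∀ y ∈ Y, ∀ x ∈ X, 1 ≤ R * ‖x - y‖ := fun y hy x hx => by
    rw [norm_sub_rev]; exact hsep x hx y hy
  have T1 := heavy_tubes hν hμ tX tY hC hu1.le (by linarith) hR hLR hX hY hsep bXu bYu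
  have T2 := heavy_tubes hμ hν tY tX hC hu1.le (by linarith) hR hLR hY hX hsep' bYu bXu
  rw [← hW] at T1 T2
  have hWle : 2 * W ≤ c / 2 * P (-ε) := by
    have e1 : (1000 * R ^ 4 / L) ^ ((u - 1) / 2) = Q * P (-(4 * ε)) := by
      rw [Real.div_rpow (by positivity) hL0.le, hL, Ppow, div_eq_mul_inv]
      congr 1
      refine inv_eq_of_mul_eq_one_right ?_
      have e0 : a * ((u - 1) / 2) + -(4 * ε) = 0 := by rw [hε, hγ]; ring
      rw [← Padd, e0, Pz]
    have e2 : P (-ε) = P (3 * ε) * P (-(4 * ε)) := by rw [← Padd]; congr 1; ring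
    rw [hW, e1, e2]
    have f2' : 400 * R * C * Q * ((k : ℝ) + 2) ^ 2 ≤ c * P (3 * ε) := by
      rw [div_mul_eq_mul_div, div_le_iff₀ hc] at f2
      linarith
    have h5 := mul_le_mul_of_nonneg_right f2' (P0 (-(4 * ε))).le
    linarith
  set bad1 : Pt → Pt → Prop := fun x y => ∃ w, sc k ≤ w ∧
      L * w < wt Y μ (fun p => |crs (p - x) (y - x)| ≤ w) with hb1
  set bad2 : Pt → Pt → Prop := fun x y => ∃ w, sc k ≤ w ∧
      L * w < wt X ν (fun p => |crs (p - x) (y - x)| ≤ w) with hb2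
  have hcr : ∀ p x y : Pt, |crs (p - x) (y - x)| = |crs (p - y) (x - y)| := by
    intro p x y
    rw [← abs_neg]
    congr 1
    simp only [crs, PiLp.sub_apply]; ring
  have T2' : ∑ x ∈ X, ν x * wt Y μ (bad2 x) ≤ W := by
    refine le_trans (le_of_eq ?_) T2
    simp only [wt, mul_sum]
    rw [sum_comm]
    refine sum_congr rfl fun y _ => sum_congr rfl fun x _ => ?_
    have : bad2 x y ↔ ∃ w, sc k ≤ w ∧ L * w < wt X ν (fun p => |crs (p - y) (x - y)| ≤ w) := by
      simp only [hb2, hcr _ x y]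
    simp only [← wt.eq_1]
    by_cases hb : bad2 x y
    · rw [if_pos hb, if_pos (this.1 hb)]; ring
    · rw [if_neg hb, if_neg fun h => hb (this.2 h)]; ring
  set G : Pt → Pt → Prop := fun x y => G0 x y ∧ ¬ bad1 x y ∧ ¬ bad2 x y with hG
  have hGm : ∑ x ∈ X, ν x * wt Y μ (G0 x) ≤ ∑ x ∈ X, ν x * wt Y μ (G x) + W + W := by
    calc _ ≤ ∑ x ∈ X, (ν x * wt Y μ (G x) + ν x * wt Y μ (bad1 x) + ν x * wt Y μ (bad2 x)) := by
          refine sum_le_sum fun x _ => ?_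
          rw [← mul_add, ← mul_add]
          refine mul_le_mul_of_nonneg_left ?_ (hν x)
          have h1 := wt_or (X := Y) hμ (p := G0 x) (r := fun y => G0 x y ∧ ¬ bad2 x y)
            (t := bad2 x) (fun y _ h => by by_cases hb : bad2 x y <;> simp [hb, h])
          have h2 := wt_or (X := Y) hμ (p := fun y => G0 x y ∧ ¬ bad2 x y) (r := G x)
            (t := bad1 x) (fun y _ h => by
              by_cases hb : bad1 x y
              · exact Or.inr hb
              · exact Or.inl ⟨h.1, hb, h.2⟩)
          linarith
      _ = _ := by rw [sum_add_distrib, sum_add_distrib]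
      _ ≤ _ := by gcongr
  have hGL : 1 / L ≤ ∑ x ∈ X, ν x * wt Y μ (G x) := by
    have h1 : 1 / L ≤ c / 2 * P (-ε) := by
      have e : P (-ε) = P (a - ε) * (1 / L) := by
        rw [mul_one_div, eq_div_iff hL0.ne', hL, ← Padd]; congr 1; ring
      rw [e]
      have f3' : 2 ≤ c * P (a - ε) := by
        have : 2 / c ≤ P (a - ε) := le_trans (le_mul_of_one_le_right (by positivity) hk2) f3
        rw [div_le_iff₀ hc] at this
        linarith
      have : 0 < 1 / L := by positivity
      nlinarith
    linarith
  -- the combinatorial configuration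
  set q := P (-(1 / 2)) with hq
  have hq0 : 0 < q := P0 _
  set m := P (-(s / 2)) with hm
  have hqs : q ^ s = m := by rw [hq, Ppow, hm]; congr 1; ring
  have hq2 : q ^ 2 = sc k := by rw [hq, hPk, sq, ← Padd]; congr 1; ring
  have cfg : Cfg X Y ν μ k L q m G := by
    constructor
    · exact hν
    · exact hμ
    · exact fun x hx => (hX x hx).trans hRL
    · exact fun x hx => (hY x hx).trans hRL
    · exact tX
    · exact tY
    · linarith
    · exact hkL
    · exact hq0
    · exact hq2
    · exact P0 _
    · exact Pmono _ _ (by linarith)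
    · rw [← Real.rpow_natCast, hL, Ppow, hPk, ← Padd, ← Pz]
      refine Pmono _ _ ?_
      push_cast; linarith
    · intro p τ hτ
      have := ball_weaken hν tX hC (sc_pos k) ht1.le (by linarith) bX p τ hτ
      rw [Real.rpow_one] at this
      have hτ0 := (sc_pos k).trans_le hτ
      refine this.trans ?_
      gcongr
      linarith
    · intro p ρ h1 h2
      have hk0 := sc_pos k
      have hρ0 : 0 < ρ := by linarith
      have h3 := bY p (2 * ρ) (by linarith)
      have h4 : (2 * ρ) ^ s ≤ 4 * ρ ^ s := by
        rw [Real.mul_rpow (by norm_num) hρ0.le]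
        gcongr
        calc (2 : ℝ) ^ s ≤ (2 : ℝ) ^ (2 : ℝ) := Real.rpow_le_rpow_of_exponent_le (by norm_num) hs2
          _ = 4 := by norm_num
      have h5 : ρ ^ s = ρ * ρ ^ (s - 1) := by
        rw [← Real.rpow_one_add' hρ0.le (by linarith)]; ring_nf
      have h6 : q ^ s = q * q ^ (s - 1) := by
        rw [← Real.rpow_one_add' hq0.le (by linarith)]; ring_nf
      have h7 : ρ ^ (s - 1) ≤ q ^ (s - 1) := Real.rpow_le_rpow hρ0.le h2 (by linarith)
      have h8 : 0 < q ^ (s - 1) := Real.rpow_pos_of_pos hq0 _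
      calc _ ≤ C * (4 * (ρ * ρ ^ (s - 1))) * (sc k / ρ) := by
            gcongr
            refine h3.trans ?_
            rw [← h5]
            gcongr
        _ = 4 * C * ρ ^ (s - 1) * sc k := by field_simp
        _ ≤ 4 * C * q ^ (s - 1) * sc k := by gcongr
        _ = 4 * C * (q ^ s * q) := by rw [h6, ← hq2]; ring
        _ ≤ L * (q ^ s * q) := by
            have := Real.rpow_pos_of_pos hq0 s
            gcongr
            linarith
        _ = _ := by rw [hqs]; ring
    · intro x _ y _ hg w hw
      by_contra h
      exact hg.2.2 ⟨w, hw, not_le.1 h⟩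
    · intro x _ y _ hg w hw
      by_contra h
      exact hg.2.1 ⟨w, hw, not_le.1 h⟩
  have hN : ∀ x ∈ X, (((Y.filter (G x)).image (fun y => ⌊‖x - y‖ / sc k⌋)).card : ℝ) ≤ 24 * P σ := by
    intro x hx
    obtain ⟨I, hI1, hI2⟩ := hI x hx
    refine le_trans ?_ hI1
    norm_cast
    refine card_le_card fun i hi => ?_
    obtain ⟨y, hy, rfl⟩ := mem_image.1 hi
    obtain ⟨hyY, hyG⟩ := mem_filter.1 hy
    exact hI2 y hyY hyG.1
  have fin := cfg.main hGL (N := 24 * P σ) (fun x hx => by convert hN x hx)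
  have e : (24 * P σ) ^ 2 * q ^ 2 * m * L ^ 152 = 576 * P (152 * a - δ) := by
    have e1 : L ^ 152 = P (152 * a) := by
      rw [← Real.rpow_natCast, hL, Ppow]; congr 1; push_cast; ring
    have e2 : P (152 * a - δ) = P σ * P σ * (q * q) * m * P (152 * a) := by
      rw [hq, hm, ← Padd, ← Padd, ← Padd, ← Padd, ← Padd]; congr 1; rw [hδ]; ring
    rw [e1, e2]; ring
  rw [e] at fin
  have e3 : P (152 * a - δ) * P (δ / 2) ≤ 1 := by
    rw [← Padd, ← Pz]; exact Pmono _ _ (by linarith)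
  have h4 : 576 * 4 ≤ P (δ / 2) := by
    have : (4 : ℝ) ≤ ((k : ℝ) + 2) ^ 2 := by nlinarith [(k.cast_nonneg : (0 : ℝ) ≤ k)]
    linarith
  have := P0 (152 * a - δ)
  nlinarith

end PinnedDistance

/-! ### Dyadic Hausdorff content -/

namespace PinnedDistance
open Finset MeasureTheory
open scoped ENNReal

/-- The label of the dyadic square of side `2⁻ʲ` containing `p`: its level and its grid index. -/
noncomputable def lab (j : ℕ) (p : Pt) : ℕ × ℤ × ℤ := (j, cell (sc j) p)

/-- The dyadic grids are nested. -/
lemma cell_coarse {j k : ℕ} (hjk : j ≤ k) {p q : Pt} (h : cell (sc k) p = cell (sc k) q) :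
    cell (sc j) p = cell (sc j) q := by
  induction k, hjk using Nat.le_induction with
  | base => exact h
  | succ k hk ih =>
    apply ih
    have hs : sc k = 2 * sc (k + 1) := sc_succ k
    have hp := sc_pos (k + 1)
    have key : ∀ a : ℝ, ⌊a / sc k⌋ = ⌊a / sc (k + 1)⌋ / 2 := by
      intro a
      have : a / sc k = (a / sc (k + 1)) / (2 : ℕ) := by
        rw [hs]; push_cast; field_simp
      rw [this, Int.floor_div_natCast]; rfl
    simp only [cell, Prod.mk.injEq, key] at h ⊢
    exact ⟨by rw [h.1], by rw [h.2]⟩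

/-- The weight `2 ^ (-j s)` of a dyadic square of level `j`. -/
noncomputable def wgt (s : ℝ) (d : ℕ × ℤ × ℤ) : ℝ≥0∞ := ENNReal.ofReal (sc d.1 ^ s)

/-- Total weight of a family of dyadic squares. -/
noncomputable def wsum (s : ℝ) (S : Set (ℕ × ℤ × ℤ)) : ℝ≥0∞ := ∑' d, S.indicator (wgt s) d

/-- The family `S` of dyadic squares covers `A`. -/
def Cov (S : Set (ℕ × ℤ × ℤ)) (A : Set Pt) : Prop := ∀ p ∈ A, ∃ j, lab j p ∈ S

/-- The dyadic Hausdorff content of dimension `s`, with covers by squares of side at most one. -/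
noncomputable def content (s : ℝ) (A : Set Pt) : ℝ≥0∞ :=
  ⨅ (S : Set (ℕ × ℤ × ℤ)) (_ : Cov S A), wsum s S

lemma content_le {s : ℝ} {A : Set Pt} {S : Set (ℕ × ℤ × ℤ)} (h : Cov S A) :
    content s A ≤ wsum s S := iInf₂_le S h

lemma content_mono (s : ℝ) {A B : Set Pt} (h : A ⊆ B) : content s A ≤ content s B :=
  le_iInf₂ fun _ hS => content_le fun p hp => hS p (h hp)

lemma wsum_mono (s : ℝ) {S T : Set (ℕ × ℤ × ℤ)} (h : S ⊆ T) : wsum s S ≤ wsum s T :=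
  ENNReal.tsum_le_tsum fun d => Set.indicator_le_indicator_of_subset h (fun _ => zero_le) d

lemma exists_cov {s : ℝ} {A : Set Pt} {c : ℝ≥0∞} (h : content s A < c) :
    ∃ S, Cov S A ∧ wsum s S < c := by
  simpa [content, iInf_lt_iff] using h

lemma wsum_iUnion {ι : Type*} [Countable ι] (s : ℝ) (S : ι → Set (ℕ × ℤ × ℤ)) :
    wsum s (⋃ i, S i) ≤ ∑' i, wsum s (S i) := by
  unfold wsum
  rw [ENNReal.tsum_comm]
  refine ENNReal.tsum_le_tsum fun d => ?_
  by_cases hd : d ∈ ⋃ i, S i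
  · obtain ⟨i, hi⟩ := Set.mem_iUnion.1 hd
    rw [Set.indicator_of_mem hd]
    calc wgt s d = (S i).indicator (wgt s) d := (Set.indicator_of_mem hi _).symm
      _ ≤ _ := ENNReal.le_tsum i
  · rw [Set.indicator_of_notMem hd]; exact zero_le

lemma content_iUnion {ι : Type*} [Countable ι] (s : ℝ) (A : ι → Set Pt) :
    content s (⋃ i, A i) ≤ ∑' i, content s (A i) := by
  refine ENNReal.le_of_forall_pos_le_add fun ε hε hfin => ?_
  obtain ⟨ε', hε', hsum⟩ := ENNReal.exists_pos_sum_of_countable (ε := (ε : ℝ≥0∞))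
    (by simpa using hε.ne') ι
  have hlt : ∀ i, content s (A i) < content s (A i) + ε' i := fun i =>
    ENNReal.lt_add_right (ne_top_of_le_ne_top hfin.ne (ENNReal.le_tsum i))
      (by simpa using (hε' i).ne')
  choose S hS hSlt using fun i => exists_cov (hlt i)
  calc content s (⋃ i, A i) ≤ wsum s (⋃ i, S i) := content_le (by
        intro p hp
        obtain ⟨i, hi⟩ := Set.mem_iUnion.1 hp
        obtain ⟨j, hj⟩ := hS i p hi
        exact ⟨j, Set.mem_iUnion.2 ⟨i, hj⟩⟩)
    _ ≤ ∑' i, wsum s (S i) := wsum_iUnion s S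
    _ ≤ ∑' i, (content s (A i) + ε' i) := ENNReal.tsum_le_tsum fun i => (hSlt i).le
    _ = ∑' i, content s (A i) + ∑' i, (ε' i : ℝ≥0∞) := ENNReal.tsum_add
    _ ≤ _ := by gcongr

lemma content_empty (s : ℝ) : content s ∅ = 0 := by
  refine le_antisymm ((content_le (S := ∅) (by intro p hp; simp at hp)).trans ?_) zero_le
  simp [wsum]

lemma content_union (s : ℝ) (A B : Set Pt) :
    content s (A ∪ B) ≤ content s A + content s B := by
  rw [Set.union_eq_iUnion]
  refine (content_iUnion s _).trans ?_
  rw [tsum_fintype]; simp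

lemma content_biUnion {ι : Type*} (s : ℝ) (I : Finset ι) (A : ι → Set Pt) :
    content s (⋃ i ∈ I, A i) ≤ ∑ i ∈ I, content s (A i) := by
  classical
  induction I using Finset.induction_on with
  | empty => simp [content_empty]
  | insert a I ha ih =>
    rw [Finset.set_biUnion_insert, Finset.sum_insert ha]
    exact (content_union s _ _).trans (by gcongr)

lemma content_sq_le (s : ℝ) {A : Set Pt} (j : ℕ) (a : ℤ × ℤ) (h : ∀ p ∈ A, cell (sc j) p = a) :
    content s A ≤ ENNReal.ofReal (sc j ^ s) := by
  refine (content_le (S := {(j, a)}) fun p hp => ⟨j, by simp [lab, h p hp]⟩).trans ?_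
  unfold wsum
  rw [tsum_eq_single (j, a)]
  · simp [wgt]
  · intro d hd; simp [hd]

lemma exists_least {P : ℕ → Prop} (h : ∃ n, P n) : ∃ n, P n ∧ ∀ m, P m → n ≤ m := by
  classical
  exact ⟨Nat.find h, Nat.find_spec h, fun m hm => Nat.find_min' h hm⟩

/-! ### Continuity of the content along increasing sequences -/

/-- The squares of `V` not strictly contained in another square of `V`. -/
def maxl (V : Set (ℕ × ℤ × ℤ)) : Set (ℕ × ℤ × ℤ) :=
  {d ∈ V | ∀ p, lab d.1 p = d → ∀ j < d.1, lab j p ∉ V}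

lemma maxl_find {V : Set (ℕ × ℤ × ℤ)} {p : Pt} {j : ℕ} (h : lab j p ∈ V)
    (hmin : ∀ i < j, lab i p ∉ V) : lab j p ∈ maxl V := by
  refine ⟨h, fun q hq i hi hV => hmin i hi ?_⟩
  have : cell (sc i) q = cell (sc i) p := cell_coarse (k := j) (le_of_lt hi) (by
    simpa [lab] using hq)
  simpa [lab, this] using hV

/-- Submodularity of the covering weight: keeping only the maximal squares of two covers of `A`, what
is discarded (or counted twice) still covers `A`, so it has weight at least `content s A`. -/
lemma wsum_merge {s : ℝ} {A : Set Pt} {W S : Set (ℕ × ℤ × ℤ)} (hW : Cov W A) (hS : Cov S A) :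
    wsum s (maxl (W ∪ S)) + content s A ≤ wsum s W + wsum s S := by
  have hR : Cov ((W ∩ S) ∪ ((W ∪ S) \ maxl (W ∪ S))) A := by
    intro p hp
    obtain ⟨j, hj⟩ := hW p hp
    obtain ⟨i, hi⟩ := hS p hp
    rcases lt_trichotomy i j with h | rfl | h
    · exact ⟨j, Or.inr ⟨Or.inl hj, fun hm => hm.2 p rfl i h (Or.inr hi)⟩⟩
    · exact ⟨i, Or.inl ⟨hj, hi⟩⟩
    · exact ⟨i, Or.inr ⟨Or.inr hi, fun hm => hm.2 p rfl j h (Or.inl hj)⟩⟩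
  calc _ ≤ wsum s (maxl (W ∪ S)) + wsum s ((W ∩ S) ∪ ((W ∪ S) \ maxl (W ∪ S))) := by
        gcongr; exact content_le hR
    _ ≤ wsum s W + wsum s S := by
        unfold wsum
        rw [← ENNReal.tsum_add, ← ENNReal.tsum_add]
        refine ENNReal.tsum_le_tsum fun d => ?_
        have hsub : d ∈ maxl (W ∪ S) → d ∈ W ∪ S := fun h => h.1
        by_cases h1 : d ∈ W <;> by_cases h2 : d ∈ S <;> by_cases h3 : d ∈ maxl (W ∪ S) <;>
          simp_all [Set.indicator]

/-- The dyadic content is continuous along arbitrary increasing sequences of sets. Almost optimal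
covers are merged successively by `wsum_merge`; for every point the square that covers it can only
grow, so it stabilises, and the stable squares cover the union. -/
theorem content_iUnion_mono (s : ℝ) {A : ℕ → Set Pt} (hA : Monotone A) :
    content s (⋃ n, A n) ≤ ⨆ n, content s (A n) := by
  refine ENNReal.le_of_forall_pos_le_add fun ε hε hfin => ?_
  have hf : ∀ n, content s (A n) ≠ ∞ := fun n =>
    ne_top_of_le_ne_top hfin.ne (le_iSup (fun n => content s (A n)) n)
  obtain ⟨ε', hε', hsum⟩ := ENNReal.exists_pos_sum_of_countable (ε := (ε : ℝ≥0∞))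
    (by simpa using hε.ne') ℕ
  have hlt : ∀ i, content s (A i) < content s (A i) + ε' i := fun i =>
    ENNReal.lt_add_right (hf i) (by simpa using (hε' i).ne')
  choose S hS hSlt using fun i => exists_cov (hlt i)
  let W : ℕ → Set (ℕ × ℤ × ℤ) := fun n => Nat.rec (S 0) (fun n V => maxl (V ∪ S (n + 1))) n
  have hWs : ∀ n, W (n + 1) = maxl (W n ∪ S (n + 1)) := fun n => rfl
  have hcovU : ∀ {V : Set (ℕ × ℤ × ℤ)} {p : Pt} {j : ℕ}, lab j p ∈ V →
      ∃ i ≤ j, lab i p ∈ maxl V := by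
    classical
    intro V p j h
    have hex : ∃ j, lab j p ∈ V := ⟨j, h⟩
    exact ⟨Nat.find hex, Nat.find_min' hex h, maxl_find (Nat.find_spec hex)
      fun i hi => Nat.find_min hex hi⟩
  have hWcov : ∀ n, Cov (W n) (A n) := by
    intro n
    cases n with
    | zero => exact hS 0
    | succ n =>
      intro p hp
      obtain ⟨j, hj⟩ := hS (n + 1) p hp
      obtain ⟨i, _, hi⟩ := hcovU (V := W n ∪ S (n + 1)) (Or.inr hj)
      exact ⟨i, hi⟩
  have hWsum : ∀ n, wsum s (W n) ≤ content s (A n) + ∑ i ∈ range (n + 1), (ε' i : ℝ≥0∞) := by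
    intro n
    induction n with
    | zero => rw [zero_add, sum_range_one]; exact (hSlt 0).le
    | succ n ih =>
      have h1 := wsum_merge (s := s) (hWcov n)
        (fun p hp => hS (n + 1) p (hA (Nat.le_succ n) hp))
      rw [← hWs] at h1
      refine (ENNReal.add_le_add_iff_right (hf n)).1 (h1.trans ?_)
      calc _ ≤ (content s (A n) + ∑ i ∈ range (n + 1), (ε' i : ℝ≥0∞)) +
            (content s (A (n + 1)) + ε' (n + 1)) := by gcongr; exact (hSlt _).le
        _ = _ := by rw [sum_range_succ _ (n + 1)]; ring
  have hWsum' : ∀ n, wsum s (W n) ≤ (⨆ n, content s (A n)) + ε := fun n =>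
    (hWsum n).trans (add_le_add (le_iSup (fun n => content s (A n)) n)
      ((ENNReal.sum_le_tsum _).trans hsum.le))
  let L : Set (ℕ × ℤ × ℤ) := {d | ∃ n0, ∀ n ≥ n0, d ∈ W n}
  have hL : Cov L (⋃ n, A n) := by
    classical
    intro p hp
    obtain ⟨N, hN⟩ := Set.mem_iUnion.1 hp
    have hex : ∃ j, ∃ n ≥ N, lab j p ∈ W n := by
      obtain ⟨j, hj⟩ := hWcov N p hN
      exact ⟨j, N, le_rfl, hj⟩
    obtain ⟨l, ⟨n0, hn0, hm⟩, hmin⟩ := exists_least hex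
    refine ⟨l, n0, ?_⟩
    intro n hn
    induction n, hn using Nat.le_induction with
    | base => exact hm
    | succ n hn ih =>
      obtain ⟨i, hi, hi'⟩ := hcovU (V := W n ∪ S (n + 1)) (Or.inl ih)
      have : l ≤ i := hmin i ⟨n + 1, by omega, hi'⟩
      have e : i = l := le_antisymm hi this
      rw [← e]; exact hi'
  refine (content_le hL).trans ?_
  unfold wsum
  rw [ENNReal.tsum_eq_iSup_sum]
  refine iSup_le fun F => ?_
  classical
  have hF : ∃ n, ∀ d ∈ F, d ∈ L → d ∈ W n := by
    choose! g hg using fun (d : ℕ × ℤ × ℤ) (hd : d ∈ L) => hd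
    exact ⟨F.sup g, fun d hd hdL => hg d hdL _ (Finset.le_sup hd)⟩
  obtain ⟨n, hn⟩ := hF
  calc _ ≤ ∑ d ∈ F, (W n).indicator (wgt s) d := by
        refine sum_le_sum fun d hd => ?_
        by_cases h : d ∈ L
        · rw [Set.indicator_of_mem h, Set.indicator_of_mem (hn d hd h)]
        · rw [Set.indicator_of_notMem h]; exact zero_le
    _ ≤ wsum s (W n) := ENNReal.sum_le_tsum _
    _ ≤ _ := hWsum' n

end PinnedDistance

/-! ### Positive content and compact subsets of analytic sets -/

namespace PinnedDistance
open Finset MeasureTheory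
open scoped ENNReal NNReal

lemma tendsto_sc : Filter.Tendsto sc Filter.atTop (nhds 0) :=
  tendsto_pow_atTop_nhds_zero_of_lt_one (by norm_num) (by norm_num)

lemma ediam_sq_le {A : Set Pt} {j : ℕ} {a : ℤ × ℤ} (h : ∀ p ∈ A, cell (sc j) p = a) :
    Metric.ediam A ≤ ENNReal.ofReal (2 * sc j) := by
  refine Metric.ediam_le fun p hp q hq => ?_
  rw [edist_dist, dist_eq_norm]
  exact ENNReal.ofReal_le_ofReal (norm_sub_le_of_cell_eq (sc_pos j) ((h p hp).trans (h q hq).symm))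

/-- A cover of small weight consists of small squares, so null content forces null measure. -/
lemma hausdorffMeasure_zero_of_content {s : ℝ} (hs : 0 < s) {A : Set Pt} (h : content s A = 0) :
    μH[s] A = 0 := by
  have hex : ∀ n : ℕ, ∃ S, Cov S A ∧ wsum s S < ENNReal.ofReal (sc n ^ s) := fun n =>
    exists_cov (by rw [h]; exact ENNReal.ofReal_pos.2 (Real.rpow_pos_of_pos (sc_pos n) _))
  choose S hS hlt using hex
  have hlev : ∀ n, ∀ d ∈ S n, sc d.1 ≤ sc n := by
    intro n d hd
    have h1 : wgt s d < ENNReal.ofReal (sc n ^ s) := by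
      refine lt_of_le_of_lt ?_ (hlt n)
      calc wgt s d = (S n).indicator (wgt s) d := (Set.indicator_of_mem hd _).symm
        _ ≤ _ := ENNReal.le_tsum d
    have h2 : sc d.1 ^ s < sc n ^ s :=
      (ENNReal.ofReal_lt_ofReal_iff (Real.rpow_pos_of_pos (sc_pos n) _)).1 h1
    exact ((Real.rpow_lt_rpow_iff (sc_pos _).le (sc_pos _).le hs).1 h2).le
  have h0 : Filter.Tendsto (fun n => ENNReal.ofReal (2 * sc n)) Filter.atTop (nhds 0) := by
    have := ENNReal.tendsto_ofReal (tendsto_sc.const_mul 2)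
    simpa using this
  have h1 := Measure.hausdorffMeasure_le_liminf_tsum (ι := fun n => S n) s A _ h0
    (fun n (d : S n) => {p | lab d.1.1 p = d.1})
    (Filter.Eventually.of_forall fun n d => (ediam_sq_le (a := d.1.2) fun p hp => by
        have hp' : lab d.1.1 p = d.1 := hp
        rw [← hp']; rfl).trans
      (ENNReal.ofReal_le_ofReal (by linarith [hlev n d.1 d.2])))
    (Filter.Eventually.of_forall fun n p hp => by
      obtain ⟨j, hj⟩ := hS n p hp
      exact Set.mem_iUnion.2 ⟨⟨_, hj⟩, rfl⟩)
  have h2 : ∀ n, ∑' d : S n, Metric.ediam {p | lab d.1.1 p = d.1} ^ s ≤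
      ENNReal.ofReal (2 * sc n) ^ s := by
    intro n
    have e : ∀ x : ℝ, 0 ≤ x → ENNReal.ofReal (2 * x) ^ s = ENNReal.ofReal (2 ^ s) *
        ENNReal.ofReal (x ^ s) := by
      intro x hx
      rw [ENNReal.ofReal_rpow_of_nonneg (by positivity) hs.le, Real.mul_rpow (by norm_num) hx,
        ENNReal.ofReal_mul (by positivity)]
    calc _ ≤ ∑' d : S n, ENNReal.ofReal (2 ^ s) * wgt s d.1 := by
          refine ENNReal.tsum_le_tsum fun d => ?_
          rw [wgt, ← e _ (sc_pos _).le]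
          refine ENNReal.rpow_le_rpow (ediam_sq_le (a := d.1.2) fun p hp => ?_) hs.le
          have hp' : lab d.1.1 p = d.1 := hp
          rw [← hp']; rfl
      _ = ENNReal.ofReal (2 ^ s) * wsum s (S n) := by
          rw [ENNReal.tsum_mul_left, _root_.tsum_subtype]; rfl
      _ ≤ ENNReal.ofReal (2 ^ s) * ENNReal.ofReal (sc n ^ s) := by gcongr; exact (hlt n).le
      _ = _ := (e _ (sc_pos _).le).symm
  have h3 : Filter.Tendsto (fun n => ENNReal.ofReal (2 * sc n) ^ s) Filter.atTop (nhds 0) := by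
    have := (ENNReal.continuous_rpow_const (y := s)).continuousAt.tendsto.comp h0
    simpa [ENNReal.zero_rpow_of_pos hs, Function.comp_def] using this
  refine le_antisymm (h1.trans ?_) zero_le
  rw [← h3.liminf_eq]
  exact Filter.liminf_le_liminf (Filter.Eventually.of_forall h2)

/-- A set of dimension above `s` has positive `s`-dimensional content. -/
lemma content_pos_of_dimH {s : ℝ} (hs : 0 < s) {A : Set Pt} (h : ENNReal.ofReal s < dimH A) :
    0 < content s A := by
  refine pos_iff_ne_zero.2 fun h0 => ?_
  have h1 := hausdorffMeasure_zero_of_content hs h0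
  have h2 := hausdorffMeasure_of_lt_dimH (s := A) (d := s.toNNReal) h
  rw [Real.coe_toNNReal _ hs.le, h1] at h2
  exact absurd h2 (by simp)

/-- An open neighbourhood of a compact box in Baire space contains a box constrained in finitely
many coordinates only. -/
lemma box_subset_open {m : ℕ → ℕ} {O : Set (ℕ → ℕ)} (hO : IsOpen O)
    (h : {α : ℕ → ℕ | ∀ i, α i ≤ m i} ⊆ O) : ∃ n, {α : ℕ → ℕ | ∀ i < n, α i ≤ m i} ⊆ O := by
  have hK : IsCompact {α : ℕ → ℕ | ∀ i, α i ≤ m i} := by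
    have : {α : ℕ → ℕ | ∀ i, α i ≤ m i} = Set.univ.pi fun i => Set.Iic (m i) := by
      ext α; simp [Pi.le_def]
    rw [this]
    exact isCompact_univ_pi fun i => (Set.finite_Iic (m i)).isCompact
  have hcyl : ∀ α ∈ {α : ℕ → ℕ | ∀ i, α i ≤ m i}, ∃ n, PiNat.cylinder α n ⊆ O := by
    intro α hα
    obtain ⟨v, ⟨x, n, rfl⟩, hxv, hv⟩ :=
      (PiNat.isTopologicalBasis_cylinders (fun _ : ℕ => ℕ)).exists_subset_of_mem_open (h hα) hO
    exact ⟨n, by rwa [PiNat.mem_cylinder_iff_eq.1 hxv]⟩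
  choose! g hg using hcyl
  obtain ⟨F, hF, hcov⟩ := hK.elim_nhds_subcover (fun α => PiNat.cylinder α (g α))
    (fun α _ => (PiNat.isOpen_cylinder _ α (g α)).mem_nhds (PiNat.self_mem_cylinder _ _))
  refine ⟨F.sup g, fun α hα => ?_⟩
  have hβ : (fun i => min (α i) (m i)) ∈ {α : ℕ → ℕ | ∀ i, α i ≤ m i} := fun i => min_le_right _ _
  obtain ⟨γ, hγF, hγ⟩ := Set.mem_iUnion₂.1 (hcov hβ)
  refine hg γ (hF γ hγF) (PiNat.mem_cylinder_iff.2 fun i hi => ?_)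
  have h1 := PiNat.mem_cylinder_iff.1 hγ i hi
  have h2 : α i ≤ m i := hα i (lt_of_lt_of_le hi (Finset.le_sup hγF))
  rw [← h1]; exact (min_eq_left h2).symm

/-- Analytic sets of positive content contain compact sets of positive content. -/
theorem exists_compact_content {s : ℝ} {E : Set Pt} (hE : AnalyticSet E)
    (hpos : 0 < content s E) : ∃ K ⊆ E, IsCompact K ∧ 0 < content s K := by
  rw [AnalyticSet] at hE
  rcases hE with rfl | ⟨f, hf, rfl⟩
  · simp [content_empty] at hpos
  obtain ⟨c, hc0, hc⟩ := exists_between hpos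
  -- the coordinate bounds are chosen one at a time, keeping the content of the image above `c`
  have step : ∀ (n : ℕ) (m : ℕ → ℕ), c < content s (f '' {α | ∀ i < n, α i ≤ m i}) →
      ∃ k, c < content s (f '' {α | (∀ i < n, α i ≤ m i) ∧ α n ≤ k}) := by
    intro n m hm
    by_contra hcon
    push Not at hcon
    have hU : f '' {α | ∀ i < n, α i ≤ m i} =
        ⋃ k : ℕ, f '' {α | (∀ i < n, α i ≤ m i) ∧ α n ≤ k} := by
      rw [← Set.image_iUnion]
      congr 1
      ext α
      simp only [Set.mem_ofPred_eq, Set.mem_iUnion]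
      exact ⟨fun h => ⟨α n, h, le_rfl⟩, fun ⟨k, h, _⟩ => h⟩
    rw [hU] at hm
    have hmono : Monotone fun k : ℕ => f '' {α | (∀ i < n, α i ≤ m i) ∧ α n ≤ k} := by
      intro k l hkl
      exact Set.image_mono fun α hα => ⟨hα.1, hα.2.trans hkl⟩
    exact absurd (hm.trans_le (content_iUnion_mono s hmono)) (not_lt.2 (iSup_le hcon))
  choose! g hg using step
  let M : ℕ → ℕ → ℕ := fun n => Nat.rec (fun _ => 0) (fun n m => Function.update m n (g n m)) n
  have hMs : ∀ n, M (n + 1) = Function.update (M n) n (g n (M n)) := fun n => rfl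
  have hMc : ∀ n, c < content s (f '' {α | ∀ i < n, α i ≤ M n i}) := by
    intro n
    induction n with
    | zero => simpa [Set.image_univ] using hc
    | succ n ih =>
      refine (hg n (M n) ih).trans_le (content_mono s (Set.image_mono ?_))
      rintro α ⟨h1, h2⟩ i hi
      rw [hMs]
      rcases Nat.lt_succ_iff_lt_or_eq.1 hi with h | rfl
      · rw [Function.update_of_ne h.ne]; exact h1 i h
      · rw [Function.update_self]; exact h2
  have hMst : ∀ n i, i < n → M n i = M (i + 1) i := by
    intro n i hi
    induction n, hi using Nat.le_induction with
    | base => rfl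
    | succ n hn ih =>
      rw [hMs, Function.update_of_ne (by omega), ih]
  let m : ℕ → ℕ := fun i => M (i + 1) i
  have hmc : ∀ n, c < content s (f '' {α | ∀ i < n, α i ≤ m i}) := by
    intro n
    refine (hMc n).trans_le (content_mono s (Set.image_mono ?_))
    intro α hα i hi
    have := hα i hi
    rwa [hMst n i hi] at this
  refine ⟨f '' {α | ∀ i, α i ≤ m i}, Set.image_subset_range _ _, ?_, ?_⟩
  · have : {α : ℕ → ℕ | ∀ i, α i ≤ m i} = Set.univ.pi fun i => Set.Iic (m i) := by
      ext α; simp [Pi.le_def]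
    rw [this]
    exact (isCompact_univ_pi fun i => (Set.finite_Iic (m i)).isCompact).image hf
  -- a cover of the compact image, each square being enlarged to its 25 neighbours, covers
  -- an open neighbourhood, hence one of the sets of content above `c`
  have hcover : ∀ S, Cov S (f '' {α | ∀ i, α i ≤ m i}) → c ≤ 25 * wsum s S := by
    intro S hS
    let T : ℤ × ℤ → Set (ℕ × ℤ × ℤ) := fun b => {d | (d.1, d.2 + b) ∈ S}
    choose! l hl using hS
    let O : Set Pt := ⋃ p ∈ f '' {α | ∀ i, α i ≤ m i}, Metric.ball p (sc (l p))
    have hO : IsOpen O := isOpen_biUnion fun p _ => Metric.isOpen_ball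
    obtain ⟨n, hn⟩ := box_subset_open (m := m) (hO.preimage hf) (by
      intro α hα
      exact Set.mem_biUnion (Set.mem_image_of_mem f hα)
        (Metric.mem_ball_self (sc_pos _)))
    have hcov : Cov (⋃ b : nbr 2 0, T b) (f '' {α | ∀ i < n, α i ≤ m i}) := by
      rintro _ ⟨α, hα, rfl⟩
      obtain ⟨p, hp, hpb⟩ := Set.mem_iUnion₂.1 (hn hα)
      refine ⟨l p, Set.mem_iUnion.2 ⟨⟨cell (sc (l p)) p - cell (sc (l p)) (f α), ?_⟩, ?_⟩⟩
      · have h1 := cell_mem_nbr (sc_pos (l p)) (p := p) (r := f α) 1 (by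
          rw [← dist_eq_norm, dist_comm]; simpa using (Metric.mem_ball.1 hpb).le)
        simp only [nbr, Finset.mem_product, Finset.mem_Icc, Prod.fst_sub, Prod.snd_sub,
          Prod.fst_zero, Prod.snd_zero] at h1 ⊢
        push_cast at h1 ⊢
        constructor <;> constructor <;> linarith
      · show (_, _) ∈ S
        have := hl p hp
        simpa [lab] using this
    have hT : ∀ b, wsum s (T b) = wsum s S := by
      intro b
      unfold wsum
      rw [← (Equiv.prodCongr (Equiv.refl ℕ) (Equiv.addRight b)).tsum_eq (S.indicator _)]
      rfl
    calc c ≤ wsum s (⋃ b : nbr 2 0, T b) := (hmc n).le.trans (content_le hcov)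
      _ ≤ ∑' b : nbr 2 0, wsum s (T b) := wsum_iUnion s fun b : nbr 2 0 => T b
      _ = 25 * wsum s S := by
        simp only [hT]
        rw [tsum_fintype, Finset.sum_const, Finset.card_univ, Fintype.card_coe, card_nbr]
        norm_num
  have h25 : c / 25 ≤ content s (f '' {α | ∀ i, α i ≤ m i}) :=
    le_iInf₂ fun S hS => ENNReal.div_le_of_le_mul (by rw [mul_comm]; exact hcover S hS)
  exact (ENNReal.div_pos hc0.ne' (by norm_num)).trans_le h25

end PinnedDistance

/-! ### The finite Frostman lemma -/

namespace PinnedDistance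
open Finset MeasureTheory
open scoped ENNReal NNReal

lemma cell_half (j : ℕ) (p : Pt) :
    cell (sc j) p = ((cell (sc (j + 1)) p).1 / 2, (cell (sc (j + 1)) p).2 / 2) := by
  have hs : sc j = 2 * sc (j + 1) := sc_succ j
  have hp := sc_pos (j + 1)
  have key : ∀ a : ℝ, ⌊a / sc j⌋ = ⌊a / sc (j + 1)⌋ / 2 := by
    intro a
    have : a / sc j = (a / sc (j + 1)) / (2 : ℕ) := by
      rw [hs]; push_cast; field_simp
    rw [this, Int.floor_div_natCast]; rfl
  simp [cell, key]

/-- The four children of a dyadic square. -/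
noncomputable def children (a : ℤ × ℤ) : Finset (ℤ × ℤ) :=
  Finset.Icc (2 * a.1) (2 * a.1 + 1) ×ˢ Finset.Icc (2 * a.2) (2 * a.2 + 1)

lemma mem_children {a b : ℤ × ℤ} : b ∈ children a ↔ a = (b.1 / 2, b.2 / 2) := by
  rw [Prod.ext_iff]
  simp only [children, Finset.mem_product, Finset.mem_Icc]
  omega

/-- Finite Frostman lemma: the content of `A` inside a dyadic square of level `j` is carried by
finitely many weighted points satisfying the mass bound at the levels `j, …, j + m`. -/
lemma frostman_aux {s : ℝ} (A : Set Pt) (m : ℕ) : ∀ (j : ℕ) (a : ℤ × ℤ),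
    ∃ (X : Finset Pt) (ν : Pt → ℝ), (∀ x, 0 ≤ ν x) ∧ (∀ x ∈ X, x ∈ A ∧ cell (sc j) x = a) ∧
      (∀ i, j ≤ i → i ≤ j + m → ∀ b, wt X ν (fun x => cell (sc i) x = b) ≤ sc i ^ s) ∧
      content s (A ∩ {x | cell (sc j) x = a}) ≤ ENNReal.ofReal (∑ x ∈ X, ν x) := by
  classical
  induction m with
  | zero =>
    intro j a
    have hp : 0 ≤ sc j ^ s := Real.rpow_nonneg (sc_pos j).le _
    rcases (A ∩ {x | cell (sc j) x = a}).eq_empty_or_nonempty with h | ⟨p, hpA, hpa⟩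
    · refine ⟨∅, fun _ => 0, fun _ => le_rfl, by simp, fun i _ _ b => ?_, ?_⟩
      · rw [wt_eq_zero (by simp)]; exact Real.rpow_nonneg (sc_pos i).le _
      · rw [h, content_empty]; exact zero_le
    · refine ⟨{p}, fun _ => sc j ^ s, fun _ => hp, ?_, fun i hi hi' b => ?_, ?_⟩
      · intro x hx
        rw [Finset.mem_singleton.1 hx]; exact ⟨hpA, hpa⟩
      · obtain rfl : i = j := by omega
        refine (wt_le_total (fun _ => hp) _).trans ?_
        simp
      · rw [Finset.sum_singleton]
        exact content_sq_le s j a fun q hq => hq.2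
  | succ m ih =>
    intro j a
    choose X ν hν hX hb hc using fun b => ih (j + 1) b
    let Y : Finset Pt := (children a).biUnion X
    let μ : Pt → ℝ := fun x => ν (cell (sc (j + 1)) x) x
    have hμ : ∀ x, 0 ≤ μ x := fun x => hν _ x
    have hdisj : Set.PairwiseDisjoint (children a : Set (ℤ × ℤ)) X := by
      intro b _ b' _ hbb
      refine Finset.disjoint_left.2 fun x hx hx' => hbb ?_
      rw [← (hX b x hx).2, (hX b' x hx').2]
    have hY : ∀ x ∈ Y, x ∈ A ∧ cell (sc j) x = a := by
      intro x hx
      obtain ⟨b, hba, hxb⟩ := Finset.mem_biUnion.1 hx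
      refine ⟨(hX b x hxb).1, ?_⟩
      rw [cell_half, (hX b x hxb).2, ← mem_children.1 hba]
    have htot : content s (A ∩ {x | cell (sc j) x = a}) ≤ ENNReal.ofReal (∑ x ∈ Y, μ x) := by
      have h1 : A ∩ {x | cell (sc j) x = a} ⊆
          ⋃ b ∈ children a, A ∩ {x | cell (sc (j + 1)) x = b} := by
        rintro x ⟨hxA, hxa⟩
        refine Set.mem_biUnion (x := cell (sc (j + 1)) x) ?_ ⟨hxA, rfl⟩
        refine mem_children.2 ?_
        rw [← cell_half]; exact hxa.symm
      calc _ ≤ ∑ b ∈ children a, content s (A ∩ {x | cell (sc (j + 1)) x = b}) :=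
            (content_mono s h1).trans (content_biUnion s _ _)
        _ ≤ ∑ b ∈ children a, ENNReal.ofReal (∑ x ∈ X b, ν b x) := sum_le_sum fun b _ => hc b
        _ = ENNReal.ofReal (∑ b ∈ children a, ∑ x ∈ X b, ν b x) :=
            (ENNReal.ofReal_sum_of_nonneg fun b _ => sum_nonneg fun x _ => hν b x).symm
        _ = _ := by
            rw [Finset.sum_biUnion hdisj]
            congr 1
            refine sum_congr rfl fun b _ => sum_congr rfl fun x hx => ?_
            simp only [μ, (hX b x hx).2]
    have hfine : ∀ i, j + 1 ≤ i → i ≤ j + (m + 1) → ∀ b,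
        wt Y μ (fun x => cell (sc i) x = b) ≤ sc i ^ s := by
      intro i hi hi' b
      by_cases hex : ∃ x ∈ Y, cell (sc i) x = b
      · obtain ⟨x, hxY, hxb⟩ := hex
        obtain ⟨b', hb'a, hxb'⟩ := Finset.mem_biUnion.1 hxY
        refine le_trans ?_ (hb b' i hi (by omega) b)
        rw [wt_eq_filter, wt_eq_filter]
        have hin : ∀ y ∈ Y.filter (fun x => cell (sc i) x = b), cell (sc (j + 1)) y = b' := by
          intro y hy
          have h1 := (Finset.mem_filter.1 hy).2
          rw [← (hX b' x hxb').2]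
          exact cell_coarse hi (h1.trans hxb.symm)
        have hsub : Y.filter (fun x => cell (sc i) x = b) ⊆
            (X b').filter (fun x => cell (sc i) x = b) := by
          intro y hy
          have h1 := hin y hy
          obtain ⟨hyY, hyb⟩ := Finset.mem_filter.1 hy
          obtain ⟨b'', _, hyb''⟩ := Finset.mem_biUnion.1 hyY
          have : b'' = b' := by rw [← h1, (hX b'' y hyb'').2]
          rw [this] at hyb''
          exact Finset.mem_filter.2 ⟨hyb'', hyb⟩
        calc _ = ∑ y ∈ Y.filter (fun x => cell (sc i) x = b), ν b' y :=
              sum_congr rfl fun y hy => by simp only [μ, hin y hy]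
          _ ≤ _ := sum_le_sum_of_subset_of_nonneg hsub fun y _ _ => hν b' y
      · push Not at hex
        rw [wt_eq_zero hex]; exact Real.rpow_nonneg (sc_pos i).le _
    have hpj : 0 < sc j ^ s := Real.rpow_pos_of_pos (sc_pos j) _
    by_cases hT : ∑ x ∈ Y, μ x ≤ sc j ^ s
    · refine ⟨Y, μ, hμ, hY, fun i hi hi' b => ?_, htot⟩
      rcases hi.eq_or_lt with rfl | hi
      · exact (wt_le_total hμ _).trans hT
      · exact hfine i hi hi' b
    · push Not at hT
      have hT0 : 0 < ∑ x ∈ Y, μ x := hpj.trans hT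
      have hlam : 0 ≤ sc j ^ s / ∑ x ∈ Y, μ x := by positivity
      have hlam1 : sc j ^ s / ∑ x ∈ Y, μ x ≤ 1 := (div_le_one hT0).2 hT.le
      have hsum : ∑ x ∈ Y, sc j ^ s / (∑ x ∈ Y, μ x) * μ x = sc j ^ s := by
        rw [← Finset.mul_sum]; field_simp
      refine ⟨Y, fun x => sc j ^ s / (∑ x ∈ Y, μ x) * μ x, fun x => mul_nonneg hlam (hμ x), hY,
        fun i hi hi' b => ?_, ?_⟩
      · rcases hi.eq_or_lt with rfl | hi
        · exact (wt_le_total (fun x => mul_nonneg hlam (hμ x)) _).trans hsum.le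
        · refine le_trans ?_ (hfine i hi hi' b)
          rw [wt_eq_filter, wt_eq_filter]
          exact sum_le_sum fun x _ => mul_le_of_le_one_left (hμ x) hlam1
      · rw [hsum]
        exact content_sq_le s j a fun q hq => hq.2

/-- Finite Frostman lemma with the mass bound on balls of radius at least `sc n`. -/
lemma frostman {s : ℝ} (hs : 0 ≤ s) (A : Set Pt) {j n : ℕ} (hjn : j ≤ n) (a : ℤ × ℤ)
    (hA : ∀ x ∈ A, cell (sc j) x = a) :
    ∃ (X : Finset Pt) (ν : Pt → ℝ), (∀ x, 0 ≤ ν x) ∧ (∀ x ∈ X, x ∈ A) ∧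
      (∑ x ∈ X, ν x ≤ 1) ∧
      (∀ p τ, sc n ≤ τ → wt X ν (fun x => ‖x - p‖ ≤ τ) ≤ 49 * τ ^ s) ∧
      content s A ≤ ENNReal.ofReal (∑ x ∈ X, ν x) := by
  classical
  obtain ⟨X, ν, hν, hX, hb, hc⟩ := frostman_aux (s := s) A (n - j) j a
  have htot : ∑ x ∈ X, ν x ≤ sc j ^ s := by
    have h1 := hb j le_rfl (by omega) a
    rw [wt_eq_filter, Finset.filter_true_of_mem fun x hx => (hX x hx).2] at h1
    exact h1
  have e : A ∩ {x | cell (sc j) x = a} = A := Set.inter_eq_left.2 hA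
  rw [e] at hc
  refine ⟨X, ν, hν, fun x hx => (hX x hx).1, htot.trans ?_, fun p τ hτ => ?_, hc⟩
  · exact Real.rpow_le_one (sc_pos j).le (sc_le_one j) hs
  have hτ0 : 0 < τ := (sc_pos n).trans_le hτ
  rcases le_total (sc j) τ with h | h
  · calc _ ≤ ∑ x ∈ X, ν x := wt_le_total hν _
      _ ≤ τ ^ s := htot.trans (Real.rpow_le_rpow (sc_pos j).le h hs)
      _ ≤ _ := by linarith [Real.rpow_nonneg hτ0.le s]
  · obtain ⟨i, hji, hin, hi1, hi2⟩ : ∃ i, j ≤ i ∧ i ≤ n ∧ sc i ≤ τ ∧ τ ≤ 2 * sc i := by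
      rcases dyadic_shell (ζ := τ) j (by linarith [sc_pos j]) n hjn with h1 | ⟨i, h1, h2, h3, h4⟩
      · exact ⟨n, hjn, le_rfl, hτ, by linarith [sc_pos n]⟩
      · exact ⟨i, h1, h2, h3, h4⟩
    calc _ ≤ ((nbr 3 (cell (sc i) p)).card : ℝ) * sc i ^ s := by
          refine wt_le_card_mul hν _ (fun b x => cell (sc i) x = b) ?_
            fun b _ => hb i hji (by omega) b
          intro x _ hx
          exact ⟨_, cell_mem_nbr (sc_pos i) 2 (by push_cast; linarith), rfl⟩
      _ = 49 * sc i ^ s := by rw [card_nbr]; norm_num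
      _ ≤ _ := by
          have := Real.rpow_le_rpow (sc_pos i).le hi1 hs
          linarith

end PinnedDistance

/-! ### Dyadic covers of distance sets, and separation -/

namespace PinnedDistance
open Finset MeasureTheory
open scoped ENNReal NNReal

/-- A dyadic scale just above `δ`; the error `η` takes care of `δ = 0`. -/
lemma exists_scale {δ σ η : ℝ} {k0 : ℕ} (hδ : 0 ≤ δ) (hδk : δ < sc k0) (hσ : 0 < σ) (hη : 0 < η) :
    ∃ k, k0 ≤ k ∧ δ < sc k ∧ sc k ^ σ ≤ 2 ^ σ * δ ^ σ + η := by
  rcases hδ.eq_or_lt with rfl | hpos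
  · have h1 : Filter.Tendsto (fun k => sc k ^ σ) Filter.atTop (nhds 0) := by
      have := tendsto_sc.rpow_const (p := σ) (Or.inr hσ.le)
      simpa [Real.zero_rpow hσ.ne'] using this
    obtain ⟨k, hk, hk0⟩ := ((h1.eventually (ge_mem_nhds hη)).and
      (Filter.eventually_ge_atTop k0)).exists
    exact ⟨k, hk0, sc_pos k, by rw [Real.zero_rpow hσ.ne']; simpa using hk⟩
  · obtain ⟨k, hk, hmin⟩ := exists_least (P := fun k => sc k ≤ δ)
      (tendsto_sc.eventually (ge_mem_nhds hpos)).exists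
    have hkk : k0 < k := by
      by_contra h
      exact absurd (sc_anti (not_lt.1 h)) (by linarith)
    obtain ⟨k', rfl⟩ : ∃ k', k = k' + 1 := ⟨k - 1, by omega⟩
    have h1 : δ < sc k' := by
      by_contra h
      have := hmin k' (not_lt.1 h)
      omega
    refine ⟨k', by omega, h1, ?_⟩
    have h2 : sc k' ≤ 2 * δ := by rw [sc_succ]; linarith
    calc sc k' ^ σ ≤ (2 * δ) ^ σ := Real.rpow_le_rpow (sc_pos k').le h2 hσ.le
      _ = 2 ^ σ * δ ^ σ := Real.mul_rpow (by norm_num) hδ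
      _ ≤ _ := by linarith

/-- A compact set of reals of zero `σ`-dimensional Hausdorff measure is covered by finitely many
dyadic intervals, of length at most `2 ^ (-k0)`, at most `24 * 2 ^ (σ k)` of them having
length `2 ^ (-k)`. -/
lemma exists_dyadic_cover {σ : ℝ} (hσ : 0 < σ) (hσ1 : σ ≤ 1) {D : Set ℝ} (hD : IsCompact D)
    (h0 : μH[σ] D = 0) (k0 : ℕ) :
    ∃ (k1 : ℕ) (I : ℕ → Finset ℤ), (∀ k, ((I k).card : ℝ) ≤ 24 * (2 : ℝ) ^ (σ * (k : ℝ))) ∧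
      ∀ d ∈ D, ∃ k, k0 ≤ k ∧ k ≤ k1 ∧ ⌊d / sc k⌋ ∈ I k := by
  classical
  rw [Measure.hausdorffMeasure_apply] at h0
  have hr : (0 : ℝ≥0∞) < ENNReal.ofReal (sc (k0 + 1)) := ENNReal.ofReal_pos.2 (sc_pos _)
  have h1 : (⨅ (t : ℕ → Set ℝ) (_ : D ⊆ ⋃ n, t n) (_ : ∀ n, Metric.ediam (t n) ≤
      ENNReal.ofReal (sc (k0 + 1))), ∑' n, ⨆ _ : (t n).Nonempty, Metric.ediam (t n) ^ σ) < 1 := by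
    refine lt_of_le_of_lt ?_ one_pos
    rw [← h0]
    exact le_iSup₂ (f := fun (r : ℝ≥0∞) (_ : 0 < r) =>
      ⨅ (t : ℕ → Set ℝ) (_ : D ⊆ ⋃ n, t n) (_ : ∀ n, Metric.ediam (t n) ≤ r),
        ∑' n, ⨆ _ : (t n).Nonempty, Metric.ediam (t n) ^ σ) _ hr
  simp only [iInf_lt_iff] at h1
  obtain ⟨t, htD, htd, hts⟩ := h1
  have hδ : ∀ n, (Metric.ediam (t n)).toReal < sc k0 := by
    intro n
    have h2 := ENNReal.toReal_mono ENNReal.ofReal_ne_top (htd n)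
    rw [ENNReal.toReal_ofReal (sc_pos _).le] at h2
    have := sc_succ k0
    linarith [sc_pos (k0 + 1)]
  have hfin : ∀ n, Metric.ediam (t n) ≠ ∞ := fun n =>
    ne_top_of_le_ne_top ENNReal.ofReal_ne_top (htd n)
  choose kk hk0 hkδ hks using fun n => exists_scale (η := sc (n + 1)) ENNReal.toReal_nonneg (hδ n)
    hσ (sc_pos (n + 1))
  let q : ℕ → ℝ := fun n => if h : (t n).Nonempty then h.some else 0
  have hq : ∀ n, t n ⊆ Metric.ball (q n) (sc (kk n)) := by
    intro n d hd
    have hne : (t n).Nonempty := ⟨d, hd⟩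
    have hqt : q n ∈ t n := by simp only [q, hne, dif_pos]; exact hne.some_mem
    rw [Metric.mem_ball, dist_edist]
    exact (ENNReal.toReal_mono (hfin n) (Metric.edist_le_ediam_of_mem hd hqt)).trans_lt (hkδ n)
  obtain ⟨F, hF⟩ := hD.elim_finite_subcover (fun n : {n // (t n).Nonempty} =>
    Metric.ball (q n) (sc (kk n))) (fun n => Metric.isOpen_ball) (by
      intro d hd
      obtain ⟨n, hn⟩ := Set.mem_iUnion.1 (htD hd)
      exact Set.mem_iUnion.2 ⟨⟨n, ⟨d, hn⟩⟩, hq n hn⟩)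
  let I : ℕ → Finset ℤ := fun k => (F.filter fun n => kk n.1 = k).biUnion
    fun n => Finset.Icc (⌊q n / sc k⌋ - 1) (⌊q n / sc k⌋ + 1)
  refine ⟨F.sup fun n => kk n.1, I, fun k => ?_, fun d hd => ?_⟩
  · have hsum1 : ∑ n ∈ F, (Metric.ediam (t n.1)).toReal ^ σ ≤ 1 := by
      have h2 : ∑ n ∈ F, Metric.ediam (t n.1) ^ σ ≤ 1 := by
        calc _ = ∑ n ∈ F, ⨆ _ : (t n.1).Nonempty, Metric.ediam (t n.1) ^ σ :=
              sum_congr rfl fun n _ => by simp [n.2]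
          _ = ∑ n ∈ F.map (Function.Embedding.subtype _),
              ⨆ _ : (t n).Nonempty, Metric.ediam (t n) ^ σ := by rw [Finset.sum_map]; rfl
          _ ≤ _ := (ENNReal.sum_le_tsum _).trans hts.le
      have h3 := ENNReal.toReal_mono ENNReal.one_ne_top h2
      rw [ENNReal.toReal_sum fun n _ => ENNReal.rpow_ne_top_of_nonneg hσ.le (hfin n.1)] at h3
      simpa [ENNReal.toReal_rpow] using h3
    have hsum2 : ∑ n ∈ F, sc (n.1 + 1) ≤ 1 := by
      calc _ = ∑ n ∈ F.map (Function.Embedding.subtype _), sc (n + 1) := by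
            rw [Finset.sum_map]; rfl
        _ ≤ ∑' n, sc (n + 1) := Summable.sum_le_tsum _ (fun n _ => (sc_pos _).le)
            ((summable_geometric_two).comp_injective (add_left_injective 1))
        _ = 1 := by
            have : ∀ n, sc (n + 1) = 1 / 2 / 2 ^ n := by
              intro n; unfold sc; rw [pow_succ]; simp; ring
            simp only [this]
            exact tsum_geometric_two' 1
    have hcard : ((F.filter fun n => kk n.1 = k).card : ℝ) * sc k ^ σ ≤ 3 := by
      calc _ = ∑ n ∈ F.filter fun n => kk n.1 = k, sc (kk n.1) ^ σ := by
            rw [← nsmul_eq_mul, ← Finset.sum_const]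
            refine sum_congr rfl fun n hn => ?_
            rw [(Finset.mem_filter.1 hn).2]
        _ ≤ ∑ n ∈ F, sc (kk n.1) ^ σ := sum_le_sum_of_subset_of_nonneg (filter_subset _ _)
            fun n _ _ => Real.rpow_nonneg (sc_pos _).le _
        _ ≤ ∑ n ∈ F, (2 * (Metric.ediam (t n.1)).toReal ^ σ + sc (n.1 + 1)) := by
            refine sum_le_sum fun n _ => (hks n.1).trans ?_
            have : (2 : ℝ) ^ σ ≤ 2 := by
              calc (2 : ℝ) ^ σ ≤ 2 ^ (1 : ℝ) := Real.rpow_le_rpow_of_exponent_le (by norm_num) hσ1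
                _ = 2 := by norm_num
            gcongr
        _ = 2 * ∑ n ∈ F, (Metric.ediam (t n.1)).toReal ^ σ + ∑ n ∈ F, sc (n.1 + 1) := by
            rw [sum_add_distrib, mul_sum]
        _ ≤ 3 := by linarith
    have hc2 : ((F.filter fun n => kk n.1 = k).card : ℝ) ≤ 3 * (2 : ℝ) ^ (σ * (k : ℝ)) := by
      have e : sc k ^ σ * (2 : ℝ) ^ (σ * (k : ℝ)) = 1 := by
        rw [sc_eq_rpow, ← Real.rpow_mul (by norm_num), ← Real.rpow_add (by norm_num)]
        ring_nf; simp
      have hp : (0 : ℝ) < (2 : ℝ) ^ (σ * (k : ℝ)) := Real.rpow_pos_of_pos (by norm_num) _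
      calc _ = ((F.filter fun n => kk n.1 = k).card : ℝ) * sc k ^ σ * (2 : ℝ) ^ (σ * (k : ℝ)) := by
            rw [mul_assoc, e, mul_one]
        _ ≤ _ := by gcongr
    have hc1 : ((I k).card : ℝ) ≤ (F.filter fun n => kk n.1 = k).card * 3 := by
      exact_mod_cast Finset.card_biUnion_le_card_mul _ _ _ fun n _ => by
        rw [Int.card_Icc]; omega
    have hp : (0 : ℝ) < (2 : ℝ) ^ (σ * (k : ℝ)) := Real.rpow_pos_of_pos (by norm_num) _
    linarith
  · obtain ⟨n, hnF, hn⟩ := Set.mem_iUnion₂.1 (hF hd)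
    refine ⟨kk n.1, hk0 _, Finset.le_sup (f := fun n : {n // (t n).Nonempty} => kk n.1) hnF,
      Finset.mem_biUnion.2 ⟨n, Finset.mem_filter.2 ⟨hnF, rfl⟩, ?_⟩⟩
    have h2 : |d / sc (kk n.1) - q n.1 / sc (kk n.1)| < 1 := by
      rw [← sub_div, abs_div, abs_of_pos (sc_pos _), div_lt_one (sc_pos _)]
      exact hn
    rw [abs_lt] at h2
    rw [Finset.mem_Icc]
    have h3 := Int.floor_le (q n.1 / sc (kk n.1))
    have h4 := Int.lt_floor_add_one (q n.1 / sc (kk n.1))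
    have h5 := Int.floor_le (d / sc (kk n.1))
    have h6 := Int.lt_floor_add_one (d / sc (kk n.1))
    constructor
    · have : ((⌊q n.1 / sc (kk n.1)⌋ : ℝ)) < ⌊d / sc (kk n.1)⌋ + 2 := by linarith
      have : ⌊q n.1 / sc (kk n.1)⌋ < ⌊d / sc (kk n.1)⌋ + 2 := by exact_mod_cast this
      omega
    · have : ((⌊d / sc (kk n.1)⌋ : ℝ)) < ⌊q n.1 / sc (kk n.1)⌋ + 2 := by linarith
      have : ⌊d / sc (kk n.1)⌋ < ⌊q n.1 / sc (kk n.1)⌋ + 2 := by exact_mod_cast this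
      omega

/-- Two sets of positive content have well separated parts, inside dyadic squares of a common
level, which still have positive content. -/
lemma exists_separated {s t : ℝ} (hs : 0 < s) {K B : Set Pt} (hK : 0 < content s K)
    (hB : 0 < content t B) : ∃ (j : ℕ) (a1 a2 : ℤ × ℤ), a2 ∉ nbr 2 a1 ∧
      0 < content t (B ∩ {x | cell (sc j) x = a1}) ∧
      0 < content s (K ∩ {x | cell (sc j) x = a2}) := by
  have h1 : Filter.Tendsto (fun k => ENNReal.ofReal (25 * sc k ^ s)) Filter.atTop (nhds 0) := by
    have := ENNReal.tendsto_ofReal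
      ((tendsto_sc.rpow_const (p := s) (Or.inr hs.le)).const_mul 25)
    simpa [Real.zero_rpow hs.ne'] using this
  obtain ⟨j, hj⟩ := (h1.eventually (gt_mem_nhds hK)).exists
  obtain ⟨a1, ha1⟩ : ∃ a, 0 < content t (B ∩ {x | cell (sc j) x = a}) := by
    by_contra hcon
    push Not at hcon
    have hsub : B ⊆ ⋃ a : ℤ × ℤ, B ∩ {x | cell (sc j) x = a} := fun x hx =>
      Set.mem_iUnion.2 ⟨_, hx, rfl⟩
    have := (content_mono t hsub).trans (content_iUnion t _)
    simp only [fun a => le_antisymm (hcon a) zero_le, tsum_zero] at this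
    exact absurd hB (not_lt.2 this)
  obtain ⟨a2, ha2⟩ : ∃ a : {a // a ∉ nbr 2 a1}, 0 < content s (K ∩ {x | cell (sc j) x = a}) := by
    by_contra hcon
    push Not at hcon
    have hsub : K ⊆ (⋃ a ∈ nbr 2 a1, K ∩ {x | cell (sc j) x = a}) ∪
        ⋃ a : {a // a ∉ nbr 2 a1}, K ∩ {x | cell (sc j) x = a} := by
      intro x hx
      by_cases h : cell (sc j) x ∈ nbr 2 a1
      · exact Or.inl (Set.mem_biUnion (x := cell (sc j) x) h ⟨hx, rfl⟩)
      · exact Or.inr (Set.mem_iUnion.2 ⟨⟨_, h⟩, hx, rfl⟩)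
    have h2 : content s (⋃ a ∈ nbr 2 a1, K ∩ {x | cell (sc j) x = a}) ≤
        ENNReal.ofReal (25 * sc j ^ s) := by
      refine (content_biUnion s _ _).trans ?_
      refine (sum_le_card_nsmul _ _ _ fun a _ =>
        content_sq_le s (A := K ∩ {x | cell (sc j) x = a}) j a fun p hp => hp.2).trans ?_
      rw [card_nbr, nsmul_eq_mul, ENNReal.ofReal_mul (by norm_num)]
      norm_num
    have h3 : content s (⋃ a : {a // a ∉ nbr 2 a1}, K ∩ {x | cell (sc j) x = a}) ≤ 0 := by
      refine (content_iUnion s _).trans ?_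
      simp only [fun a => le_antisymm (hcon a) zero_le, tsum_zero, le_refl]
    have := (content_mono s hsub).trans ((content_union s _ _).trans (add_le_add h2 h3))
    rw [add_zero] at this
    exact absurd hj (not_lt.2 this)
  exact ⟨j, a1, a2, a2.2, ha1, ha2⟩

end PinnedDistance

/-! ### From the discretised theorem to Hausdorff dimension -/

namespace PinnedDistance
open Finset MeasureTheory
open scoped ENNReal NNReal

/-- The assembled contradiction. For `x ∈ B` the distance set is covered by dyadic intervals with at
most `24 · 2 ^ (σ k)` of them at scale `k`. The mass of a Frostman measure on `K` is distributed over
the scales of this cover, so some scale receives at least the share `(1 - θ) θᵏ`. The set of `x`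
assigned to one scale `k` has content at least a similar share of that of `B`, and its own Frostman
measure contradicts `finite_main` at that scale, provided `θ` is close enough to `1`.

The scale depends on `x` and has to be known before the measures at that scale are fixed; so Frostman
measures `μ n` at all scales `2⁻ⁿ` are chosen beforehand and the choice of scale is made along an
ultrafilter in `n`. -/
theorem no_exceptional {s t σ : ℝ} (hs1 : 1 < s) (hs2 : s ≤ 2) (ht1 : 1 < t) (hσ0 : 0 < σ)
    (hσ1 : σ ≤ 1) (hσ : σ < s / 4 + 1 / 2) {K B : Set Pt} (hKc : IsCompact K)
    (hK : 0 < content s K) (hB : 0 < content t B)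
    (h0 : ∀ x ∈ B, μH[σ] ((fun y => ‖x - y‖) '' K) = 0) : False := by
  classical
  obtain ⟨j, a1, a2, hsep, hB1, hK1⟩ := exists_separated (by linarith) hK hB
  set B1 := B ∩ {x | cell (sc j) x = a1} with hB1def
  set K1 := K ∩ {x | cell (sc j) x = a2} with hK1def
  have hB1c : ∀ x ∈ B1, cell (sc j) x = a1 := fun x hx => hx.2
  have hK1c : ∀ x ∈ K1, cell (sc j) x = a2 := fun x hx => hx.2
  obtain ⟨x0, hx0⟩ : B1.Nonempty := by
    by_contra h
    rw [Set.not_nonempty_iff_eq_empty.1 h, content_empty] at hB1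
    exact lt_irrefl _ hB1
  obtain ⟨y0, hy0⟩ : K1.Nonempty := by
    by_contra h
    rw [Set.not_nonempty_iff_eq_empty.1 h, content_empty] at hK1
    exact lt_irrefl _ hK1
  have hb_top : content t B1 ≠ ∞ :=
    ne_top_of_le_ne_top ENNReal.ofReal_ne_top (content_sq_le t j a1 hB1c)
  have hc_top : content s K1 ≠ ∞ :=
    ne_top_of_le_ne_top ENNReal.ofReal_ne_top (content_sq_le s j a2 hK1c)
  obtain ⟨b, hb, hbB⟩ : ∃ b : ℝ, 0 < b ∧ ENNReal.ofReal b = content t B1 :=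
    ⟨_, ENNReal.toReal_pos hB1.ne' hb_top, ENNReal.ofReal_toReal hb_top⟩
  obtain ⟨c, hc, hcK⟩ : ∃ c : ℝ, 0 < c ∧ ENNReal.ofReal c = content s K1 :=
    ⟨_, ENNReal.toReal_pos hK1.ne' hc_top, ENNReal.ofReal_toReal hc_top⟩
  set R : ℝ := ‖x0‖ + ‖y0‖ + 2 + (sc j)⁻¹ with hR
  have hRinv : 0 < (sc j)⁻¹ := inv_pos.2 (sc_pos j)
  have hBR : ∀ x ∈ B1, ‖x‖ ≤ R := by
    intro x hx
    have h1 := norm_sub_le_of_cell_eq (sc_pos j) ((hB1c x hx).trans (hB1c x0 hx0).symm)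
    have h2 := norm_le_norm_add_norm_sub' x x0
    linarith [norm_nonneg y0, sc_le_one j]
  have hKR : ∀ x ∈ K1, ‖x‖ ≤ R := by
    intro x hx
    have h1 := norm_sub_le_of_cell_eq (sc_pos j) ((hK1c x hx).trans (hK1c y0 hy0).symm)
    have h2 := norm_le_norm_add_norm_sub' x y0
    linarith [norm_nonneg x0, sc_le_one j]
  have hBK : ∀ x ∈ B1, ∀ y ∈ K1, 1 ≤ R * ‖y - x‖ := by
    intro x hx y hy
    have h1 : sc j ≤ ‖y - x‖ := by
      by_contra h
      push Not at h
      have h2 := cell_mem_nbr (sc_pos j) (p := y) (r := x) 1 (by simpa using h.le)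
      rw [hK1c y hy, hB1c x hx] at h2
      exact hsep h2
    calc 1 = (sc j)⁻¹ * sc j := (inv_mul_cancel₀ (sc_pos j).ne').symm
      _ ≤ R * ‖y - x‖ := by
        have : (sc j)⁻¹ ≤ R := by linarith [norm_nonneg x0, norm_nonneg y0]
        have := sc_pos j
        gcongr
  obtain ⟨ε, hε, hmain⟩ := finite_main (R := R) (C := 49) (c := 1) hs1 hs2 ht1 hσ
    (by linarith [norm_nonneg x0, norm_nonneg y0]) (by norm_num) one_pos
  -- masses at scale `k` are compared with the summable geometric sequence of ratio `θ`
  set θ : ℝ := (2 : ℝ) ^ (-(ε / 4)) with hθ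
  have hθ0 : 0 < θ := Real.rpow_pos_of_pos (by norm_num) _
  have hθ1 : θ < 1 := Real.rpow_lt_one_of_one_lt_of_neg (by norm_num) (by linarith)
  have hθk : ∀ k : ℕ, θ ^ k = (2 : ℝ) ^ (-(ε / 4) * (k : ℝ)) := fun k => by
    rw [hθ, ← Real.rpow_natCast, ← Real.rpow_mul (by norm_num)]
  have hgeo : HasSum (fun k : ℕ => (1 - θ) * θ ^ k) 1 := by
    have := (hasSum_geometric_of_lt_one hθ0.le hθ1).mul_left (1 - θ)
    rwa [mul_inv_cancel₀ (by linarith)] at this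
  set c' : ℝ := b / 2 * (1 - θ) * (c * (1 - θ)) with hc'
  have hc'0 : 0 < c' := by
    have : 0 < 1 - θ := by linarith
    positivity
  obtain ⟨k0, hk0⟩ := Filter.eventually_atTop.1 (hmain.and
    ((eventually_exp c'⁻¹ (a := ε / 2) (by linarith)).and (Filter.eventually_ge_atTop j)))
  choose Y μ hμ hYK hY1 hYb hYc using fun n =>
    frostman (s := s) (by linarith) K1 (n := n + j) (Nat.le_add_left j n) a2 hK1c
  have hYtot : ∀ n, c ≤ ∑ y ∈ Y n, μ n y := by
    intro n
    have := hYc n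
    rw [← hcK] at this
    exact (ENNReal.ofReal_le_ofReal_iff (sum_nonneg fun y _ => hμ n y)).1 this
  -- `Q k x` says that many points see `x` at few distances, up to `2 ^ (-k)`
  let Q : ℕ → Pt → Prop := fun k x => ∃ I : Finset ℤ,
    ((I.card : ℝ) ≤ 24 * (2 : ℝ) ^ (σ * (k : ℝ))) ∧
    ∀ᶠ n in (Filter.hyperfilter ℕ : Filter ℕ),
      c * ((1 - θ) * θ ^ k) ≤ wt (Y n) (μ n) (fun y => ⌊‖x - y‖ / sc k⌋ ∈ I)
  have hQ : ∀ x ∈ B1, ∃ k, k0 ≤ k ∧ Q k x := by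
    intro x hx
    obtain ⟨k1, I, hIc, hI⟩ := exists_dyadic_cover hσ0 hσ1
      (hKc.image (by fun_prop : Continuous fun y => ‖x - y‖)) (h0 x hx.1) k0
    have hn : ∀ n, ∃ k ∈ Set.Icc k0 k1,
        c * ((1 - θ) * θ ^ k) ≤ wt (Y n) (μ n) (fun y => ⌊‖x - y‖ / sc k⌋ ∈ I k) := by
      intro n
      by_contra hcon
      push Not at hcon
      have hle : ∑ y ∈ Y n, μ n y ≤
          ∑ k ∈ Finset.Icc k0 k1, wt (Y n) (μ n) (fun y => ⌊‖x - y‖ / sc k⌋ ∈ I k) := by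
        have h1 := wt_le_sum (X := Y n) (hμ n) (p := fun _ => True) (Finset.Icc k0 k1)
          (fun k y => ⌊‖x - y‖ / sc k⌋ ∈ I k) (by
            intro y hy _
            obtain ⟨k, h1, h2, h3⟩ := hI _ (Set.mem_image_of_mem _ (hYK n y hy).1)
            exact ⟨k, Finset.mem_Icc.2 ⟨h1, h2⟩, h3⟩)
        rw [wt_eq_filter] at h1
        simpa using h1
      rcases (Finset.Icc k0 k1).eq_empty_or_nonempty with he | hne
      · rw [he, Finset.sum_empty] at hle
        linarith [hYtot n]
      · have h2 : ∑ k ∈ Finset.Icc k0 k1, wt (Y n) (μ n) (fun y => ⌊‖x - y‖ / sc k⌋ ∈ I k) <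
            ∑ k ∈ Finset.Icc k0 k1, c * ((1 - θ) * θ ^ k) :=
          Finset.sum_lt_sum_of_nonempty hne fun k hk => hcon k (by simpa using hk)
        have h3 : ∑ k ∈ Finset.Icc k0 k1, (1 - θ) * θ ^ k ≤ 1 :=
          sum_le_hasSum _ (fun k _ => mul_nonneg (by linarith) (by positivity)) hgeo
        rw [← Finset.mul_sum] at h2
        nlinarith [hYtot n]
    have hU : ∀ᶠ n in (Filter.hyperfilter ℕ : Filter ℕ), ∃ k ∈ Set.Icc k0 k1,
        c * ((1 - θ) * θ ^ k) ≤ wt (Y n) (μ n) (fun y => ⌊‖x - y‖ / sc k⌋ ∈ I k) :=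
      Filter.Eventually.of_forall hn
    obtain ⟨k, hk, hkU⟩ := (Ultrafilter.eventually_exists_mem_iff (Set.finite_Icc k0 k1)).1 hU
    exact ⟨k, hk.1, I k, hIc k, hkU⟩
  obtain ⟨k, hk⟩ : ∃ k, ENNReal.ofReal (b / 2 * ((1 - θ) * θ ^ k)) <
      content t {x | x ∈ B1 ∧ k0 ≤ k ∧ Q k x} := by
    by_contra hcon
    push Not at hcon
    have hsub : B1 ⊆ ⋃ k, {x | x ∈ B1 ∧ k0 ≤ k ∧ Q k x} := by
      intro x hx
      obtain ⟨k, hk⟩ := hQ x hx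
      exact Set.mem_iUnion.2 ⟨k, hx, hk⟩
    have h1 := (content_mono t hsub).trans ((content_iUnion t _).trans
      (ENNReal.tsum_le_tsum hcon))
    have h2 := hgeo.mul_left (b / 2)
    rw [← ENNReal.ofReal_tsum_of_nonneg (fun k => mul_nonneg (by linarith)
      (mul_nonneg (by linarith) (by positivity))) h2.summable, h2.tsum_eq, ← hbB] at h1
    have := (ENNReal.ofReal_le_ofReal_iff (by linarith)).1 h1
    linarith
  set Bk := {x | x ∈ B1 ∧ k0 ≤ k ∧ Q k x} with hBk
  have hkk : k0 ≤ k := by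
    by_contra h
    have he : Bk = ∅ := Set.eq_empty_of_forall_notMem fun x hx => h hx.2.1
    rw [he, content_empty] at hk
    exact not_lt_zero hk
  obtain ⟨hfm, hexp, hjk⟩ := hk0 k hkk
  obtain ⟨X, ν, hν, hXB, hX1, hXb, hXc⟩ := frostman (s := t) (by linarith) Bk hjk a1
    fun x hx => hB1c x hx.1
  have hXtot : b / 2 * ((1 - θ) * θ ^ k) ≤ ∑ x ∈ X, ν x :=
    (ENNReal.ofReal_le_ofReal_iff (sum_nonneg fun y _ => hν y)).1 (hk.le.trans hXc)
  choose! I hIc hIU using fun x (hx : x ∈ X) => (hXB x hx).2.2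
  obtain ⟨n, hnX, hnk⟩ := (((Filter.eventually_all_finset X).2 hIU).and
    (Nat.hyperfilter_le_atTop (Filter.eventually_ge_atTop k))).exists
  refine hfm X (Y n) ν (μ n) (fun x y => ⌊‖x - y‖ / sc k⌋ ∈ I x) hν (hμ n) hX1 (hY1 n)
    (fun x hx => hBR x (hXB x hx).1) (fun y hy => hKR y (hYK n y hy))
    (fun x hx y hy => hBK x (hXB x hx).1 y (hYK n y hy)) hXb
    (fun p τ hτ => hYb n p τ
      ((sc_anti (show k ≤ n + j from le_trans hnk (Nat.le_add_right n j))).trans hτ))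
    (fun x hx => ⟨I x, hIc x hx, fun y _ h => h⟩) ?_
  have hθp : 0 < θ ^ k := by positivity
  have h1θ : 0 < 1 - θ := by linarith
  have hpow : (1 : ℝ) * 2 ^ (-ε * (k : ℝ)) ≤ c' * (θ ^ k * θ ^ k) := by
    have e1 : θ ^ k * θ ^ k = (2 : ℝ) ^ (ε / 2 * (k : ℝ)) * 2 ^ (-ε * (k : ℝ)) := by
      rw [hθk, ← Real.rpow_add (by norm_num), ← Real.rpow_add (by norm_num)]
      congr 1; ring
    have h1 : 1 ≤ c' * (2 : ℝ) ^ (ε / 2 * (k : ℝ)) := by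
      have h2 : c'⁻¹ ≤ (2 : ℝ) ^ (ε / 2 * (k : ℝ)) := by
        refine le_trans ?_ hexp
        have : (1 : ℝ) ≤ ((k : ℝ) + 2) ^ 2 := by nlinarith [Nat.cast_nonneg (α := ℝ) k]
        exact le_mul_of_one_le_right (inv_pos.2 hc'0).le this
      calc (1 : ℝ) = c' * c'⁻¹ := (mul_inv_cancel₀ hc'0.ne').symm
        _ ≤ _ := by gcongr
    rw [e1, ← mul_assoc]
    gcongr
  calc _ ≤ c' * (θ ^ k * θ ^ k) := hpow
    _ = (b / 2 * ((1 - θ) * θ ^ k)) * (c * ((1 - θ) * θ ^ k)) := by rw [hc']; ring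
    _ ≤ (∑ x ∈ X, ν x) * (c * ((1 - θ) * θ ^ k)) := by gcongr
    _ = ∑ x ∈ X, ν x * (c * ((1 - θ) * θ ^ k)) := by rw [Finset.sum_mul]
    _ ≤ _ := sum_le_sum fun x hx => mul_le_mul_of_nonneg_left (hnX x hx) (hν x)

/-- The strict inequality of dimensions is witnessed by rational exponents, so that countably many
pairs `(σ, s)` suffice. -/
lemma exists_rat_params {D u : ℝ≥0∞} (hD1 : 1 < D) (hD2 : D ≤ 2) (hu : u < D / 4 + 1 / 2) :
    ∃ σ s : ℚ, 1 < s ∧ s ≤ 2 ∧ 0 < σ ∧ (σ : ℝ) < (s : ℝ) / 4 + 1 / 2 ∧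
      ENNReal.ofReal s < D ∧ u < ENNReal.ofReal σ := by
  have hDt : D ≠ ∞ := ne_top_of_le_ne_top (by norm_num) hD2
  obtain ⟨D, rfl⟩ : ∃ d : ℝ≥0, D = d := ⟨D.toNNReal, (ENNReal.coe_toNNReal hDt).symm⟩
  have hut : u ≠ ∞ := hu.ne_top
  obtain ⟨u, rfl⟩ : ∃ d : ℝ≥0, u = d := ⟨u.toNNReal, (ENNReal.coe_toNNReal hut).symm⟩
  have hD1' : (1 : ℝ) < D := by exact_mod_cast hD1
  have hD2' : (D : ℝ) ≤ 2 := by exact_mod_cast hD2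
  have hu' : (u : ℝ) < D / 4 + 1 / 2 := by
    have e : ((D : ℝ≥0∞) / 4 + 1 / 2) = ((D / 4 + 1 / 2 : ℝ≥0) : ℝ≥0∞) := by
      rw [ENNReal.coe_add, ENNReal.coe_div (by norm_num), ENNReal.coe_div (by norm_num)]
      norm_num
    rw [e] at hu
    exact_mod_cast hu
  obtain ⟨σ, h1, h2⟩ := exists_rat_btwn hu'
  obtain ⟨s, h3, h4⟩ := exists_rat_btwn (show max 1 (4 * (σ : ℝ) - 2) < D from
    max_lt hD1' (by linarith))
  rw [max_lt_iff] at h3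
  have hσ : (0 : ℝ) < σ := lt_of_le_of_lt u.2 h1
  refine ⟨σ, s, by exact_mod_cast h3.1, ?_, by exact_mod_cast hσ, by linarith [h3.2], ?_, ?_⟩
  · have : (s : ℝ) ≤ 2 := by linarith
    exact_mod_cast this
  · rw [← ENNReal.ofReal_coe_nnreal]
    exact (ENNReal.ofReal_lt_ofReal_iff (by linarith)).2 h4
  · rw [← ENNReal.ofReal_coe_nnreal]
    exact (ENNReal.ofReal_lt_ofReal_iff hσ).2 h1

lemma dimH_plane_le (E : Set Pt) : dimH E ≤ 2 := by
  refine (dimH_mono (Set.subset_univ E)).trans ?_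
  rw [Real.dimH_univ_eq_finrank]
  simp

end PinnedDistance
open MeasureTheory
open scoped ENNReal NNReal

/-- For any analytic set `E ⊆ ℝ²` of Hausdorff dimension strictly greater than one,
there is a set `B` of Hausdorff dimension at most one such that for every `x ∉ B`
the pinned distance set `Δ_x E = {‖x - y‖ : y ∈ E}` has Hausdorff dimension at
least `dim_H(E)/4 + 1/2`. -/
theorem pinned_distance_set_dimension_analytic
    (E : Set (EuclideanSpace ℝ (Fin 2)))
    (hE : MeasureTheory.AnalyticSet E)
    (hdim : 1 < dimH E) :
    ∃ B : Set (EuclideanSpace ℝ (Fin 2)), dimH B ≤ 1 ∧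
      ∀ x ∉ B, dimH E / 4 + 1 / 2 ≤ dimH ((fun y => ‖x - y‖) '' E) := by
  classical
  refine ⟨{x | dimH ((fun y => ‖x - y‖) '' E) < dimH E / 4 + 1 / 2}, ?_,
    fun x hx => not_lt.1 hx⟩
  let P : ℚ × ℚ → Prop := fun q => 1 < q.2 ∧ q.2 ≤ 2 ∧ 0 < q.1 ∧
    (q.1 : ℝ) < (q.2 : ℝ) / 4 + 1 / 2 ∧ ENNReal.ofReal q.2 < dimH E
  have hsub : {x | dimH ((fun y => ‖x - y‖) '' E) < dimH E / 4 + 1 / 2} ⊆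
      ⋃ q : {q // P q}, {x | dimH ((fun y => ‖x - y‖) '' E) < ENNReal.ofReal q.1.1} := by
    intro x hx
    obtain ⟨σ, s, h1, h2, h3, h4, h5, h6⟩ :=
      PinnedDistance.exists_rat_params hdim (PinnedDistance.dimH_plane_le E) hx
    exact Set.mem_iUnion.2 ⟨⟨(σ, s), h1, h2, h3, h4, h5⟩, h6⟩
  refine (dimH_mono hsub).trans ?_
  rw [dimH_iUnion]
  refine iSup_le fun ⟨⟨σ, s⟩, h1, h2, h3, h4, h5⟩ => ?_
  by_contra hcon
  push Not at hcon
  obtain ⟨t, ht1, ht⟩ := ENNReal.lt_iff_exists_nnreal_btwn.1 hcon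
  have ht1' : (1 : ℝ) < t := by exact_mod_cast ht1
  have h1' : (1 : ℝ) < s := by exact_mod_cast h1
  have h2' : (s : ℝ) ≤ 2 := by exact_mod_cast h2
  have h3' : (0 : ℝ) < σ := by exact_mod_cast h3
  simp only at h4 h5 ht
  obtain ⟨K, hKE, hKc, hK⟩ := PinnedDistance.exists_compact_content hE
    (PinnedDistance.content_pos_of_dimH (by linarith) h5)
  refine PinnedDistance.no_exceptional (B := {x | dimH ((fun y => ‖x - y‖) '' E) <
    ENNReal.ofReal σ}) h1' h2' ht1' h3' (by linarith) h4 hKc hK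
    (PinnedDistance.content_pos_of_dimH (by linarith) (by rwa [ENNReal.ofReal_coe_nnreal])) ?_
  intro x hx
  have h6 : dimH ((fun y => ‖x - y‖) '' K) < ((σ : ℝ).toNNReal : ℝ≥0∞) :=
    (dimH_mono (Set.image_mono hKE)).trans_lt hx
  have := hausdorffMeasure_of_dimH_lt h6
  rwa [Real.coe_toNNReal _ h3'.le] at this
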